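/- arXiv:2201.00991 — 7 statements merged into one kernel-verified Lean document; each statement's English description precedes it below -/
import Mathlib

section
/- Let {τ_j}_{j=1}^n be a family of nonzero vectors in a finite-dimensional Hilbert space H. Define c = (1/n)·∑_{k=1}^n ‖τ_k‖ and ω_j = c·τ_j/‖τ_j‖ for 1 ≤ j ≤ n. Then {ω_j}_{j=1}^n is the closest equal-norm family to {τ_j}_{j=1}^n: for every r ≥ 0 and every family {ν_j}_{j=1}^n in H with ‖ν_j‖ = r for all j, one has ∑_{j=1}^n ‖τ_j − ω_j‖² ≤ ∑_{j=1}^n ‖τ_j − ν_j‖². -/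
/-!
Since `ω j` is a real multiple of `τ j`, its distance to `τ j` is `|‖τ j‖ - c|`. By the reverse
triangle inequality, any family of common norm `r` satisfies `|‖τ j‖ - r| ≤ ‖τ j - ν j‖`. So it
suffices that the mean `c` of the numbers `‖τ j‖` minimises `r ↦ ∑ j, (‖τ j‖ - r) ^ 2`, which
follows from `∑ j, (‖τ j‖ - r) ^ 2 = ∑ j, (‖τ j‖ - c) ^ 2 + n * (c - r) ^ 2`.
-/

open scoped InnerProductSpace

/-- The closest equal-norm family to a family of nonzero vectors `τ` is obtained by
rescaling each `τ j` to the average norm `c`. -/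
theorem closest_equal_norm_family
    {𝕜 : Type*} [RCLike 𝕜] {H : Type*} [NormedAddCommGroup H]
    [InnerProductSpace 𝕜 H] [FiniteDimensional 𝕜 H] {n : ℕ}
    (τ : Fin n → H) (hτ : ∀ j, τ j ≠ 0)
    (c : ℝ) (hc : c = (∑ k, ‖τ k‖) / n)
    (ω : Fin n → H) (hω : ∀ j, ω j = ((c / ‖τ j‖ : ℝ) : 𝕜) • τ j)
    (r : ℝ) (hr : 0 ≤ r) (ν : Fin n → H) (hν : ∀ j, ‖ν j‖ = r) :
    ∑ j, ‖τ j - ω j‖ ^ 2 ≤ ∑ j, ‖τ j - ν j‖ ^ 2 := by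
  have hsum : ∑ k, ‖τ k‖ = n * c := by
    rcases Nat.eq_zero_or_pos n with rfl | hn
    · simp
    · have hn' : (n : ℝ) ≠ 0 := by positivity
      rw [hc]
      field_simp
  have hdist : ∀ j, ‖τ j - ω j‖ ^ 2 = (‖τ j‖ - c) ^ 2 := by
    intro j
    have h0 : ‖τ j‖ ≠ 0 := norm_ne_zero_iff.mpr (hτ j)
    have h1 : τ j - ω j = ((1 - c / ‖τ j‖ : ℝ) : 𝕜) • τ j := by
      rw [hω j, RCLike.ofReal_sub, sub_smul, RCLike.ofReal_one, one_smul]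
    rw [h1, norm_smul, RCLike.norm_ofReal, mul_pow, sq_abs]
    field_simp
  have hvar : ∑ j, (‖τ j‖ - r) ^ 2 = ∑ j, (‖τ j‖ - c) ^ 2 + n * (c - r) ^ 2 := by
    have h2 : ∀ j, (‖τ j‖ - r) ^ 2
        = (‖τ j‖ - c) ^ 2 + (2 * (c - r) * ‖τ j‖ + (r ^ 2 - c ^ 2)) := fun j => by ring
    simp only [h2, Finset.sum_add_distrib, ← Finset.mul_sum, hsum, Finset.sum_const,
      Finset.card_univ, Fintype.card_fin, nsmul_eq_mul]
    ring
  calc ∑ j, ‖τ j - ω j‖ ^ 2 = ∑ j, (‖τ j‖ - c) ^ 2 := Finset.sum_congr rfl fun j _ => hdist j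
    _ ≤ ∑ j, (‖τ j‖ - r) ^ 2 := by
      rw [hvar]
      exact le_add_of_nonneg_right (by positivity)
    _ ≤ ∑ j, ‖τ j - ν j‖ ^ 2 := by
      refine Finset.sum_le_sum fun j _ => ?_
      rw [← hν j]
      exact sq_le_sq.mpr ((abs_norm_sub_norm_le _ _).trans (le_abs_self _))
end

section
/- Let {τ_j}_{j=1}^n be a frame for a d-dimensional Hilbert space H with frame operator S_τ (which is positive and invertible), and let S_τ^{-1/2} denote the inverse of the positive square root of S_τ. Then {S_τ^{-1/2}τ_j}_{j=1}^n is the closest Parseval frame to {τ_j}_{j=1}^n: for every Parseval frame {ω_j}_{j=1}^n for H, ∑_{j=1}^n ‖S_τ^{-1/2}τ_j − τ_j‖² ≤ ∑_{j=1}^n ‖τ_j − ω_j‖², and moreover {S_τ^{-1/2}τ_j}_{j=1}^n is the unique minimizer: equality holds only if ω_j = S_τ^{-1/2}τ_j for all 1 ≤ j ≤ n. -/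
open scoped InnerProductSpace

/-!
Put `P = R ∘ S`, the positive square root of `S`, and `f j = R (τ j)`, so that `τ j = P (f j)`.
Then `f` is a Parseval frame, and for every Parseval frame `ω`

  `∑ ‖τ j - ω j‖² - ∑ ‖f j - τ j‖² = ∑ re ⟪P (f j - ω j), f j - ω j⟫`.

Expanding both sides, this reduces to the fact that for a fixed operator `A` the sum
`∑ ⟪ω j, A (ω j)⟫` is the same for all Parseval frames `ω`, namely the trace of `A`
(`sum_inner_parseval`), applied to `A = I` and `A = P`.
The right-hand side is nonnegative since `P` is positive, and it vanishes only if `ω = f`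
since `P` is definite (`map_eq_zero_of_re_inner_eq_zero`).
-/

/-- The trace formula for Parseval frames: `∑ ⟪ω j, A (ω j)⟫` is the trace of `A`, written here
in the standard orthonormal basis. -/
lemma sum_inner_parseval {𝕜 : Type*} [RCLike 𝕜] {H : Type*} [NormedAddCommGroup H]
    [InnerProductSpace 𝕜 H] [FiniteDimensional 𝕜 H] {n : ℕ}
    (A : H →L[𝕜] H) (ω : Fin n → H) (hω : ∀ h : H, ∑ j, ⟪ω j, h⟫_𝕜 • ω j = h) :
    ∑ j, ⟪ω j, A (ω j)⟫_𝕜 =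
      ∑ i, ⟪stdOrthonormalBasis 𝕜 H i, A (stdOrthonormalBasis 𝕜 H i)⟫_𝕜 := by
  set e := stdOrthonormalBasis 𝕜 H
  calc ∑ j, ⟪ω j, A (ω j)⟫_𝕜
      = ∑ j, ∑ i, ⟪ω j, e i⟫_𝕜 * ⟪e i, A (ω j)⟫_𝕜 := by
        simp_rw [e.sum_inner_mul_inner]
    _ = ∑ i, ∑ j, ⟪ω j, e i⟫_𝕜 * ⟪e i, A (ω j)⟫_𝕜 := Finset.sum_comm
    _ = ∑ i, ⟪e i, A (e i)⟫_𝕜 := by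
        refine Finset.sum_congr rfl fun i _ => ?_
        have h := congrArg (fun x => ⟪e i, A x⟫_𝕜) (hω (e i))
        simpa only [map_sum, map_smul, inner_sum, inner_smul_right] using h

/-- A positive semidefinite symmetric operator kills every vector on which its quadratic form
vanishes. -/
lemma map_eq_zero_of_re_inner_eq_zero {𝕜 : Type*} [RCLike 𝕜] {H : Type*}
    [NormedAddCommGroup H] [InnerProductSpace 𝕜 H] (R : H →L[𝕜] H)
    (hRsym : ∀ x y : H, ⟪R x, y⟫_𝕜 = ⟪x, R y⟫_𝕜)
    (hRpos : ∀ x : H, 0 ≤ RCLike.re ⟪R x, x⟫_𝕜)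
    (y : H) (hy : RCLike.re ⟪R y, y⟫_𝕜 = 0) : R y = 0 := by
  set c := RCLike.re ⟪R (R y), R y⟫_𝕜 with hc
  have hc0 : 0 ≤ c := hRpos _
  set N := ‖R y‖ ^ 2 with hN
  -- The quadratic form along the line `y + t • R y`.
  have key : ∀ t : ℝ, 0 ≤ 2 * t * N + t ^ 2 * c := by
    intro t
    have h := hRpos (y + (t : 𝕜) • R y)
    have h1 : RCLike.re ⟪R y, R y⟫_𝕜 = N := by rw [inner_self_eq_norm_sq]
    have h2 : RCLike.re ⟪R (R y), y⟫_𝕜 = N := by rw [hRsym, h1]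
    simp only [map_add, map_smul, inner_add_left, inner_add_right, inner_smul_left,
      inner_smul_right, RCLike.conj_ofReal, RCLike.re_ofReal_mul, hy, h1, h2, ← hc] at h
    linarith
  have h := key (-N / (c + 1))
  have hN0 : N ^ 2 * (c + 2) ≤ 0 := by
    have h3 : 2 * (-N / (c + 1)) * N + (-N / (c + 1)) ^ 2 * c
        = -(N ^ 2 * (c + 2)) / (c + 1) ^ 2 := by
      field_simp
      ring
    rw [h3] at h
    have := (le_div_iff₀ (by positivity : 0 < (c + 1) ^ 2)).1 h
    linarith
  have : N = 0 := by
    have : N ^ 2 = 0 := by nlinarith [sq_nonneg N]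
    simpa using this
  simpa [hN] using this

/-- For a frame `τ` with frame operator `S` (positive and invertible) and `R = S^{-1/2}`
(the inverse of the positive square root of `S`), the family `j ↦ R (τ j)` is the closest
Parseval frame to `τ`, and it is the unique minimizer. -/
theorem closest_parseval_frame
    {𝕜 : Type*} [RCLike 𝕜] {H : Type*} [NormedAddCommGroup H]
    [InnerProductSpace 𝕜 H] [FiniteDimensional 𝕜 H] {n : ℕ}
    (τ : Fin n → H)
    (hframe : ∃ a b : ℝ, 0 < a ∧ 0 < b ∧ ∀ h : H,
      a * ‖h‖ ^ 2 ≤ ∑ j, ‖⟪τ j, h⟫_𝕜‖ ^ 2 ∧ ∑ j, ‖⟪τ j, h⟫_𝕜‖ ^ 2 ≤ b * ‖h‖ ^ 2)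
    -- `S` is the frame operator of `τ`
    (S : H →L[𝕜] H) (hS : ∀ h, S h = ∑ j, ⟪τ j, h⟫_𝕜 • τ j)
    -- `R` is the inverse of the positive square root of `S`:
    -- it is symmetric (self-adjoint), positive, and `R ∘ R` is the inverse of `S`
    (R : H →L[𝕜] H)
    (hRsym : ∀ x y : H, ⟪R x, y⟫_𝕜 = ⟪x, R y⟫_𝕜)
    (hRpos : ∀ x : H, 0 ≤ RCLike.re ⟪R x, x⟫_𝕜)
    (hRS : ∀ h : H, R (R (S h)) = h) (hSR : ∀ h : H, S (R (R h)) = h)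
    -- `ω` is an arbitrary Parseval frame for `H`
    (ω : Fin n → H) (hω : ∀ h : H, ∑ j, ⟪ω j, h⟫_𝕜 • ω j = h) :
    ∑ j, ‖R (τ j) - τ j‖ ^ 2 ≤ ∑ j, ‖τ j - ω j‖ ^ 2 ∧
      (∑ j, ‖R (τ j) - τ j‖ ^ 2 = ∑ j, ‖τ j - ω j‖ ^ 2 → ∀ j, ω j = R (τ j)) := by
  obtain ⟨P, hP⟩ : ∃ P : H →L[𝕜] H, ∀ x, P x = R (S x) := ⟨R.comp S, fun _ => rfl⟩
  have hRP : ∀ x, R (P x) = x := fun x => by rw [hP, hRS]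
  have hPR : ∀ x, P (R x) = x := fun x => by
    conv_lhs => rw [← hRS x]
    rw [hP, hSR, hRS]
  have hPsym : ∀ x y, ⟪P x, y⟫_𝕜 = ⟪x, P y⟫_𝕜 := fun x y => by
    conv_lhs => rw [← hRP y]
    rw [← hRsym, hRP]
  have hf : ∀ h : H, ∑ j, ⟪R (τ j), h⟫_𝕜 • R (τ j) = h := fun h => by
    have h1 : R (S (R h)) = h := by rw [← hP, hPR]
    rw [hS] at h1
    simpa only [map_sum, map_smul, hRsym] using h1
  have htr : ∀ A : H →L[𝕜] H, ∑ j, RCLike.re ⟪ω j, A (ω j)⟫_𝕜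
      = ∑ j, RCLike.re ⟪R (τ j), A (R (τ j))⟫_𝕜 := fun A => by
    rw [← map_sum, ← map_sum, sum_inner_parseval A ω hω,
      sum_inner_parseval A (fun j => R (τ j)) hf]
  have hI := htr (ContinuousLinearMap.id 𝕜 H)
  have hT := htr P
  simp only [ContinuousLinearMap.id_apply, inner_self_eq_norm_sq] at hI
  have hpos : ∀ x, 0 ≤ RCLike.re ⟪P x, x⟫_𝕜 := fun x => by
    have := hRpos (P x)
    rwa [hRP, ← hPsym] at this
  have hdef : ∀ x, RCLike.re ⟪P x, x⟫_𝕜 = 0 → x = 0 := fun x hx => by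
    have := map_eq_zero_of_re_inner_eq_zero R hRsym hRpos (P x) (by rw [hRP, ← hPsym, hx])
    rwa [hRP] at this
  have hpt : ∀ j, RCLike.re ⟪P (R (τ j) - ω j), R (τ j) - ω j⟫_𝕜
      = (‖τ j - ω j‖ ^ 2 - ‖R (τ j) - τ j‖ ^ 2) - (‖ω j‖ ^ 2 - ‖R (τ j)‖ ^ 2)
        + (RCLike.re ⟪ω j, P (ω j)⟫_𝕜 - RCLike.re ⟪R (τ j), P (R (τ j))⟫_𝕜) := fun j => by
    have h1 : RCLike.re ⟪P (ω j), R (τ j)⟫_𝕜 = RCLike.re ⟪τ j, ω j⟫_𝕜 := by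
      rw [hPsym, hPR, inner_re_symm]
    have h2 : RCLike.re ⟪τ j, R (τ j)⟫_𝕜 = RCLike.re ⟪R (τ j), τ j⟫_𝕜 := inner_re_symm _ _
    rw [@norm_sub_sq 𝕜, @norm_sub_sq 𝕜]
    simp only [map_sub, inner_sub_left, inner_sub_right, hPR, h1, h2, hPsym (ω j) (ω j)]
    ring
  have hsum : ∑ j, RCLike.re ⟪P (R (τ j) - ω j), R (τ j) - ω j⟫_𝕜
      = ∑ j, ‖τ j - ω j‖ ^ 2 - ∑ j, ‖R (τ j) - τ j‖ ^ 2 := by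
    simp only [hpt, Finset.sum_add_distrib, Finset.sum_sub_distrib, hI, hT]
    ring
  refine ⟨?_, fun heq j => ?_⟩
  · have := Finset.sum_nonneg fun j (_ : j ∈ Finset.univ) => hpos (R (τ j) - ω j)
    linarith
  · rw [heq, sub_self, Finset.sum_eq_zero_iff_of_nonneg fun j _ => hpos _] at hsum
    exact (sub_eq_zero.1 (hdef _ (hsum j (Finset.mem_univ j)))).symm
end

section
/- (Bodmann–Casazza.) Let n and d be relatively prime natural numbers and let 0 < ε < 1/2. If {τ_j}_{j=1}^n is an ε-nearly equal norm Parseval frame for a d-dimensional Hilbert space H, then there is an equal norm Parseval frame {ω_j}_{j=1}^n for H such that ∑_{j=1}^n ‖τ_j − ω_j‖² ≤ (29/8)·d²·n·(n−1)^8·ε. -/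
open scoped InnerProductSpace

/-!
The proof is variational. Write `p = d / n` and let `q(ω) = ∑ (‖ω k‖² - p)²` be the norm defect,
considered on the compact set of Parseval frames of `n` vectors.

*Rotations.* Replacing two vectors `ω i, ω j` by a unitary rotation of the pair keeps the frame
Parseval, and changes the defect only through the difference of the two squared norms
(`IsParseval.exists_rotation`).

*Non-decomposability.* Let `S` be a proper nonempty set of indices and `T = ∑_{j ∈ S} ω j ω j*`.
The eigenvalues `λ` of `T` lie in `[0, 1]`, have sum `∑_{j ∈ S} ‖ω j‖²`, and satisfy
`∑ λ (1 - λ) = ∑_{i ∈ S, j ∉ S} |⟨ω i, ω j⟩|²`. If all these inner products were tiny, the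
eigenvalues would be close to `0` or `1`, so the trace would be close to an integer; but it is close
to `|S| d / n`, which by coprimality is at distance at least `1 / n` from the integers. Hence some
inner product across the cut is at least `n^(-3/2)` in modulus (`IsParseval.exists_large_inner`).

*Slope bound.* Cut the indices at the largest gap in the sorted list of squared norms and rotate
a pair across the cut with a large inner product. This decreases `√q` at rate more than
`1 / ((n - 1) n²)` per unit of distance moved (`IsParseval.exists_descent`). So, if `ε d n ≤ 1`,
a minimizer of `√(q ω) + dist(ω, τ) / ((n - 1) n²)` has `q = 0`, and comparison with `τ` itself
bounds its distance from `τ` by `(n - 1) n² √(q τ)` (`IsParseval.exists_near`).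

*Large `ε`.* If `ε d n > 1`, then `n ≥ 3` and any equal norm Parseval frame is close enough. One
exists because at a minimizer of `q` all norms agree: otherwise a rotation making two different norms
equal would decrease `q` (`IsParseval.exists_equalNorm`).
-/

/-! ### Parseval frames and partial frame operators -/

/-- The family `ω` is a Parseval frame. -/
def IsParseval (𝕜 : Type*) [RCLike 𝕜] {H : Type*} [NormedAddCommGroup H] [InnerProductSpace 𝕜 H]
    {n : ℕ} (ω : Fin n → H) : Prop :=
  ∀ h : H, ∑ j, ⟪ω j, h⟫_𝕜 • ω j = h

section Frames

variable {𝕜 : Type*} [RCLike 𝕜] {H : Type*} [NormedAddCommGroup H] [InnerProductSpace 𝕜 H] {n : ℕ}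

lemma re_inner_smul_self (x h : H) : RCLike.re ⟪h, ⟪x, h⟫_𝕜 • x⟫_𝕜 = ‖⟪x, h⟫_𝕜‖ ^ 2 := by
  rw [inner_smul_right, ← inner_conj_symm h x, RCLike.mul_conj]
  norm_cast

lemma IsParseval.norm_sq {ω : Fin n → H} (hω : IsParseval 𝕜 ω) (h : H) :
    ‖h‖ ^ 2 = ∑ j, ‖⟪ω j, h⟫_𝕜‖ ^ 2 := by
  rw [← inner_self_eq_norm_sq (𝕜 := 𝕜) h]
  conv_lhs =>
    arg 2; arg 3; rw [← hω h]
  rw [inner_sum, map_sum]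
  simp [re_inner_smul_self]

lemma IsParseval.norm_sq_le_one {ω : Fin n → H} (hω : IsParseval 𝕜 ω) (j : Fin n) :
    ‖ω j‖ ^ 2 ≤ 1 := by
  have h1 := hω.norm_sq (ω j)
  have h2 : ‖⟪ω j, ω j⟫_𝕜‖ ^ 2 ≤ ∑ k, ‖⟪ω k, ω j⟫_𝕜‖ ^ 2 :=
    Finset.single_le_sum (f := fun k => ‖⟪ω k, ω j⟫_𝕜‖ ^ 2) (fun k _ => by positivity)
      (Finset.mem_univ j)
  rw [← h1, inner_self_eq_norm_sq_to_K, norm_pow, RCLike.norm_ofReal, sq_abs] at h2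
  by_contra hc
  push Not at hc
  nlinarith

/-- The frame operator `h ↦ ∑_{j ∈ S} ⟨ω j, h⟩ ω j` of the subfamily indexed by `S`. -/
def partialFrameOp (𝕜 : Type*) [RCLike 𝕜] {H : Type*} [NormedAddCommGroup H]
    [InnerProductSpace 𝕜 H] {n : ℕ} (ω : Fin n → H) (S : Finset (Fin n)) : H →ₗ[𝕜] H where
  toFun h := ∑ j ∈ S, ⟪ω j, h⟫_𝕜 • ω j
  map_add' x y := by simp [inner_add_right, add_smul, Finset.sum_add_distrib]
  map_smul' c x := by simp [inner_smul_right, mul_smul, Finset.smul_sum]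

lemma partialFrameOp_isSymmetric (ω : Fin n → H) (S : Finset (Fin n)) :
    (partialFrameOp 𝕜 ω S).IsSymmetric := by
  intro x y
  simp only [partialFrameOp, LinearMap.coe_mk, AddHom.coe_mk, sum_inner, inner_sum,
    inner_smul_left, inner_smul_right, inner_conj_symm]
  exact Finset.sum_congr rfl fun _ _ => mul_comm _ _

lemma re_inner_partialFrameOp (ω : Fin n → H) (S : Finset (Fin n)) (h : H) :
    RCLike.re ⟪h, partialFrameOp 𝕜 ω S h⟫_𝕜 = ∑ j ∈ S, ‖⟪ω j, h⟫_𝕜‖ ^ 2 := by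
  simp only [partialFrameOp, LinearMap.coe_mk, AddHom.coe_mk, inner_sum, map_sum,
    re_inner_smul_self]

/-- The witnesses are the eigenvalues of the frame operator `T` of `S`. The last identity computes
`tr (T (1 - T))` in two ways, using that `1 - T` is the frame operator of `Sᶜ`. -/
lemma IsParseval.exists_spectrum [FiniteDimensional 𝕜 H] {d : ℕ} (hH : Module.finrank 𝕜 H = d)
    {ω : Fin n → H} (hω : IsParseval 𝕜 ω) (S : Finset (Fin n)) :
    ∃ lam : Fin d → ℝ, (∀ k, 0 ≤ lam k ∧ lam k ≤ 1) ∧ ∑ k, lam k = ∑ j ∈ S, ‖ω j‖ ^ 2 ∧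
      ∑ k, lam k * (1 - lam k) = ∑ j ∈ Sᶜ, ∑ i ∈ S, ‖⟪ω i, ω j⟫_𝕜‖ ^ 2 := by
  have hT := partialFrameOp_isSymmetric (𝕜 := 𝕜) ω S
  set b := hT.eigenvectorBasis hH with hb
  set lam := hT.eigenvalues hH with hlam
  have hbT : ∀ k, partialFrameOp 𝕜 ω S (b k) = (lam k : 𝕜) • b k :=
    fun k => hT.apply_eigenvectorBasis hH k
  have h1 : ∀ k, lam k = ∑ j ∈ S, ‖⟪ω j, b k⟫_𝕜‖ ^ 2 := by
    intro k
    rw [← re_inner_partialFrameOp, hbT, inner_smul_right, inner_self_eq_norm_sq_to_K,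
      b.norm_eq_one]
    simp
  have h2 : ∀ k, 1 - lam k = ∑ j ∈ Sᶜ, ‖⟪ω j, b k⟫_𝕜‖ ^ 2 := by
    intro k
    have := hω.norm_sq (b k)
    rw [b.norm_eq_one, ← Finset.sum_add_sum_compl S, ← h1] at this
    linarith
  have h3 : ∀ j, ∑ k, lam k * ‖⟪ω j, b k⟫_𝕜‖ ^ 2 = ∑ i ∈ S, ‖⟪ω i, ω j⟫_𝕜‖ ^ 2 := by
    intro j
    rw [← re_inner_partialFrameOp, ← b.sum_inner_mul_inner, map_sum]
    refine Finset.sum_congr rfl fun k _ => ?_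
    rw [← hT (b k) (ω j), hbT, inner_smul_left, ← inner_conj_symm (b k), RCLike.conj_ofReal,
      mul_left_comm, RCLike.mul_conj]
    norm_cast
  refine ⟨lam, fun k => ⟨?_, ?_⟩, ?_, ?_⟩
  · rw [h1]; positivity
  · have : 0 ≤ 1 - lam k := by rw [h2]; positivity
    linarith
  · simp_rw [h1]
    rw [Finset.sum_comm]
    exact Finset.sum_congr rfl fun j _ => b.sum_sq_norm_inner_left _
  · simp_rw [h2, Finset.mul_sum]
    rw [Finset.sum_comm]
    exact Finset.sum_congr rfl fun j _ => h3 j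

lemma IsParseval.sum_norm_sq [FiniteDimensional 𝕜 H] {d : ℕ} (hH : Module.finrank 𝕜 H = d)
    {ω : Fin n → H} (hω : IsParseval 𝕜 ω) : ∑ j, ‖ω j‖ ^ 2 = d := by
  have b := stdOrthonormalBasis 𝕜 H
  have : ∀ j, ‖ω j‖ ^ 2 = ∑ k, ‖⟪ω j, b k⟫_𝕜‖ ^ 2 := fun j => (b.sum_sq_norm_inner_left _).symm
  simp_rw [this]
  rw [Finset.sum_comm]
  simp [← hω.norm_sq, b.norm_eq_one, hH]

lemma isCompact_isParseval [FiniteDimensional 𝕜 H] :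
    IsCompact {ω : Fin n → H | IsParseval 𝕜 ω} := by
  have : ProperSpace H := FiniteDimensional.proper 𝕜 H
  refine (isCompact_closedBall (0 : Fin n → H) 1).of_isClosed_subset ?_ ?_
  · simp only [IsParseval, Set.ofPred_forall]
    exact isClosed_iInter fun h => isClosed_eq (by fun_prop) continuous_const
  · intro ω hω
    rw [mem_closedBall_zero_iff, pi_norm_le_iff_of_nonneg zero_le_one]
    intro j
    have := IsParseval.norm_sq_le_one hω j
    nlinarith [norm_nonneg (ω j)]

/-! ### Rotating a pair of vectors -/

lemma sum_add_pair_eq {M : Type*} [AddCommGroup M] (g g' : Fin n → M) {i j : Fin n} (hij : i ≠ j)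
    (h : ∀ k, k ≠ i → k ≠ j → g' k = g k) :
    ∑ k, g' k = ∑ k, g k + ((g' i + g' j) - (g i + g j)) := by
  have hs : ∀ f : Fin n → M, ∑ k, f k = ∑ k ∈ ({i, j} : Finset (Fin n))ᶜ, f k + (f i + f j) := by
    intro f
    rw [← Finset.sum_compl_add_sum {i, j}, Finset.sum_pair hij]
  have he : ∑ k ∈ ({i, j} : Finset (Fin n))ᶜ, g' k = ∑ k ∈ ({i, j} : Finset (Fin n))ᶜ, g k := by
    refine Finset.sum_congr rfl fun k hk => ?_
    simp only [Finset.mem_compl, Finset.mem_insert, Finset.mem_singleton, not_or] at hk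
    exact h k hk.1 hk.2
  rw [hs g', hs g, he]
  abel

/-- The squared `ℓ²`-distance of the list of squared norms of `ω` from the constant list `p`. -/
def normDefect (p : ℝ) (ω : Fin n → H) : ℝ := ∑ k, (‖ω k‖ ^ 2 - p) ^ 2

lemma norm_sq_combo (x y : H) (c s : ℝ) (w : 𝕜) (hw : ‖w‖ = 1) :
    ‖(c : 𝕜) • x + ((s : 𝕜) * w) • y‖ ^ 2
      = c ^ 2 * ‖x‖ ^ 2 + s ^ 2 * ‖y‖ ^ 2 + 2 * (c * s) * RCLike.re (w * ⟪x, y⟫_𝕜) := by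
  rw [@norm_add_sq 𝕜]
  simp only [norm_smul, inner_smul_left, inner_smul_right, norm_mul, hw, RCLike.conj_ofReal,
    RCLike.norm_ofReal, mul_pow, sq_abs, mul_one]
  rw [show (s : 𝕜) * w * ((c : 𝕜) * ⟪x, y⟫_𝕜) = ((s * c : ℝ) : 𝕜) * (w * ⟪x, y⟫_𝕜) by
    push_cast; ring]
  rw [RCLike.re_ofReal_mul]
  ring

/-- The frame `ω'` replaces `ω i` by `cos θ • ω i - (sin θ * z) • ω j` and `ω j` by
`cos θ • ω j + (sin θ * conj z) • ω i`. -/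
lemma IsParseval.exists_rotation {ω : Fin n → H} (hω : IsParseval 𝕜 ω) (p : ℝ) {i j : Fin n}
    (hij : i ≠ j) (z : 𝕜) (hz : ‖z‖ = 1) (θ : ℝ) :
    ∃ ω' : Fin n → H, IsParseval 𝕜 ω' ∧
      normDefect p ω' = normDefect p ω
        + 2 * (Real.cos (2 * θ) * ((‖ω i‖ ^ 2 - ‖ω j‖ ^ 2) / 2)
          - Real.sin (2 * θ) * RCLike.re (z * ⟪ω i, ω j⟫_𝕜)) ^ 2
        - 2 * ((‖ω i‖ ^ 2 - ‖ω j‖ ^ 2) / 2) ^ 2 ∧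
      ∑ k, ‖ω' k - ω k‖ ^ 2 = (2 - 2 * Real.cos θ) * (‖ω i‖ ^ 2 + ‖ω j‖ ^ 2) := by
  set c := Real.cos θ
  set s := Real.sin θ
  have hcs : s ^ 2 + c ^ 2 = 1 := Real.sin_sq_add_cos_sq θ
  have hz' : ‖(starRingEnd 𝕜) z‖ = 1 := by simpa using hz
  have hzz : (starRingEnd 𝕜) z * z = 1 := by rw [RCLike.conj_mul, hz]; simp
  set x := (c : 𝕜) • ω i + (((-s : ℝ) : 𝕜) * z) • ω j with hx
  set y := (c : 𝕜) • ω j + ((s : 𝕜) * (starRingEnd 𝕜) z) • ω i with hy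
  have hre : RCLike.re ((starRingEnd 𝕜) z * ⟪ω j, ω i⟫_𝕜) = RCLike.re (z * ⟪ω i, ω j⟫_𝕜) := by
    rw [← inner_conj_symm, ← map_mul, RCLike.conj_re]
  have hxn : ‖x‖ ^ 2 = c ^ 2 * ‖ω i‖ ^ 2 + s ^ 2 * ‖ω j‖ ^ 2
      - 2 * (c * s) * RCLike.re (z * ⟪ω i, ω j⟫_𝕜) := by
    rw [hx, norm_sq_combo _ _ _ _ _ hz]; ring
  have hyn : ‖y‖ ^ 2 = c ^ 2 * ‖ω j‖ ^ 2 + s ^ 2 * ‖ω i‖ ^ 2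
      + 2 * (c * s) * RCLike.re (z * ⟪ω i, ω j⟫_𝕜) := by
    rw [hy, norm_sq_combo _ _ _ _ _ hz', hre]
  have hxd : ‖x - ω i‖ ^ 2 = (c - 1) ^ 2 * ‖ω i‖ ^ 2 + s ^ 2 * ‖ω j‖ ^ 2
      - 2 * ((c - 1) * s) * RCLike.re (z * ⟪ω i, ω j⟫_𝕜) := by
    have : x - ω i = ((c - 1 : ℝ) : 𝕜) • ω i + (((-s : ℝ) : 𝕜) * z) • ω j := by
      rw [hx]; push_cast; module
    rw [this, norm_sq_combo _ _ _ _ _ hz]; ring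
  have hyd : ‖y - ω j‖ ^ 2 = (c - 1) ^ 2 * ‖ω j‖ ^ 2 + s ^ 2 * ‖ω i‖ ^ 2
      + 2 * ((c - 1) * s) * RCLike.re (z * ⟪ω i, ω j⟫_𝕜) := by
    have : y - ω j = ((c - 1 : ℝ) : 𝕜) • ω j + ((s : 𝕜) * (starRingEnd 𝕜) z) • ω i := by
      rw [hy]; push_cast; module
    rw [this, norm_sq_combo _ _ _ _ _ hz', hre]
  have h2c : Real.cos (2 * θ) = c ^ 2 - s ^ 2 := by rw [Real.cos_two_mul']
  have h2s : Real.sin (2 * θ) = 2 * s * c := by rw [Real.sin_two_mul]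
  set ω' : Fin n → H := Function.update (Function.update ω i x) j y with hω'
  have hi : ω' i = x := by simp [hω', hij]
  have hj : ω' j = y := by simp [hω']
  have hk : ∀ k, k ≠ i → k ≠ j → ω' k = ω k := fun k h1 h2 => by simp [hω', h1, h2]
  refine ⟨ω', ?_, ?_, ?_⟩
  · intro h
    rw [sum_add_pair_eq (fun k => ⟪ω k, h⟫_𝕜 • ω k) _ hij
      (fun k h1 h2 => by simp only [hk k h1 h2]), hω h, hi, hj, add_eq_left, sub_eq_zero, hx, hy]
    simp only [inner_add_left, inner_smul_left, map_mul, RCLike.conj_ofReal, RCLike.conj_conj,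
      smul_add, smul_smul]
    have hcs' : (s : 𝕜) ^ 2 + (c : 𝕜) ^ 2 = 1 := by exact_mod_cast hcs
    push_cast
    match_scalars
    · linear_combination (⟪ω i, h⟫_𝕜) * hcs' + (⟪ω i, h⟫_𝕜 * (s : 𝕜) ^ 2) * hzz
    · linear_combination (⟪ω j, h⟫_𝕜) * hcs' + (⟪ω j, h⟫_𝕜 * (s : 𝕜) ^ 2) * hzz
  · unfold normDefect
    rw [sum_add_pair_eq (fun k => (‖ω k‖ ^ 2 - p) ^ 2) _ hij
      (fun k h1 h2 => by simp only [hk k h1 h2]), hi, hj, hxn, hyn, h2c, h2s]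
    have hc2 : c ^ 2 = 1 - s ^ 2 := by linarith
    rw [hc2]
    ring
  · rw [sum_add_pair_eq (fun k => 0) _ hij (fun k h1 h2 => by simp [hk k h1 h2]), hi, hj, hxd, hyd]
    simp only [Finset.sum_const_zero]
    linear_combination (‖ω i‖ ^ 2 + ‖ω j‖ ^ 2) * hcs

end Frames

/-! ### Auxiliary facts about real numbers -/

/-- Rounding each `λ ∈ [0, 1]` to the nearest of `0` and `1` costs at most `2 λ (1 - λ)`. -/
lemma exists_int_abs_sub_le {ι : Type*} [Fintype ι] (lam : ι → ℝ)
    (h : ∀ k, 0 ≤ lam k ∧ lam k ≤ 1) :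
    ∃ m : ℤ, |∑ k, lam k - m| ≤ 2 * ∑ k, lam k * (1 - lam k) := by
  refine ⟨∑ k, if 1 / 2 ≤ lam k then 1 else 0, ?_⟩
  push_cast
  rw [← Finset.sum_sub_distrib, Finset.mul_sum]
  refine (Finset.abs_sum_le_sum_abs _ _).trans (Finset.sum_le_sum fun k _ => ?_)
  obtain ⟨h0, h1⟩ := h k
  split_ifs with hk
  · rw [abs_of_nonpos (by linarith)]; nlinarith
  · rw [abs_of_nonneg (by linarith)]; push Not at hk; nlinarith

/-- If `n` reals include `e i₀ < e i₁`, then two consecutive ones differ by at least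
`(e i₁ - e i₀) / (n - 1)`; `S` consists of the indices above such a gap. -/
lemma exists_gap {n : ℕ} (e : Fin n → ℝ) (i₀ i₁ : Fin n) (h01 : e i₀ < e i₁) :
    ∃ S : Finset (Fin n), S.Nonempty ∧ Sᶜ.Nonempty ∧
      ∀ i ∈ S, ∀ j ∈ Sᶜ, (e i₁ - e i₀) / ((n : ℝ) - 1) ≤ e i - e j := by
  have hne : i₁ ≠ i₀ := by rintro rfl; exact lt_irrefl _ h01
  have hn2 : 2 ≤ n := by
    have := Fintype.one_lt_card_iff.2 ⟨i₁, i₀, hne⟩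
    simpa [Nat.succ_le_iff] using this
  have hn : (0 : ℝ) < (n : ℝ) - 1 := by
    have : (2 : ℝ) ≤ n := by exact_mod_cast hn2
    linarith
  set R := e i₁ - e i₀
  have hR : 0 < R := sub_pos.2 h01
  set g : Fin n → ℝ := fun k => (e k - e i₀) * ((n : ℝ) - 1) / R with hg
  have hg0 : g i₀ = 0 := by simp [hg]
  have hg1 : g i₁ = (n : ℝ) - 1 := by simp only [hg]; field_simp; rfl
  -- the other `n - 2` values cannot meet all of the `n - 1` unit intervals `[k, k + 1)`
  obtain ⟨k, hk, hkS⟩ : ∃ k ∈ Finset.range (n - 1),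
      k ∉ ((Finset.univ.erase i₀).erase i₁).image (fun i => ⌊g i⌋₊) := by
    apply Finset.exists_mem_notMem_of_card_lt_card
    refine Finset.card_image_le.trans_lt ?_
    rw [Finset.card_erase_of_mem (by simp [hne]), Finset.card_erase_of_mem (by simp)]
    simp
    omega
  have hkn : (k : ℝ) + 1 ≤ (n : ℝ) - 1 := by
    have h1 : k + 2 ≤ n := by have := Finset.mem_range.1 hk; omega
    have : ((k + 2 : ℕ) : ℝ) ≤ n := by exact_mod_cast h1
    push_cast at this; linarith
  have hsplit : ∀ j, ¬ ((k : ℝ) + 1 ≤ g j) → g j ≤ k := by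
    intro j hj
    by_cases hj0 : j = i₀
    · rw [hj0, hg0]; positivity
    by_cases hj1 : j = i₁
    · rw [hj1, hg1] at hj; exact absurd hkn hj
    by_contra hc
    push Not at hj hc
    refine hkS (Finset.mem_image.2 ⟨j, by simp [hj0, hj1], ?_⟩)
    rw [Nat.floor_eq_iff (le_trans (by positivity) hc.le)]
    exact ⟨hc.le, hj⟩
  refine ⟨Finset.univ.filter fun i => (k : ℝ) + 1 ≤ g i, ⟨i₁, by simp [hg1, hkn]⟩,
    ⟨i₀, ?_⟩, ?_⟩
  · simp only [Finset.mem_compl, Finset.mem_filter, Finset.mem_univ, true_and, hg0, not_le]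
    positivity
  · intro i hi j hj
    simp only [Finset.mem_compl, Finset.mem_filter, Finset.mem_univ, true_and] at hi hj
    have h1 : 1 ≤ g i - g j := by linarith [hsplit j hj]
    have h2 : g i - g j = (e i - e j) * ((n : ℝ) - 1) / R := by simp only [hg]; ring
    rw [h2, le_div_iff₀ hR] at h1
    rw [div_le_iff₀ hn]
    linarith

/-- The left-hand side has derivative `κ - 4uv / √q < 0` in `θ` at `0`, where it equals `√q`. -/
lemma exists_small_rotation {q u v κ : ℝ} (hq : 0 < q) (hκ : κ * √q < 4 * u * v) :
    ∃ θ : ℝ, 0 < θ ∧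
      √(q + 2 * (Real.cos (2 * θ) * u - Real.sin (2 * θ) * v) ^ 2 - 2 * u ^ 2) + κ * θ < √q := by
  set F : ℝ → ℝ := fun θ =>
    √(q + 2 * (Real.cos (2 * θ) * u - Real.sin (2 * θ) * v) ^ 2 - 2 * u ^ 2) + κ * θ with hF
  have hsq : 0 < √q := Real.sqrt_pos.2 hq
  have hd2 : HasDerivAt (fun θ : ℝ => 2 * θ) 2 0 := by simpa using (hasDerivAt_id (0 : ℝ)).const_mul 2
  have hin : HasDerivAt (fun θ : ℝ =>
      q + 2 * (Real.cos (2 * θ) * u - Real.sin (2 * θ) * v) ^ 2 - 2 * u ^ 2) (-8 * u * v) 0 := by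
    have h := ((((hd2.cos.mul_const u).sub (hd2.sin.mul_const v)).pow 2).const_mul 2).const_add q
      |>.sub_const (2 * u ^ 2)
    refine h.congr_deriv ?_
    simp
    ring
  have hFd : HasDerivAt F (-8 * u * v / (2 * √q) + κ) 0 := by
    have h := (hin.sqrt (by simp [hq.ne'])).add ((hasDerivAt_id (0 : ℝ)).const_mul κ)
    refine h.congr_deriv ?_
    simp
  have hneg : -8 * u * v / (2 * √q) + κ < 0 := by
    have : -8 * u * v / (2 * √q) + κ = (κ * √q - 4 * u * v) / √q := by field_simp; ring
    rw [this]
    exact div_neg_of_neg_of_pos (by linarith) hsq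
  have h0 : F 0 = √q := by simp [hF]
  have hev := (hFd.hasDerivWithinAt (s := Set.Ioi 0)).limsup_slope_le' (by simp) hneg
  obtain ⟨θ, hθ, hpos⟩ := (hev.and self_mem_nhdsWithin).exists
  refine ⟨θ, hpos, ?_⟩
  have hpos' : (0 : ℝ) < θ := hpos
  rw [slope_def_field, sub_zero, div_lt_iff₀ hpos', h0] at hθ
  change F θ < _
  linarith

section Frames

variable {𝕜 : Type*} [RCLike 𝕜] {H : Type*} [NormedAddCommGroup H] [InnerProductSpace 𝕜 H] {n : ℕ}

/-! ### The slope bound -/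

lemma IsParseval.sum_sub_eq_zero [FiniteDimensional 𝕜 H] {d : ℕ} (hH : Module.finrank 𝕜 H = d)
    {ω : Fin n → H} (hω : IsParseval 𝕜 ω) (hn : n ≠ 0) :
    ∑ j, (‖ω j‖ ^ 2 - (d : ℝ) / n) = 0 := by
  have : (n : ℝ) ≠ 0 := by exact_mod_cast hn
  rw [Finset.sum_sub_distrib, hω.sum_norm_sq hH]
  simp
  field_simp
  simp

/-- A Parseval frame with small norm defect is quantitatively far from splitting into two mutually
orthogonal subfamilies when `n` and `d` are coprime. -/
lemma IsParseval.exists_large_inner [FiniteDimensional 𝕜 H] {d : ℕ}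
    (hH : Module.finrank 𝕜 H = d) (hcop : Nat.Coprime n d)
    {ω : Fin n → H} (hω : IsParseval 𝕜 ω) (hq : n * normDefect ((d : ℝ) / n) ω ≤ (1 / n) ^ 2)
    (S : Finset (Fin n)) (hS : S.Nonempty) (hS' : Sᶜ.Nonempty) :
    ∃ i ∈ S, ∃ j ∈ Sᶜ, 1 / (n : ℝ) ^ 3 ≤ ‖⟪ω i, ω j⟫_𝕜‖ ^ 2 := by
  have hcard : S.card + Sᶜ.card = n := by simp
  have hs0 : 0 < S.card := hS.card_pos
  have hs1 : 0 < Sᶜ.card := hS'.card_pos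
  have hn0 : 0 < n := by omega
  have hn : (0 : ℝ) < n := by exact_mod_cast hn0
  set e : Fin n → ℝ := fun j => ‖ω j‖ ^ 2 - (d : ℝ) / n with he
  have hesum : ∑ j, e j = 0 := hω.sum_sub_eq_zero hH hn0.ne'
  have habs : ∑ j, |e j| ≤ 1 / n := by
    have h1 : (∑ j, |e j|) ^ 2 ≤ n * normDefect ((d : ℝ) / n) ω := by
      have := sq_sum_le_card_mul_sum_sq (s := Finset.univ) (f := fun j => |e j|)
      simpa [normDefect, he] using this
    exact (sq_le_sq₀ (by positivity) (by positivity)).1 (h1.trans hq)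
  have hSe : |∑ j ∈ S, e j| ≤ 1 / (2 * n) := by
    have h1 : ∑ j ∈ S, e j = - ∑ j ∈ Sᶜ, e j := by
      have := Finset.sum_add_sum_compl S e
      linarith
    have h2 : |∑ j ∈ S, e j| ≤ ∑ j ∈ S, |e j| := Finset.abs_sum_le_sum_abs _ _
    have h3 : |∑ j ∈ S, e j| ≤ ∑ j ∈ Sᶜ, |e j| := by
      rw [h1, abs_neg]; exact Finset.abs_sum_le_sum_abs _ _
    have h4 := Finset.sum_add_sum_compl S fun j => |e j|
    have h5 : (1 : ℝ) / (2 * n) = 1 / n / 2 := by field_simp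
    linarith
  obtain ⟨lam, hlam, htr, hcross⟩ := hω.exists_spectrum hH S
  obtain ⟨m, hm⟩ := exists_int_abs_sub_le lam hlam
  rw [htr, hcross] at hm
  -- `|S| d / n` is at distance at least `1 / n` from the integers, by coprimality
  have hfar : 1 / (n : ℝ) ≤ |S.card * ((d : ℝ) / n) - m| := by
    have hne : (S.card : ℤ) * d - m * n ≠ 0 := by
      intro h0
      have hdvd : (n : ℤ) ∣ (S.card : ℤ) * d := ⟨m, by linarith⟩
      have hdvd' : n ∣ S.card * d := by exact_mod_cast hdvd
      have := Nat.le_of_dvd hs0 (hcop.dvd_of_dvd_mul_right hdvd')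
      omega
    have h1 : (1 : ℝ) ≤ |(S.card : ℝ) * d - m * n| := by exact_mod_cast Int.one_le_abs hne
    have h2 : (S.card : ℝ) * ((d : ℝ) / n) - m = (S.card * d - m * n) / n := by field_simp
    rw [h2, abs_div, abs_of_pos hn]
    gcongr
  have hSsum : ∑ j ∈ S, ‖ω j‖ ^ 2 - m = (S.card * ((d : ℝ) / n) - m) + ∑ j ∈ S, e j := by
    simp [he]
  have hcr : 1 / (4 * (n : ℝ)) ≤ ∑ j ∈ Sᶜ, ∑ i ∈ S, ‖⟪ω i, ω j⟫_𝕜‖ ^ 2 := by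
    rw [hSsum] at hm
    have h1 := abs_sub_abs_le_abs_add (S.card * ((d : ℝ) / n) - m) (∑ j ∈ S, e j)
    have h5 : (1 : ℝ) / (2 * n) = 1 / n / 2 := by field_simp
    have h6 : (1 : ℝ) / (4 * n) = 1 / n / 4 := by field_simp
    linarith
  by_contra hc
  push Not at hc
  have hlt : ∑ j ∈ Sᶜ, ∑ i ∈ S, ‖⟪ω i, ω j⟫_𝕜‖ ^ 2 < ∑ j ∈ Sᶜ, ∑ i ∈ S, 1 / (n : ℝ) ^ 3 :=
    Finset.sum_lt_sum_of_nonempty hS' fun j hj =>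
      Finset.sum_lt_sum_of_nonempty hS fun i hi => hc i hi j hj
  simp only [Finset.sum_const, nsmul_eq_mul] at hlt
  have hN : (S.card : ℝ) + Sᶜ.card = n := by exact_mod_cast hcard
  have hprod : (Sᶜ.card : ℝ) * S.card ≤ n ^ 2 / 4 := by
    rw [← hN]; nlinarith [sq_nonneg ((S.card : ℝ) - Sᶜ.card)]
  have : (Sᶜ.card : ℝ) * (S.card * (1 / (n : ℝ) ^ 3)) ≤ 1 / (4 * n) := by
    rw [← mul_assoc]
    calc _ ≤ (n : ℝ) ^ 2 / 4 * (1 / (n : ℝ) ^ 3) := by gcongr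
      _ = _ := by field_simp
  linarith

/-- The root of the norm defect has slope greater than `1 / ((n - 1) n²)` on the set of Parseval
frames, wherever the defect is positive but small. -/
lemma IsParseval.exists_descent [FiniteDimensional 𝕜 H] {d : ℕ}
    (hH : Module.finrank 𝕜 H = d) (hcop : Nat.Coprime n d) (hn2 : 2 ≤ n)
    {ω : Fin n → H} (hω : IsParseval 𝕜 ω) (hq0 : 0 < normDefect ((d : ℝ) / n) ω)
    (hq : n * normDefect ((d : ℝ) / n) ω ≤ (1 / n) ^ 2) :
    ∃ ω' : Fin n → H, IsParseval 𝕜 ω' ∧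
      √(normDefect ((d : ℝ) / n) ω') + 1 / (((n : ℝ) - 1) * n ^ 2) * √(∑ k, ‖ω' k - ω k‖ ^ 2)
        < √(normDefect ((d : ℝ) / n) ω) := by
  have hn2' : (2 : ℝ) ≤ n := by exact_mod_cast hn2
  have hn1 : (0 : ℝ) < (n : ℝ) - 1 := by linarith
  have hn : (0 : ℝ) < n := by linarith
  set p := (d : ℝ) / n
  set q := normDefect p ω with hqdef
  set e : Fin n → ℝ := fun j => ‖ω j‖ ^ 2 - p with he
  have hesum : ∑ j, e j = 0 := hω.sum_sub_eq_zero hH (by omega)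
  have : Nonempty (Fin n) := ⟨⟨0, by omega⟩⟩
  obtain ⟨i₀, hmin⟩ := Finite.exists_min e
  obtain ⟨i₁, hmax⟩ := Finite.exists_max e
  set R := e i₁ - e i₀ with hR
  have hmin0 : e i₀ ≤ 0 := by
    by_contra hc
    push Not at hc
    exact (Finset.sum_pos (fun k _ => hc.trans_le (hmin k)) Finset.univ_nonempty).ne' hesum
  have hmax0 : 0 ≤ e i₁ := by
    by_contra hc
    push Not at hc
    exact (Finset.sum_neg (fun k _ => (hmax k).trans_lt hc) Finset.univ_nonempty).ne hesum
  have hqR : q ≤ n * R ^ 2 := by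
    have : ∀ k, e k ^ 2 ≤ R ^ 2 := fun k => by
      apply sq_le_sq'
      · linarith [hmin k]
      · linarith [hmax k]
    calc q = ∑ k, e k ^ 2 := rfl
      _ ≤ ∑ _k : Fin n, R ^ 2 := Finset.sum_le_sum fun k _ => this k
      _ = _ := by simp
  have hRpos : 0 < R := by
    have h0 : 0 ≤ R := by linarith
    rcases h0.eq_or_lt with h | h
    · rw [← h] at hqR; simp at hqR; linarith
    · exact h
  obtain ⟨S, hS, hS', hgap⟩ := exists_gap e i₀ i₁ (sub_pos.1 hRpos)
  obtain ⟨i, hi, j, hj, hv⟩ := hω.exists_large_inner hH hcop hq S hS hS'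
  have hij : i ≠ j := by rintro rfl; exact (Finset.mem_compl.1 hj) hi
  have hu := hgap i hi j hj
  have heij : e i - e j = ‖ω i‖ ^ 2 - ‖ω j‖ ^ 2 := by simp [he]
  rw [heij] at hu
  set u := (‖ω i‖ ^ 2 - ‖ω j‖ ^ 2) / 2 with hudef
  set v := ‖⟪ω i, ω j⟫_𝕜‖ with hvdef
  have hu2 : R / ((n : ℝ) - 1) ≤ 2 * u := by rw [hudef]; linarith
  have hv0 : 0 < v := by
    have h1 : 0 < v ^ 2 := lt_of_lt_of_le (by positivity) hv
    exact (norm_nonneg _).lt_of_ne fun h => by rw [hvdef, ← h] at h1; simp at h1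
  have hupos : 0 < u := by
    have : 0 < R / ((n : ℝ) - 1) := by positivity
    linarith
  set c := 1 / (((n : ℝ) - 1) * n ^ 2) with hc
  have hκ : c * √2 * √q < 4 * u * v := by
    refine lt_of_pow_lt_pow_left₀ 2 (by positivity) ?_
    calc (c * √2 * √q) ^ 2 = c ^ 2 * 2 * q := by
          rw [mul_pow, mul_pow, Real.sq_sqrt (by norm_num), Real.sq_sqrt hq0.le]
      _ < c ^ 2 * 4 * q := by
          have : 0 < c ^ 2 * q := by positivity
          linarith
      _ ≤ c ^ 2 * 4 * (n * R ^ 2) := by gcongr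
      _ = 4 * (R / ((n : ℝ) - 1)) ^ 2 * (1 / (n : ℝ) ^ 3) := by rw [hc]; field_simp
      _ ≤ 4 * (2 * u) ^ 2 * v ^ 2 := by gcongr
      _ = (4 * u * v) ^ 2 := by ring
  obtain ⟨θ, hθ, hlt⟩ := exists_small_rotation hq0 hκ
  -- the phase aligning the two vectors
  obtain ⟨z, hz, hzv⟩ : ∃ z : 𝕜, ‖z‖ = 1 ∧ z * ⟪ω i, ω j⟫_𝕜 = (v : 𝕜) := by
    have hne : ⟪ω i, ω j⟫_𝕜 ≠ 0 := norm_pos_iff.1 hv0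
    refine ⟨(v : 𝕜) / ⟪ω i, ω j⟫_𝕜, ?_, by field_simp⟩
    rw [norm_div, RCLike.norm_ofReal, abs_of_pos hv0, ← hvdef, div_self hv0.ne']
  obtain ⟨ω', hω', hq', hd⟩ := hω.exists_rotation p hij z hz θ
  refine ⟨ω', hω', ?_⟩
  rw [hzv, RCLike.ofReal_re, ← hudef, ← hqdef] at hq'
  rw [hq']
  refine lt_of_le_of_lt ?_ hlt
  rw [mul_assoc]
  gcongr
  rw [hd]
  refine Real.sqrt_le_iff.2 ⟨by positivity, ?_⟩
  rw [mul_pow, Real.sq_sqrt (by norm_num)]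
  have h1 := hω.norm_sq_le_one i
  have h2 := hω.norm_sq_le_one j
  have h3 := Real.one_sub_sq_div_two_le_cos (x := θ)
  have h4 := Real.cos_le_one θ
  have h5 : 2 - 2 * Real.cos θ ≤ θ ^ 2 := by linarith
  calc _ ≤ θ ^ 2 * (1 + 1) := by gcongr
    _ = _ := by ring

/-! ### Minimization over the compact set of Parseval frames -/

lemma continuous_normDefect (p : ℝ) : Continuous (normDefect p : (Fin n → H) → ℝ) := by
  unfold normDefect; fun_prop

lemma sqrt_sum_triangle (x y z : Fin n → H) :
    √(∑ k, ‖x k - z k‖ ^ 2) ≤ √(∑ k, ‖x k - y k‖ ^ 2) + √(∑ k, ‖y k - z k‖ ^ 2) := by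
  have := dist_triangle (WithLp.toLp 2 x : PiLp 2 fun _ : Fin n => H) (WithLp.toLp 2 y)
    (WithLp.toLp 2 z)
  simpa [dist_eq_norm, PiLp.norm_eq_of_L2] using this

lemma norm_sq_eq_of_normDefect_eq_zero {p : ℝ} {ω : Fin n → H} (h : normDefect p ω = 0) (j : Fin n) :
    ‖ω j‖ ^ 2 = p := by
  rw [normDefect, Finset.sum_eq_zero_iff_of_nonneg (fun k _ => by positivity)] at h
  have := h j (Finset.mem_univ j)
  rw [sq_eq_zero_iff] at this
  linarith

lemma normDefect_nonneg (p : ℝ) (ω : Fin n → H) : 0 ≤ normDefect p ω := by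
  unfold normDefect; positivity

lemma IsParseval.exists_equalNorm [FiniteDimensional 𝕜 H] {d : ℕ}
    (hH : Module.finrank 𝕜 H = d) (hn0 : n ≠ 0) {τ : Fin n → H} (hτ : IsParseval 𝕜 τ) :
    ∃ ω : Fin n → H, IsParseval 𝕜 ω ∧ ∀ j, ‖ω j‖ ^ 2 = (d : ℝ) / n := by
  have hn : (n : ℝ) ≠ 0 := by exact_mod_cast hn0
  obtain ⟨ω, hω, hmin⟩ := (isCompact_isParseval (𝕜 := 𝕜) (H := H) (n := n)).exists_isMinOn ⟨τ, hτ⟩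
    (continuous_normDefect ((d : ℝ) / n)).continuousOn
  refine ⟨ω, hω, ?_⟩
  have hall : ∀ i j, ‖ω i‖ ^ 2 = ‖ω j‖ ^ 2 := by
    intro i j
    by_contra hne
    have hij : i ≠ j := by rintro rfl; exact hne rfl
    set u := (‖ω i‖ ^ 2 - ‖ω j‖ ^ 2) / 2 with hu
    set v := RCLike.re ((1 : 𝕜) * ⟪ω i, ω j⟫_𝕜) with hv
    have hu0 : u ≠ 0 := by
      intro h
      apply hne
      rw [hu] at h
      linarith
    -- the angle for which the two rotated vectors have equal norms
    set w : ℂ := ⟨v, u⟩ with hw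
    have hw0 : w ≠ 0 := fun h => hu0 (by simpa [hw] using congrArg Complex.im h)
    have hrot : Real.cos (2 * (w.arg / 2)) * u - Real.sin (2 * (w.arg / 2)) * v = 0 := by
      rw [show 2 * (w.arg / 2) = w.arg by ring, Complex.cos_arg hw0, Complex.sin_arg]
      simp only [hw]
      ring
    obtain ⟨ω', hω', hq', -⟩ := hω.exists_rotation ((d : ℝ) / n) hij 1 (by simp) (w.arg / 2)
    have hle : normDefect ((d : ℝ) / n) ω ≤ normDefect ((d : ℝ) / n) ω' := hmin hω'
    rw [← hu, ← hv, hrot] at hq'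
    have : 0 < u ^ 2 := by positivity
    nlinarith
  intro j
  have h1 := hω.sum_norm_sq hH
  rw [Finset.sum_congr rfl fun k _ => hall k j] at h1
  simp at h1
  rw [eq_div_iff hn]
  linarith

lemma IsParseval.exists_near [FiniteDimensional 𝕜 H] {d : ℕ}
    (hH : Module.finrank 𝕜 H = d) (hcop : Nat.Coprime n d) (hn2 : 2 ≤ n)
    {τ : Fin n → H} (hτ : IsParseval 𝕜 τ)
    (hq : n * normDefect ((d : ℝ) / n) τ ≤ (1 / n) ^ 2) :
    ∃ ω : Fin n → H, IsParseval 𝕜 ω ∧ (∀ j, ‖ω j‖ ^ 2 = (d : ℝ) / n) ∧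
      ∑ j, ‖τ j - ω j‖ ^ 2 ≤ (((n : ℝ) - 1) * n ^ 2) ^ 2 * normDefect ((d : ℝ) / n) τ := by
  have hn2' : (2 : ℝ) ≤ n := by exact_mod_cast hn2
  have hn1 : (0 : ℝ) < (n : ℝ) - 1 := by linarith
  have hn : (0 : ℝ) < n := by linarith
  set p := (d : ℝ) / n
  set c := 1 / (((n : ℝ) - 1) * n ^ 2) with hc
  have hc0 : 0 < c := by positivity
  obtain ⟨ω, hω, hmin⟩ := (isCompact_isParseval (𝕜 := 𝕜) (H := H) (n := n)).exists_isMinOn ⟨τ, hτ⟩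
    (f := fun ω => √(normDefect p ω) + c * √(∑ k, ‖ω k - τ k‖ ^ 2))
    (Continuous.continuousOn (by have := continuous_normDefect (n := n) (H := H) p; fun_prop))
  have hωτ : √(normDefect p ω) + c * √(∑ k, ‖ω k - τ k‖ ^ 2) ≤ √(normDefect p τ) := by
    have := hmin hτ
    simpa using this
  have hD0 : 0 ≤ c * √(∑ k, ‖ω k - τ k‖ ^ 2) := by positivity
  have hle : normDefect p ω ≤ normDefect p τ :=
    (Real.sqrt_le_sqrt_iff (normDefect_nonneg p τ)).1 (by linarith)
  have hzero : normDefect p ω = 0 := by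
    by_contra hne
    have hpos : 0 < normDefect p ω := (normDefect_nonneg p ω).lt_of_ne' hne
    obtain ⟨ω', hω', hlt⟩ := hω.exists_descent hH hcop hn2 hpos
      (le_trans (by gcongr) hq)
    have h1 : √(normDefect p ω) + c * √(∑ k, ‖ω k - τ k‖ ^ 2)
        ≤ √(normDefect p ω') + c * √(∑ k, ‖ω' k - τ k‖ ^ 2) := hmin hω'
    have h2 := mul_le_mul_of_nonneg_left (sqrt_sum_triangle ω' ω τ) hc0.le
    rw [← hc] at hlt
    linarith
  refine ⟨ω, hω, fun j => norm_sq_eq_of_normDefect_eq_zero hzero j, ?_⟩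
  have h1 : √(∑ k, ‖ω k - τ k‖ ^ 2) ≤ (((n : ℝ) - 1) * n ^ 2) * √(normDefect p τ) := by
    have h3 : c * √(∑ k, ‖ω k - τ k‖ ^ 2) ≤ √(normDefect p τ) := by
      linarith [Real.sqrt_nonneg (normDefect p ω)]
    rw [hc, one_div, inv_mul_le_iff₀ (by positivity)] at h3
    exact h3
  have h2 := pow_le_pow_left₀ (Real.sqrt_nonneg _) h1 2
  rw [Real.sq_sqrt (by positivity), mul_pow, Real.sq_sqrt (normDefect_nonneg p τ)] at h2
  simpa only [norm_sub_rev] using h2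

end Frames

/-- Bodmann–Casazza: for `n` and `d` relatively prime and `0 < ε < 1/2`, every `ε`-nearly
equal norm Parseval frame of `n` vectors for a `d`-dimensional Hilbert space admits an
equal norm Parseval frame within squared distance `(29/8) d² n (n-1)⁸ ε`. -/
theorem bodmann_casazza
    {𝕜 : Type*} [RCLike 𝕜] {H : Type*} [NormedAddCommGroup H]
    [InnerProductSpace 𝕜 H] [FiniteDimensional 𝕜 H] {n d : ℕ}
    (hH : Module.finrank 𝕜 H = d) (hcop : Nat.Coprime n d)
    (ε : ℝ) (hε0 : 0 < ε) (hε1 : ε < 1 / 2)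
    (τ : Fin n → H)
    (hParseval : ∀ h : H, ∑ j, ⟪τ j, h⟫_𝕜 • τ j = h)
    (hnorm : ∀ j, (1 - ε) * (d / n) ≤ ‖τ j‖ ^ 2 ∧ ‖τ j‖ ^ 2 ≤ (1 + ε) * (d / n)) :
    ∃ ω : Fin n → H,
      (∀ h : H, ∑ j, ⟪ω j, h⟫_𝕜 • ω j = h) ∧
      (∀ j, ‖ω j‖ ^ 2 = (d : ℝ) / n) ∧
      ∑ j, ‖τ j - ω j‖ ^ 2 ≤ (29 / 8) * d ^ 2 * n * ((n : ℝ) - 1) ^ 8 * ε := by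
  have hτ : IsParseval 𝕜 τ := hParseval
  rcases Nat.lt_or_ge n 2 with hn | hn2
  · -- `n = 0` forces `d = 0`, which is not coprime to it; for `n = 1` the frame already works
    have hn01 : n = 0 ∨ n = 1 := by omega
    rcases hn01 with rfl | rfl
    · have hsub : Subsingleton H := ⟨fun x y => by rw [← hτ x, ← hτ y]; simp⟩
      have hd : d = 0 := by rw [← hH]; exact Module.finrank_zero_of_subsingleton
      subst hd
      simp at hcop
    · refine ⟨τ, hParseval, fun j => ?_, by simp⟩
      have := hτ.sum_norm_sq hH
      rw [Fin.sum_univ_one] at this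
      rw [Subsingleton.elim j 0, this]
      simp
  have hn2' : (2 : ℝ) ≤ n := by exact_mod_cast hn2
  have hn : (0 : ℝ) < n := by linarith
  have hd1 : 1 ≤ d := by
    rcases Nat.eq_zero_or_pos d with rfl | h
    · rw [Nat.coprime_zero_right] at hcop; omega
    · exact h
  have hd1' : (1 : ℝ) ≤ d := by exact_mod_cast hd1
  have hdn : d ≤ n := by
    have h1 : (d : ℝ) ≤ n := by
      rw [← hτ.sum_norm_sq hH]
      exact (Finset.sum_le_sum fun k _ => hτ.norm_sq_le_one k).trans (by simp)
    exact_mod_cast h1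
  rcases le_or_gt (ε * d * n) 1 with hsmall | hlarge
  · have hdef : normDefect ((d : ℝ) / n) τ ≤ (ε * d) ^ 2 / n := by
      have h1 : ∀ k, (‖τ k‖ ^ 2 - (d : ℝ) / n) ^ 2 ≤ (ε * (d / n)) ^ 2 := fun k => by
        obtain ⟨ha, hb⟩ := hnorm k
        apply sq_le_sq' <;> linarith
      calc _ ≤ ∑ _k : Fin n, (ε * ((d : ℝ) / n)) ^ 2 := Finset.sum_le_sum fun k _ => h1 k
        _ = _ := by simp; field_simp
    have hq : n * normDefect ((d : ℝ) / n) τ ≤ (1 / n) ^ 2 := by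
      calc n * normDefect ((d : ℝ) / n) τ ≤ n * ((ε * d) ^ 2 / n) := by gcongr
        _ = (ε * d) ^ 2 := by field_simp
        _ ≤ (1 / n) ^ 2 := by
          gcongr
          rw [le_div_iff₀ hn]; exact hsmall
    obtain ⟨ω, hω, hωn, hdist⟩ := hτ.exists_near hH hcop hn2 hq
    refine ⟨ω, hω, hωn, hdist.trans ?_⟩
    set m : ℝ := (n : ℝ) - 1 with hm
    have hm1 : 1 ≤ m := by rw [hm]; linarith
    have hnm : (n : ℝ) ≤ 2 * m := by rw [hm]; linarith
    calc (m * n ^ 2) ^ 2 * normDefect ((d : ℝ) / n) τ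
        ≤ (m * n ^ 2) ^ 2 * ((ε * d) ^ 2 / n) := by gcongr
      _ = m ^ 2 * n ^ 2 * (ε * d) * (ε * d * n) := by field_simp
      _ ≤ m ^ 2 * n ^ 2 * (ε * d) * 1 := by gcongr
      _ = n * m ^ 2 * (ε * d) * n := by ring
      _ ≤ n * m ^ 2 * (ε * d) * (2 * m) := by gcongr
      _ = 2 * (n * d * ε) * m ^ 3 := by ring
      _ ≤ (29 / 8) * (n * (d * d) * ε) * m ^ 8 := by
          gcongr
          · norm_num
          · exact le_mul_of_one_le_left (by positivity) hd1'
          · norm_num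
      _ = _ := by ring
  · -- `n = 2` would force `d = 1` and then `ε ≥ 1 / 2`
    have hn3 : 3 ≤ n := by
      by_contra hc
      have h2 : n = 2 := by omega
      subst h2
      have : d = 1 := by
        have : d = 1 ∨ d = 2 := by omega
        rcases this with h | rfl
        · exact h
        · norm_num at hcop
      subst this
      push_cast at hlarge
      linarith
    obtain ⟨ω, hω, hωn⟩ := hτ.exists_equalNorm hH (by omega)
    refine ⟨ω, hω, hωn, ?_⟩
    have hn3' : (3 : ℝ) ≤ n := by exact_mod_cast hn3
    have h4d : ∑ j, ‖τ j - ω j‖ ^ 2 ≤ 4 * d := by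
      calc ∑ j, ‖τ j - ω j‖ ^ 2 ≤ ∑ j, (2 * ‖τ j‖ ^ 2 + 2 * ‖ω j‖ ^ 2) := by
            refine Finset.sum_le_sum fun j _ => ?_
            have h1 := pow_le_pow_left₀ (norm_nonneg _) (norm_sub_le (τ j) (ω j)) 2
            nlinarith [sq_nonneg (‖τ j‖ - ‖ω j‖)]
        _ = 4 * d := by
            rw [Finset.sum_add_distrib, ← Finset.mul_sum, ← Finset.mul_sum, hτ.sum_norm_sq hH,
              hω.sum_norm_sq hH]
            ring
    have hpow : (2 : ℝ) ^ 8 ≤ ((n : ℝ) - 1) ^ 8 := by gcongr; linarith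
    calc ∑ j, ‖τ j - ω j‖ ^ 2 ≤ 4 * d * 1 := by linarith
      _ ≤ 4 * d * (ε * d * n) := by gcongr
      _ ≤ (29 / 8) * d ^ 2 * n * ε * 2 ^ 8 := by
          have : 0 ≤ (d : ℝ) ^ 2 * n * ε := by positivity
          nlinarith
      _ ≤ (29 / 8) * d ^ 2 * n * ε * ((n : ℝ) - 1) ^ 8 := by gcongr
      _ = _ := by ring
end

section
/- (Paulsen bound implies projection bound, Cahill–Casazza.) Fix ε ∈ (0,1) and natural numbers n ≤ d. Suppose B ≥ 0 is such that every ε-nearly equal norm Parseval frame of d vectors for an n-dimensional Hilbert space admits an equal norm Parseval frame within squared distance B. Let H be a d-dimensional Hilbert space with orthonormal basis {u_k}_{k=1}^d. If P : H → H is an orthogonal projection of rank n satisfying (1−ε)·n/d ≤ ‖P u_k‖² ≤ (1+ε)·n/d for all 1 ≤ k ≤ d, then there exists an orthogonal projection Q : H → H of rank n with ‖Q u_k‖² = n/d for all 1 ≤ k ≤ d and ∑_{k=1}^d ‖P u_k − Q u_k‖² ≤ 4B. -/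
/-!
Let `K = range P` and `τ k = P (u k)`, a nearly equal norm Parseval frame for `K`, and let `ω` be
the equal norm Parseval frame provided by the Paulsen bound. The analysis operator
`V h = ∑ k, ⟪ω k, h⟫ • u k` is an isometry `K → H` whose adjoint sends `u k` to `ω k`, so
`Q = V ∘ V†` is an orthogonal projection of rank `n` with `‖Q (u k)‖ = ‖V (ω k)‖ = ‖ω k‖`.

The analysis operator of `τ` is the inclusion of `K` in `H`, whence
`P (u k) - Q (u k) = (τ k - ω k) + (ω k - V (ω k))`. Computing the Hilbert–Schmidt norm of
`inclusion - V` along the Parseval frame `ω` and, by adjunction, along the basis `u` gives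
`∑ k, ‖ω k - V (ω k)‖ ^ 2 = ∑ k, ‖τ k - ω k‖ ^ 2`. The factor `4` then comes from
`‖a + b‖ ^ 2 ≤ 2 * (‖a‖ ^ 2 + ‖b‖ ^ 2)`.
-/

open scoped InnerProductSpace

section Analysis

variable {𝕜 : Type*} [RCLike 𝕜] {ι : Type*} [Fintype ι]
  {K H : Type*} [NormedAddCommGroup K] [InnerProductSpace 𝕜 K]
  [NormedAddCommGroup H] [InnerProductSpace 𝕜 H]

/-- The analysis operator `h ↦ ∑ k, ⟪ω k, h⟫ • u k` of the family `ω`, with values in `H`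
through the orthonormal basis `u` instead of in `ℓ²`. -/
noncomputable def analysisOp (u : OrthonormalBasis ι 𝕜 H) (ω : ι → K) : K →L[𝕜] H :=
  ∑ k, (innerSL 𝕜 (ω k)).smulRight (u k)

lemma analysisOp_apply (u : OrthonormalBasis ι 𝕜 H) (ω : ι → K) (h : K) :
    analysisOp u ω h = ∑ k, ⟪ω k, h⟫_𝕜 • u k := by
  simp [analysisOp]

lemma inner_analysisOp (u : OrthonormalBasis ι 𝕜 H) (ω : ι → K) (h : K) (j : ι) :
    ⟪u j, analysisOp u ω h⟫_𝕜 = ⟪ω j, h⟫_𝕜 := by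
  rw [analysisOp_apply]
  exact u.orthonormal.inner_right_fintype (fun k => ⟪ω k, h⟫_𝕜) j

variable [CompleteSpace K] [CompleteSpace H]

lemma adjoint_analysisOp_basis (u : OrthonormalBasis ι 𝕜 H) (ω : ι → K) (k : ι) :
    (analysisOp u ω).adjoint (u k) = ω k := by
  refine ext_inner_right 𝕜 fun h => ?_
  rw [ContinuousLinearMap.adjoint_inner_left, inner_analysisOp]

/-- For a Parseval frame the frame operator `V† ∘ V` is the identity. -/
lemma adjoint_analysisOp_analysisOp (u : OrthonormalBasis ι 𝕜 H) {ω : ι → K}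
    (hω : ∀ h : K, ∑ j, ⟪ω j, h⟫_𝕜 • ω j = h) (h : K) :
    (analysisOp u ω).adjoint (analysisOp u ω h) = h := by
  conv_lhs => rw [analysisOp_apply u ω h]
  simp only [map_sum, map_smul, adjoint_analysisOp_basis, hω]

lemma norm_analysisOp (u : OrthonormalBasis ι 𝕜 H) {ω : ι → K}
    (hω : ∀ h : K, ∑ j, ⟪ω j, h⟫_𝕜 • ω j = h) (h : K) :
    ‖analysisOp u ω h‖ = ‖h‖ := by
  have e : ⟪analysisOp u ω h, analysisOp u ω h⟫_𝕜 = ⟪h, h⟫_𝕜 := by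
    rw [← ContinuousLinearMap.adjoint_inner_left, adjoint_analysisOp_analysisOp u hω]
  rw [@norm_eq_sqrt_re_inner 𝕜, @norm_eq_sqrt_re_inner 𝕜, e]

lemma sum_sq_norm_inner_of_parseval (u : OrthonormalBasis ι 𝕜 H) {ω : ι → K}
    (hω : ∀ h : K, ∑ j, ⟪ω j, h⟫_𝕜 • ω j = h) (h : K) :
    ∑ k, ‖⟪h, ω k⟫_𝕜‖ ^ 2 = ‖h‖ ^ 2 := by
  rw [← norm_analysisOp u hω h, ← u.sum_sq_norm_inner_right]
  simp only [inner_analysisOp, norm_inner_symm h]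

/-- The squared Hilbert–Schmidt norm of an operator `T : K → H`, computed along a Parseval frame
of `K`, agrees with that of its formal adjoint `u j ↦ σ j`, computed along the basis `u`. -/
lemma sum_sq_norm_apply_parseval (u : OrthonormalBasis ι 𝕜 H) {ω : ι → K}
    (hω : ∀ h : K, ∑ j, ⟪ω j, h⟫_𝕜 • ω j = h) (T : K → H) (σ : ι → K)
    (hT : ∀ j h, ⟪u j, T h⟫_𝕜 = ⟪σ j, h⟫_𝕜) :
    ∑ k, ‖T (ω k)‖ ^ 2 = ∑ k, ‖σ k‖ ^ 2 := by
  simp_rw [← u.sum_sq_norm_inner_right (T _), hT]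
  rw [Finset.sum_comm]
  exact Finset.sum_congr rfl fun j _ => sum_sq_norm_inner_of_parseval u hω (σ j)

end Analysis

/-- Cahill–Casazza: a bound `B` for the Paulsen problem (for frames of `d` vectors in
`n`-dimensional Hilbert spaces) yields the bound `4B` for the projection problem. -/
theorem paulsen_implies_projection
    (𝕜 : Type) [RCLike 𝕜] (ε : ℝ) (hε0 : 0 < ε) (hε1 : ε < 1)
    (n d : ℕ) (hnd : n ≤ d) (B : ℝ) (hB : 0 ≤ B)
    -- `B` is a bound for the Paulsen problem: every `ε`-nearly equal norm Parseval frame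
    -- of `d` vectors for an `n`-dimensional Hilbert space `K` admits an equal norm
    -- Parseval frame within squared distance `B`
    (hPaulsen : ∀ (K : Type) [NormedAddCommGroup K] [InnerProductSpace 𝕜 K]
      [FiniteDimensional 𝕜 K], Module.finrank 𝕜 K = n →
      ∀ τ : Fin d → K,
        (∀ h : K, ∑ j, ⟪τ j, h⟫_𝕜 • τ j = h) →
        (∀ j, (1 - ε) * (n / d) ≤ ‖τ j‖ ^ 2 ∧ ‖τ j‖ ^ 2 ≤ (1 + ε) * (n / d)) →
        ∃ ω : Fin d → K,
          (∀ h : K, ∑ j, ⟪ω j, h⟫_𝕜 • ω j = h) ∧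
          (∀ j, ‖ω j‖ ^ 2 = (n : ℝ) / d) ∧
          ∑ j, ‖τ j - ω j‖ ^ 2 ≤ B)
    {H : Type} [NormedAddCommGroup H] [InnerProductSpace 𝕜 H] [FiniteDimensional 𝕜 H]
    (hH : Module.finrank 𝕜 H = d)
    -- `u` is an orthonormal basis of `H`
    (u : OrthonormalBasis (Fin d) 𝕜 H)
    -- `P` is an orthogonal projection (self-adjoint idempotent) of rank `n`
    (P : H →L[𝕜] H) (hPidem : ∀ h : H, P (P h) = P h)
    (hPsa : ∀ x y : H, ⟪P x, y⟫_𝕜 = ⟪x, P y⟫_𝕜)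
    (hPrank : Module.finrank 𝕜 (LinearMap.range (P : H →ₗ[𝕜] H)) = n)
    (hPnorm : ∀ k, (1 - ε) * (n / d) ≤ ‖P (u k)‖ ^ 2 ∧ ‖P (u k)‖ ^ 2 ≤ (1 + ε) * (n / d)) :
    ∃ Q : H →L[𝕜] H,
      (∀ h : H, Q (Q h) = Q h) ∧
      (∀ x y : H, ⟪Q x, y⟫_𝕜 = ⟪x, Q y⟫_𝕜) ∧
      Module.finrank 𝕜 (LinearMap.range (Q : H →ₗ[𝕜] H)) = n ∧
      (∀ k, ‖Q (u k)‖ ^ 2 = (n : ℝ) / d) ∧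
      ∑ k, ‖P (u k) - Q (u k)‖ ^ 2 ≤ 4 * B := by
  have : CompleteSpace H := FiniteDimensional.complete 𝕜 H
  let K : Submodule 𝕜 H := LinearMap.range (P : H →ₗ[𝕜] H)
  have hPK : ∀ h : K, P h = h := by
    rintro ⟨_, x, rfl⟩
    exact hPidem x
  let τ : Fin d → K := fun k => ⟨P (u k), u k, rfl⟩
  have hτin : ∀ j (h : K), ⟪τ j, h⟫_𝕜 = ⟪u j, (h : H)⟫_𝕜 := fun j h => by
    change ⟪P (u j), (h : H)⟫_𝕜 = _
    rw [hPsa, hPK]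
  have hτ : ∀ h : K, ∑ j, ⟪τ j, h⟫_𝕜 • τ j = h := fun h => by
    apply Subtype.ext
    have e : P (∑ j, ⟪u j, (h : H)⟫_𝕜 • u j) = P h := by rw [u.sum_repr']
    simp only [map_sum, map_smul, hPK] at e
    simpa [hτin, τ] using e
  obtain ⟨ω, hω, hωn, hωB⟩ := hPaulsen K hPrank τ hτ hPnorm
  have : CompleteSpace K := FiniteDimensional.complete 𝕜 K
  let V : K →L[𝕜] H := analysisOp u ω
  have hSV : ∀ h, V.adjoint (V h) = h := adjoint_analysisOp_analysisOp u hω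
  have hSu : ∀ k, V.adjoint (u k) = ω k := adjoint_analysisOp_basis u ω
  refine ⟨V ∘L V.adjoint, fun h => ?_, fun x y => ?_, ?_, fun k => ?_, ?_⟩
  · simp only [ContinuousLinearMap.comp_apply, hSV]
  · simp only [ContinuousLinearMap.comp_apply]
    rw [← ContinuousLinearMap.adjoint_inner_right, ContinuousLinearMap.adjoint_inner_left]
  · have hr : LinearMap.range ((V ∘L V.adjoint : H →L[𝕜] H) : H →ₗ[𝕜] H)
        = LinearMap.range (V : K →ₗ[𝕜] H) := by
      rw [ContinuousLinearMap.toLinearMap_comp]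
      exact LinearMap.range_comp_of_range_eq_top _
        (LinearMap.range_eq_top.2 fun h => ⟨V h, hSV h⟩)
    have hinj : Function.Injective (V : K →ₗ[𝕜] H) := Function.LeftInverse.injective hSV
    rw [hr, LinearMap.finrank_range_of_inj hinj, hPrank]
  · simp only [ContinuousLinearMap.comp_apply, hSu]
    rw [← hωn k]
    exact congrArg (· ^ 2) (norm_analysisOp u hω (ω k))
  · have hHS : ∑ k, ‖(ω k : H) - V (ω k)‖ ^ 2 = ∑ k, ‖τ k - ω k‖ ^ 2 :=
      sum_sq_norm_apply_parseval u hω (fun h => (h : H) - V h) (fun k => τ k - ω k)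
        fun j h => by
          rw [inner_sub_right, inner_sub_left, hτin]
          exact congrArg _ (inner_analysisOp u ω h j)
    calc ∑ k, ‖P (u k) - (V ∘L V.adjoint) (u k)‖ ^ 2
        ≤ ∑ k, 2 * (‖τ k - ω k‖ ^ 2 + ‖(ω k : H) - V (ω k)‖ ^ 2) := by
          refine Finset.sum_le_sum fun k _ => ?_
          have e : P (u k) - (V ∘L V.adjoint) (u k)
              = ((τ k - ω k : K) : H) + ((ω k : H) - V (ω k)) := by
            simp [hSu, τ]
          rw [e]
          exact (pow_le_pow_left₀ (norm_nonneg _) (norm_add_le _ _) 2).trans add_sq_le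
      _ = 4 * ∑ k, ‖τ k - ω k‖ ^ 2 := by
          rw [← Finset.mul_sum, Finset.sum_add_distrib, hHS]
          ring
      _ ≤ 4 * B := by linarith
end

section
/- (Kwok–Lau–Lee–Ramachandran, solution of the Paulsen problem.) There exists a universal constant C > 0 such that: for every d, n ∈ ℕ, every ε ∈ (0,1), and every ε-nearly equal norm Parseval frame {τ_j}_{j=1}^n for ℝ^d, there is an equal norm Parseval frame {ω_j}_{j=1}^n for ℝ^d satisfying ∑_{j=1}^n ‖τ_j − ω_j‖² ≤ C·ε·d^{13/2}. In particular, the bound does not depend on n. -/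
/-!
The constant `C = 6` works, with `d ^ 2` in place of `d ^ (13 / 2)`; the argument follows Hamilton
and Moitra. Frames are written as `n × d` matrices `P` whose rows are the frame vectors, so that the
Parseval condition reads `Pᵀ * P = 1`.

*Radial isotropic position.* Suppose that all cyclic windows of `d` consecutive rows of `P` are
linearly independent. Hadamard's inequality for each window bounds
`capacity P A = (det A)^(2n) / ∏ i, ‖pᵢ A‖^(2d)` from above over invertible `A`. Let `A` almost
maximise it and let `W` be `P * A` with normalised rows. Comparing `A` with `A * S^(-1/2)`, where
`S = (d / n) Wᵀ W`, the AM-GM inequality gives `(det S)^n ≥ 1 - η` (`det_frameMat_pow_ge`). As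
`trace S = d`, this says that `S` is nearly the identity. Since the capacity depends only on
`A * Aᵀ`, one may take `A = U * diagonal a` with `U` orthogonal and `a > 0`.

*Distance.* Let `X` be `P * U` with normalised rows, so that row `i` of `W` is row `i` of
`X * diagonal a`, normalised. Passing from `X` to `W` moves mass towards the coordinates with large
`a`: every superlevel set of `a` gains squared mass in every row. Hence the distance from `X` to `W`
is controlled by the change of the squared column norms only (`sum_dist_le`), and the bound does not
involve `a`.

*Limit.* An arbitrary `P` with nonzero rows is perturbed along the moment curve to make all windows
independent. Letting the perturbation and `η` tend to zero, compactness produces orthogonal `U` and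
`W` with unit rows and `(d / n) Wᵀ W = 1`, with the same distance bound (`exists_isotropic`). When
`P` is an `ε`-nearly equal norm Parseval frame, the squared column norms of `X` are within a total
of `ε n` of `n / d`, and `√(d / n) • W * Uᵀ` is the required frame (`paulsen_matrix`).
-/

open scoped InnerProductSpace Matrix
open Filter Topology

/-! ### Row norms, Hadamard's inequality and AM-GM -/

/-- Squared Euclidean norm of the `i`-th row. -/
def rowSq {m d : ℕ} (P : Matrix (Fin m) (Fin d) ℝ) (i : Fin m) : ℝ := ∑ j, P i j ^ 2

/-- The matrix with every row divided by its Euclidean norm; zero rows stay zero. -/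
noncomputable def rowNormalize {m d : ℕ} (P : Matrix (Fin m) (Fin d) ℝ) :
    Matrix (Fin m) (Fin d) ℝ :=
  Matrix.of fun i j => P i j / √(rowSq P i)

lemma rowSq_nonneg {m d : ℕ} (P : Matrix (Fin m) (Fin d) ℝ) (i : Fin m) : 0 ≤ rowSq P i :=
  Finset.sum_nonneg fun _ _ => sq_nonneg _

lemma rowSq_eq_diag {m d : ℕ} (P : Matrix (Fin m) (Fin d) ℝ) (i : Fin m) :
    rowSq P i = (P * Pᵀ) i i := by
  simp [rowSq, Matrix.mul_apply, sq]

/-- Row norms of `P * A` depend on `A` only through `A * Aᵀ`. -/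
lemma rowSq_mul_congr {m d : ℕ} (P : Matrix (Fin m) (Fin d) ℝ) {A B : Matrix (Fin d) (Fin d) ℝ}
    (h : A * Aᵀ = B * Bᵀ) (i : Fin m) : rowSq (P * A) i = rowSq (P * B) i := by
  rw [rowSq_eq_diag, rowSq_eq_diag, Matrix.transpose_mul, Matrix.transpose_mul, Matrix.mul_assoc,
    Matrix.mul_assoc, ← Matrix.mul_assoc A, ← Matrix.mul_assoc B, h]

lemma rowSq_rowNormalize {m d : ℕ} {P : Matrix (Fin m) (Fin d) ℝ} {i : Fin m}
    (h : 0 < rowSq P i) : rowSq (rowNormalize P) i = 1 := by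
  have : rowSq (rowNormalize P) i = rowSq P i / rowSq P i := by
    simp only [rowSq, rowNormalize, Matrix.of_apply, div_pow]
    rw [← Finset.sum_div]
    congr 1
    exact Real.sq_sqrt (rowSq_nonneg P i)
  rw [this, div_self (ne_of_gt h)]

/-- Hadamard's determinant inequality, from the bound on the volume form. -/
lemma det_sq_le_prod_rowSq {d : ℕ} (B : Matrix (Fin d) (Fin d) ℝ) :
    B.det ^ 2 ≤ ∏ i, rowSq B i := by
  have : Fact (Module.finrank ℝ (EuclideanSpace ℝ (Fin d)) = d) := ⟨by simp⟩
  let b := EuclideanSpace.basisFun (Fin d) ℝ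
  have h := b.toBasis.orientation.abs_volumeForm_apply_le (fun i => WithLp.toLp 2 (B i))
  rw [Orientation.volumeForm_robust _ b rfl, Module.Basis.det_apply] at h
  have h2 : b.toBasis.toMatrix (fun i => WithLp.toLp 2 (B i)) = Bᵀ := by
    ext i j
    simp [b, Module.Basis.toMatrix_apply]
  rw [h2, Matrix.det_transpose] at h
  calc B.det ^ 2 = |B.det| ^ 2 := (sq_abs _).symm
    _ ≤ (∏ i, ‖(WithLp.toLp 2 (B i) : EuclideanSpace ℝ (Fin d))‖) ^ 2 := by gcongr
    _ = ∏ i, rowSq B i := by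
      rw [← Finset.prod_pow]
      refine Finset.prod_congr rfl fun i _ => ?_
      simp [EuclideanSpace.norm_sq_eq, rowSq]

/-- AM-GM for nonnegative numbers of mean one. -/
lemma prod_le_one_of_sum_eq_card {ι : Type*} [Fintype ι] {y : ι → ℝ} (h0 : ∀ i, 0 ≤ y i)
    (hs : ∑ i, y i = Fintype.card ι) : ∏ i, y i ≤ 1 := by
  calc ∏ i, y i ≤ ∏ i, Real.exp (y i - 1) :=
        Finset.prod_le_prod (fun i _ => h0 i) fun i _ => by
          linarith [Real.add_one_le_exp (y i - 1)]
    _ = 1 := by rw [← Real.exp_sum]; simp [hs]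

/-- The equality case of AM-GM for nonnegative numbers of mean one. -/
lemma eq_one_of_one_le_prod {ι : Type*} [Fintype ι] {y : ι → ℝ} (h0 : ∀ i, 0 ≤ y i)
    (hs : ∑ i, y i = Fintype.card ι) (hp : 1 ≤ ∏ i, y i) (i : ι) : y i = 1 := by
  by_contra hi
  have hpos : ∀ i, 0 < y i := fun i => (h0 i).lt_of_ne' fun h => by
    rw [Finset.prod_eq_zero (Finset.mem_univ i) h] at hp; linarith
  have : ∏ i, y i < ∏ i, Real.exp (y i - 1) :=
    Finset.prod_lt_prod (fun i _ => hpos i) (fun i _ => by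
          linarith [Real.add_one_le_exp (y i - 1)]) ⟨i, Finset.mem_univ i, by
          linarith [Real.add_one_lt_exp (sub_ne_zero.2 hi)]⟩
  rw [← Real.exp_sum] at this
  simp [hs] at this
  linarith

lemma eq_one_of_trace_of_det {d : ℕ} {S : Matrix (Fin d) (Fin d) ℝ} (hS : S.PosSemidef)
    (ht : S.trace = d) (hd : 1 ≤ S.det) : S = 1 := by
  have h1 := hS.1.trace_eq_sum_eigenvalues
  have h2 := hS.1.det_eq_prod_eigenvalues
  simp only [RCLike.ofReal_real_eq_id, id] at h1 h2
  have h3 := eq_one_of_one_le_prod (fun i => hS.eigenvalues_nonneg i)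
    (by rw [← h1, ht]; simp) (by rw [← h2]; exact hd)
  have h4 := hS.1.spectral_theorem
  have h5 : Matrix.diagonal (RCLike.ofReal ∘ hS.1.eigenvalues) =
      (1 : Matrix (Fin d) (Fin d) ℝ) := by
    rw [← Matrix.diagonal_one]; congr 1; ext i; simp [h3]
  rw [h5, map_one] at h4
  exact h4

/-- The spectral theorem in the form `M = L * Lᵀ`, where `L` is an orthogonal matrix times a
positive diagonal one. -/
lemma exists_orthogonal_diagonal {d : ℕ} {M : Matrix (Fin d) (Fin d) ℝ} (hM : M.PosDef) :
    ∃ (U : Matrix (Fin d) (Fin d) ℝ) (a : Fin d → ℝ), U * Uᵀ = 1 ∧ (∀ j, 0 < a j) ∧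
      M = U * Matrix.diagonal a * (U * Matrix.diagonal a)ᵀ := by
  refine ⟨hM.1.eigenvectorUnitary, fun j => √(hM.1.eigenvalues j), ?_, fun j => ?_, ?_⟩
  · have := Matrix.mem_unitaryGroup_iff.1 hM.1.eigenvectorUnitary.2
    simpa [Matrix.star_eq_conjTranspose, Matrix.conjTranspose_eq_transpose_of_trivial] using this
  · exact Real.sqrt_pos.2 (hM.eigenvalues_pos j)
  · have h4 := hM.1.spectral_theorem
    rw [Unitary.conjStarAlgAut_apply] at h4
    have h5 : Matrix.diagonal (RCLike.ofReal ∘ hM.1.eigenvalues) =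
      Matrix.diagonal (fun j => √(hM.1.eigenvalues j)) *
        Matrix.diagonal (fun j => √(hM.1.eigenvalues j)) := by
      rw [Matrix.diagonal_mul_diagonal]; congr 1; ext i
      simp [Real.mul_self_sqrt (hM.eigenvalues_pos i).le]
    rw [h5] at h4
    rw [Matrix.transpose_mul, Matrix.diagonal_transpose]
    rw [Matrix.star_eq_conjTranspose, Matrix.conjTranspose_eq_transpose_of_trivial] at h4
    simpa only [Matrix.mul_assoc] using h4

/-! ### Almost maximisers of the capacity -/

/-- The `d` cyclically consecutive rows `s, s + 1, …, s + d - 1` of `P`; addition in `Fin n` is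
modulo `n`. -/
def window {n d : ℕ} [NeZero n] (h : d ≤ n) (P : Matrix (Fin n) (Fin d) ℝ) (s : Fin n) :
    Matrix (Fin d) (Fin d) ℝ :=
  P.submatrix (fun k => s + Fin.castLE h k) id

/-- Every index lies in exactly `d` of the `n` cyclic windows. -/
lemma prod_window {n d : ℕ} [NeZero n] (h : d ≤ n) (g : Fin n → ℝ) :
    ∏ s : Fin n, ∏ k : Fin d, g (s + Fin.castLE h k) = ∏ i, g i ^ d := by
  rw [Finset.prod_comm]
  have : ∀ k : Fin d, ∏ s : Fin n, g (s + Fin.castLE h k) = ∏ i, g i := fun k =>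
    Equiv.prod_comp (Equiv.addRight (Fin.castLE h k)) g
  simp [this, Finset.prod_pow]

lemma window_mul {n d : ℕ} [NeZero n] (h : d ≤ n) (P : Matrix (Fin n) (Fin d) ℝ)
    (A : Matrix (Fin d) (Fin d) ℝ) (s : Fin n) : window h (P * A) s = window h P s * A := by
  ext i j; simp [window, Matrix.mul_apply]

/-- Hadamard's inequality multiplied over all windows; it bounds the capacity from above. -/
lemma det_pow_mul_le {n d : ℕ} [NeZero n] (h : d ≤ n) (P : Matrix (Fin n) (Fin d) ℝ)
    (A : Matrix (Fin d) (Fin d) ℝ) :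
    (A.det ^ 2) ^ n * ∏ s, (window h P s).det ^ 2 ≤ ∏ i, rowSq (P * A) i ^ d := by
  calc (A.det ^ 2) ^ n * ∏ s, (window h P s).det ^ 2
      = ∏ s, (window h (P * A) s).det ^ 2 := by
        simp only [window_mul, Matrix.det_mul, mul_pow, Finset.prod_mul_distrib]
        simp [mul_comm]
    _ ≤ ∏ s, ∏ k, rowSq (window h (P * A) s) k :=
        Finset.prod_le_prod (fun _ _ => sq_nonneg _) fun s _ => det_sq_le_prod_rowSq _
    _ = ∏ s, ∏ k, rowSq (P * A) (s + Fin.castLE h k) := rfl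
    _ = _ := prod_window h (rowSq (P * A))

lemma rowSq_mul_pos {n d : ℕ} [NeZero n] (h : d ≤ n) (hd : 0 < d) {P : Matrix (Fin n) (Fin d) ℝ}
    (hP : ∀ s, (window h P s).det ≠ 0) {A : Matrix (Fin d) (Fin d) ℝ} (hA : A.det ≠ 0)
    (i : Fin n) : 0 < rowSq (P * A) i := by
  refine (rowSq_nonneg _ _).lt_of_ne' fun h0 => ?_
  have h1 : ∀ j, (P * A) i j = 0 := by
    intro j
    have := (Finset.sum_eq_zero_iff_of_nonneg (fun _ _ => sq_nonneg _)).1 h0 j (Finset.mem_univ j)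
    exact pow_eq_zero_iff two_ne_zero |>.1 this
  have h2 : (window h (P * A) i).det = 0 := by
    refine Matrix.det_eq_zero_of_row_eq_zero ⟨0, hd⟩ fun j => ?_
    have : i + Fin.castLE h ⟨0, hd⟩ = i := by
      have : (Fin.castLE h ⟨0, hd⟩ : Fin n) = 0 := by ext; simp
      rw [this, add_zero]
    simp only [window, Matrix.submatrix_apply, id, this, h1]
  rw [window_mul, Matrix.det_mul] at h2
  exact mul_ne_zero (hP i) hA h2

/-- The scale-invariant functional `(det A)^(2n) / ∏ i, ‖pᵢ A‖^(2d)`, where `pᵢ` are the rows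
of `P`. Its critical points are the `A` for which the normalised rows of `P * A` are isotropic. -/
noncomputable def capacity {n d : ℕ} (P : Matrix (Fin n) (Fin d) ℝ)
    (A : Matrix (Fin d) (Fin d) ℝ) : ℝ :=
  (A.det ^ 2) ^ n / ∏ i, rowSq (P * A) i ^ d

lemma capacity_pos {n d : ℕ} [NeZero n] (h : d ≤ n) (hd : 0 < d) {P : Matrix (Fin n) (Fin d) ℝ}
    (hP : ∀ s, (window h P s).det ≠ 0) {A : Matrix (Fin d) (Fin d) ℝ} (hA : A.det ≠ 0) :
    0 < capacity P A :=
  div_pos (by positivity) (Finset.prod_pos fun i _ => pow_pos (rowSq_mul_pos h hd hP hA i) _)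

/-- Almost maximisers of the capacity can be taken of the form `U * diagonal a`, with `U`
orthogonal and `a` positive. -/
lemma exists_nearly_maximal {n d : ℕ} [NeZero n] (h : d ≤ n) (hd : 0 < d)
    {P : Matrix (Fin n) (Fin d) ℝ} (hP : ∀ s, (window h P s).det ≠ 0) {η : ℝ} (hη : 0 < η) :
    ∃ (U : Matrix (Fin d) (Fin d) ℝ) (a : Fin d → ℝ), U * Uᵀ = 1 ∧ (∀ j, 0 < a j) ∧
      ∀ B : Matrix (Fin d) (Fin d) ℝ, B.det ≠ 0 →
        (1 - η) * capacity P B ≤ capacity P (U * Matrix.diagonal a) := by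
  let K : Set ℝ := capacity P '' {A | A.det ≠ 0}
  have hne : K.Nonempty := ⟨_, 1, by simp, rfl⟩
  have hbdd : BddAbove K := by
    refine ⟨1 / ∏ s, (window h P s).det ^ 2, ?_⟩
    rintro _ ⟨A, hA, rfl⟩
    have hpos : 0 < ∏ s, (window h P s).det ^ 2 :=
      Finset.prod_pos fun s _ => by have := hP s; positivity
    have hpos2 : 0 < ∏ i, rowSq (P * A) i ^ d :=
      Finset.prod_pos fun i _ => pow_pos (rowSq_mul_pos h hd hP hA i) _
    rw [capacity, div_le_div_iff₀ hpos2 hpos, one_mul]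
    exact det_pow_mul_le h P A
  have hsup : 0 < sSup K :=
    (capacity_pos h hd hP (A := 1) (by simp)).trans_le (le_csSup hbdd ⟨1, by simp, rfl⟩)
  obtain ⟨_, ⟨A, hA, rfl⟩, hlt⟩ := exists_lt_of_lt_csSup hne
    (show (1 - η) * sSup K < sSup K by nlinarith)
  have hA' : A.det ≠ 0 := hA
  have hM : (A * Aᵀ).PosDef := by
    have := Matrix.PosDef.mul_conjTranspose_self A (Matrix.vecMul_injective_of_isUnit
      ((Matrix.isUnit_iff_isUnit_det _).2 (isUnit_iff_ne_zero.2 hA')))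
    rwa [Matrix.conjTranspose_eq_transpose_of_trivial] at this
  obtain ⟨U, a, hU, ha, hUa⟩ := exists_orthogonal_diagonal hM
  have hcap : capacity P (U * Matrix.diagonal a) = capacity P A := by
    have hdet : (U * Matrix.diagonal a).det ^ 2 = A.det ^ 2 := by
      have := congrArg Matrix.det hUa
      rw [Matrix.det_mul, Matrix.det_mul _ (_)ᵀ, Matrix.det_transpose, Matrix.det_transpose] at this
      rw [sq, sq, this]
    simp only [capacity, hdet, rowSq_mul_congr P hUa]
  refine ⟨U, a, hU, ha, fun B hB => ?_⟩
  rw [hcap]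
  by_cases hη1 : η ≤ 1
  · exact (mul_le_mul_of_nonneg_left (le_csSup hbdd ⟨B, hB, rfl⟩) (by linarith)).trans hlt.le
  · have := capacity_pos h hd hP hB
    have := capacity_pos h hd hP hA'
    nlinarith

/-- The frame operator of the rows of `W`, scaled to have trace `d` when the rows are unit vectors. -/
noncomputable def frameMat {n d : ℕ} (W : Matrix (Fin n) (Fin d) ℝ) : Matrix (Fin d) (Fin d) ℝ :=
  ((d : ℝ) / n) • (Wᵀ * W)

lemma frameMat_posSemidef {n d : ℕ} (W : Matrix (Fin n) (Fin d) ℝ) : (frameMat W).PosSemidef := by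
  have := Matrix.posSemidef_conjTranspose_mul_self W
  rw [Matrix.conjTranspose_eq_transpose_of_trivial] at this
  exact this.smul (by positivity)

lemma trace_frameMat {n d : ℕ} [NeZero n] {W : Matrix (Fin n) (Fin d) ℝ} (h : ∀ i, rowSq W i = 1) :
    (frameMat W).trace = d := by
  have : (Wᵀ * W).trace = n := by
    rw [Matrix.trace_mul_comm, Matrix.trace]
    simp [← rowSq_eq_diag, h]
  rw [frameMat, Matrix.trace_smul, this, smul_eq_mul]
  have : (n : ℝ) ≠ 0 := by exact_mod_cast NeZero.ne n
  field_simp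

lemma rowNormalize_eq {n d : ℕ} (Q : Matrix (Fin n) (Fin d) ℝ) :
    rowNormalize Q = Matrix.diagonal (fun i => (√(rowSq Q i))⁻¹) * Q := by
  ext i j; simp [rowNormalize, Matrix.diagonal_mul, div_eq_inv_mul]

lemma frameMat_posDef {n d : ℕ} [NeZero n] (h : d ≤ n) (hd : 0 < d) {W : Matrix (Fin n) (Fin d) ℝ}
    (hP : (window h W 0).det ≠ 0) : (frameMat W).PosDef := by
  have hn : (0 : ℝ) < n := by exact_mod_cast NeZero.pos n
  have hd' : (0 : ℝ) < d := by exact_mod_cast hd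
  have key : (Wᴴ * W).PosDef := by
    refine Matrix.PosDef.conjTranspose_mul_self W fun x y hxy => ?_
    have h1 : window h W 0 *ᵥ x = window h W 0 *ᵥ y := by
      ext k
      exact congrFun hxy (0 + Fin.castLE h k)
    exact Matrix.mulVec_injective_of_isUnit
      ((Matrix.isUnit_iff_isUnit_det _).2 (isUnit_iff_ne_zero.2 hP)) h1
  rw [Matrix.conjTranspose_eq_transpose_of_trivial] at key
  exact key.smul (by positivity)

/-- At an almost maximiser `A` of the capacity, the frame matrix of the normalised rows of `P * A`
has determinant close to one. -/
lemma det_frameMat_pow_ge {n d : ℕ} [NeZero n] (h : d ≤ n) (hd : 0 < d)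
    {P : Matrix (Fin n) (Fin d) ℝ} (hP : ∀ s, (window h P s).det ≠ 0) {η : ℝ}
    {A : Matrix (Fin d) (Fin d) ℝ} (hA : A.det ≠ 0)
    (hmax : ∀ B : Matrix (Fin d) (Fin d) ℝ, B.det ≠ 0 →
        (1 - η) * capacity P B ≤ capacity P A) :
    1 - η ≤ (frameMat (rowNormalize (P * A))).det ^ n := by
  have hn : (n : ℝ) ≠ 0 := by exact_mod_cast NeZero.ne n
  have hd' : (d : ℝ) ≠ 0 := by exact_mod_cast hd.ne'
  set W := rowNormalize (P * A) with hW
  have hq := rowSq_mul_pos h hd hP hA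
  have hSdef : (frameMat W).PosDef := by
    refine frameMat_posDef h hd ?_
    have : window h W 0 = Matrix.diagonal (fun k : Fin d => (√(rowSq (P * A) (0 + Fin.castLE h k)))⁻¹)
        * window h (P * A) 0 := by
      ext i j; simp [hW, window, rowNormalize, Matrix.diagonal_mul, div_eq_inv_mul]
    rw [this, Matrix.det_mul, Matrix.det_diagonal, window_mul, Matrix.det_mul]
    refine mul_ne_zero (Finset.prod_ne_zero_iff.2 fun k _ => ?_) (mul_ne_zero (hP 0) hA)
    exact inv_ne_zero (Real.sqrt_pos.2 (hq _)).ne'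
  have hdet := hSdef.det_pos
  obtain ⟨L, hVb⟩ : ∃ L : Matrix (Fin d) (Fin d) ℝ, frameMat W = L * Lᵀ := by
    obtain ⟨V, b, -, -, hVb⟩ := exists_orthogonal_diagonal hSdef
    exact ⟨_, hVb⟩
  have hLdet : L.det ^ 2 = (frameMat W).det := by
    rw [hVb, Matrix.det_mul, Matrix.det_transpose, sq]
  have hL0 : L.det ≠ 0 := by
    intro h0; rw [h0] at hLdet; simp at hLdet; linarith
  have hLu : IsUnit L.det := isUnit_iff_ne_zero.2 hL0
  -- `T * Tᵀ` is the inverse of the frame matrix, so `A * T` makes the rows isotropic before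
  -- renormalisation; it is the competitor of `A`.
  set T := (L⁻¹)ᵀ with hT
  have hTdet : T.det ^ 2 = ((frameMat W).det)⁻¹ := by
    rw [hT, Matrix.det_transpose, Matrix.det_nonsing_inv, Ring.inverse_eq_inv', inv_pow, hLdet]
  have hT0 : T.det ≠ 0 := by
    intro h0; rw [h0] at hTdet; simp at hTdet; exact hdet.ne hTdet
  have hTS : T * Tᵀ * frameMat W = 1 := by
    rw [hVb, hT, Matrix.transpose_transpose, Matrix.mul_assoc, ← Matrix.mul_assoc L⁻¹,
      Matrix.nonsing_inv_mul _ hLu, Matrix.one_mul, ← Matrix.transpose_mul,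
      Matrix.mul_nonsing_inv _ hLu, Matrix.transpose_one]
  have hrow : ∀ i, rowSq (P * (A * T)) i = rowSq (P * A) i * rowSq (W * T) i := by
    intro i
    have : ∀ j, (P * (A * T)) i j = √(rowSq (P * A) i) * (W * T) i j := by
      intro j
      have h0 : √(rowSq (P * A) i) ≠ 0 := (Real.sqrt_pos.2 (hq i)).ne'
      rw [hW, rowNormalize_eq, Matrix.mul_assoc, Matrix.diagonal_mul, ← mul_assoc,
        mul_inv_cancel₀ h0, one_mul, Matrix.mul_assoc]
    have hs : √(rowSq (P * A) i) ^ 2 = rowSq (P * A) i := Real.sq_sqrt (rowSq_nonneg _ _)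
    rw [rowSq]
    simp only [this, mul_pow, hs]
    rw [← Finset.mul_sum, rowSq.eq_1 (W * T)]
  have hsum : ∑ i, rowSq (W * T) i = Fintype.card (Fin n) := by
    have h1 : ∑ i, rowSq (W * T) i = (T * Tᵀ * (Wᵀ * W)).trace := by
      simp only [rowSq_eq_diag]
      change ((W * T) * (W * T)ᵀ).trace = _
      rw [Matrix.transpose_mul, Matrix.mul_assoc, Matrix.trace_mul_comm]
      simp only [Matrix.mul_assoc]
    have h2 : Wᵀ * W = ((n : ℝ) / d) • frameMat W := by
      rw [frameMat, smul_smul]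
      rw [show (n : ℝ) / d * (d / n) = 1 by field_simp, one_smul]
    rw [h1, h2, Matrix.mul_smul, hTS, Matrix.trace_smul]
    simp; field_simp
  have hprod := prod_le_one_of_sum_eq_card (fun i => rowSq_nonneg (W * T) i) hsum
  have hm := hmax (A * T) (by rw [Matrix.det_mul]; exact mul_ne_zero hA hT0)
  have hposP : 0 < ∏ i, rowSq (W * T) i := by
    refine Finset.prod_pos fun i _ => ?_
    have h1 := rowSq_mul_pos h hd hP (A := A * T)
      (by rw [Matrix.det_mul]; exact mul_ne_zero hA hT0) i
    rw [hrow] at h1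
    exact pos_of_mul_pos_right h1 (hq i).le
  have hcap : capacity P (A * T) =
      capacity P A / ((frameMat W).det ^ n * (∏ i, rowSq (W * T) i) ^ d) := by
    simp only [capacity, hrow, mul_pow, Finset.prod_mul_distrib, Matrix.det_mul, hTdet,
      Finset.prod_pow, inv_pow]
    field_simp
  have hcA := capacity_pos h hd hP hA
  rw [hcap, mul_div_assoc', div_le_iff₀ (by positivity)] at hm
  have h3 : 1 - η ≤ (frameMat W).det ^ n * (∏ i, rowSq (W * T) i) ^ d :=
    le_of_mul_le_mul_right (by linarith) hcA
  exact h3.trans (mul_le_of_le_one_right (by positivity) (pow_le_one₀ hposP.le hprod))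

/-! ### Distance moved by a diagonal rescaling -/

section OneVector

variable {d : ℕ} {x w a : Fin d → ℝ} {c : ℝ}

lemma sq_sub_sq_of_scaling (hw : ∀ j, w j = a j * x j / c) (j : Fin d) :
    w j ^ 2 - x j ^ 2 = ((a j / c) ^ 2 - 1) * x j ^ 2 := by
  rw [hw, mul_div_right_comm]; ring

/-- Multiplying coordinate `j` by `a j` and renormalising moves mass to the superlevel sets of `a`. -/
lemma superlevel_sum_nonneg (hc : 0 < c) (ha : ∀ j, 0 < a j) (hw : ∀ j, w j = a j * x j / c)
    (hsum : ∑ j, (w j ^ 2 - x j ^ 2) = 0) (l : Fin d) :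
    0 ≤ ∑ j with a l ≤ a j, (w j ^ 2 - x j ^ 2) := by
  rcases le_or_gt c (a l) with h | h
  · refine Finset.sum_nonneg fun j hj => ?_
    rw [sq_sub_sq_of_scaling hw]
    have : 1 ≤ a j / c := (one_le_div hc).2 (h.trans (Finset.mem_filter.1 hj).2)
    exact mul_nonneg (by nlinarith) (sq_nonneg _)
  · rw [← Finset.sum_filter_add_sum_filter_not Finset.univ (fun j => a l ≤ a j)] at hsum
    have : ∑ j with ¬ a l ≤ a j, (w j ^ 2 - x j ^ 2) ≤ 0 := by
      refine Finset.sum_nonpos fun j hj => ?_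
      rw [sq_sub_sq_of_scaling hw]
      have h1 : a j / c ≤ 1 :=
        (div_le_one hc).2 ((not_le.1 (Finset.mem_filter.1 hj).2).le.trans h.le)
      have h2 : 0 < a j / c := div_pos (ha j) hc
      exact mul_nonpos_of_nonpos_of_nonneg (by nlinarith) (sq_nonneg _)
    linarith

/-- The coordinates that gain mass are those with `c < a j`. They form one of the superlevel sets
of `a`, and they carry half of the total variation of the squared coordinates. -/
lemma sum_sq_sub_le (hc : 0 < c) (ha : ∀ j, 0 < a j) (hw : ∀ j, w j = a j * x j / c)
    (hsum : ∑ j, (w j ^ 2 - x j ^ 2) = 0) :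
    ∑ j, (w j - x j) ^ 2 ≤ 2 * ∑ l, ∑ j with a l ≤ a j, (w j ^ 2 - x j ^ 2) := by
  have hnn := superlevel_sum_nonneg hc ha hw hsum
  have h1 : ∑ j, (w j - x j) ^ 2 ≤ 2 * ∑ j with c < a j, (w j ^ 2 - x j ^ 2) := by
    have hsplit := Finset.sum_filter_add_sum_filter_not Finset.univ (fun j => c < a j)
      (fun j => w j ^ 2 - x j ^ 2)
    have hsplit2 := Finset.sum_filter_add_sum_filter_not Finset.univ (fun j => c < a j)
      (fun j => (w j - x j) ^ 2)
    have hr : ∀ j, (w j - x j) ^ 2 = (a j / c - 1) ^ 2 * x j ^ 2 := fun j => by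
      rw [hw, mul_div_right_comm]; ring
    have h2 : ∑ j with c < a j, (w j - x j) ^ 2 ≤ ∑ j with c < a j, (w j ^ 2 - x j ^ 2) := by
      refine Finset.sum_le_sum fun j hj => ?_
      rw [sq_sub_sq_of_scaling hw, hr]
      have : 1 < a j / c := (one_lt_div hc).2 (Finset.mem_filter.1 hj).2
      exact mul_le_mul_of_nonneg_right (by nlinarith) (sq_nonneg _)
    have h3 : ∑ j with ¬ c < a j, (w j - x j) ^ 2 ≤
        ∑ j with ¬ c < a j, -(w j ^ 2 - x j ^ 2) := by
      refine Finset.sum_le_sum fun j hj => ?_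
      rw [sq_sub_sq_of_scaling hw, hr, ← neg_mul]
      have h4 : a j / c ≤ 1 := (div_le_one hc).2 (not_lt.1 (Finset.mem_filter.1 hj).2)
      have h5 : 0 < a j / c := div_pos (ha j) hc
      exact mul_le_mul_of_nonneg_right (by nlinarith) (sq_nonneg _)
    rw [Finset.sum_neg_distrib] at h3
    linarith
  refine h1.trans (mul_le_mul_of_nonneg_left ?_ zero_le_two)
  rcases (Finset.univ.filter fun j => c < a j).eq_empty_or_nonempty with he | hne
  · rw [he, Finset.sum_empty]
    exact Finset.sum_nonneg fun l _ => hnn l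
  · obtain ⟨l, hl, hmin⟩ := Finset.exists_min_image _ a hne
    have : (Finset.univ.filter fun j => c < a j) = Finset.univ.filter fun j => a l ≤ a j := by
      ext j
      simp only [Finset.mem_filter, Finset.mem_univ, true_and] at hl hmin ⊢
      exact ⟨fun h => hmin j h, fun h => hl.trans_le h⟩
    rw [this]
    exact Finset.single_le_sum (f := fun l => ∑ j with a l ≤ a j, (w j ^ 2 - x j ^ 2))
      (fun l _ => hnn l) (Finset.mem_univ l)

end OneVector

/-- Rescaling the columns by `a` and renormalising the rows moves the rows, in total, by no more
than `2 d` times the change of the squared column norms. -/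
lemma sum_dist_le {n d : ℕ} (Q : Matrix (Fin n) (Fin d) ℝ) {a : Fin d → ℝ} (ha : ∀ j, 0 < a j)
    (hQ : ∀ i, 0 < rowSq Q i) (hQa : ∀ i, 0 < rowSq (Q * Matrix.diagonal a) i) :
    ∑ i, ∑ j, (rowNormalize (Q * Matrix.diagonal a) i j - rowNormalize Q i j) ^ 2 ≤
      2 * d * ∑ j, |∑ i, rowNormalize (Q * Matrix.diagonal a) i j ^ 2
        - ∑ i, rowNormalize Q i j ^ 2| := by
  set W := rowNormalize (Q * Matrix.diagonal a) with hW
  set X := rowNormalize Q with hX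
  have hrow : ∀ i, ∑ j, (W i j - X i j) ^ 2 ≤
      2 * ∑ l, ∑ j with a l ≤ a j, (W i j ^ 2 - X i j ^ 2) := by
    intro i
    have hs1 := Real.sqrt_pos.2 (hQ i)
    have hs2 := Real.sqrt_pos.2 (hQa i)
    refine sum_sq_sub_le (c := √(rowSq (Q * Matrix.diagonal a) i) / √(rowSq Q i))
      (div_pos hs2 hs1) ha (fun j => ?_) ?_
    · simp only [hW, hX, rowNormalize, Matrix.of_apply, Matrix.mul_diagonal]
      field_simp
    · rw [Finset.sum_sub_distrib, sub_eq_zero]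
      exact (rowSq_rowNormalize (hQa i)).trans (rowSq_rowNormalize (hQ i)).symm
  calc ∑ i, ∑ j, (W i j - X i j) ^ 2
      ≤ ∑ i, 2 * ∑ l, ∑ j with a l ≤ a j, (W i j ^ 2 - X i j ^ 2) :=
        Finset.sum_le_sum fun i _ => hrow i
    _ = 2 * ∑ l, ∑ j with a l ≤ a j, (∑ i, W i j ^ 2 - ∑ i, X i j ^ 2) := by
        rw [← Finset.mul_sum, Finset.sum_comm]
        congr 1
        refine Finset.sum_congr rfl fun l _ => ?_
        rw [Finset.sum_comm]
        simp only [Finset.sum_sub_distrib]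
    _ ≤ 2 * ∑ _l : Fin d, ∑ j, |∑ i, W i j ^ 2 - ∑ i, X i j ^ 2| := by
        gcongr with l
        calc _ ≤ ∑ j with a l ≤ a j, |∑ i, W i j ^ 2 - ∑ i, X i j ^ 2| :=
              Finset.sum_le_sum fun j _ => le_abs_self _
          _ ≤ _ := Finset.sum_le_sum_of_subset_of_nonneg (Finset.filter_subset _ _)
              fun _ _ _ => abs_nonneg _
    _ = _ := by simp [mul_assoc]

/-! ### Perturbation and passage to the limit -/

/-- Small perturbations in the direction of points on the moment curve make every window
independent: the determinant is a polynomial in `t` with a Vandermonde determinant as its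
coefficient of degree `d`. -/
lemma eventually_window_det_ne_zero {n d : ℕ} [NeZero n] (h : d ≤ n)
    (P : Matrix (Fin n) (Fin d) ℝ) :
    ∀ᶠ t in 𝓝[≠] (0 : ℝ), ∀ s,
      (window h (P + t • Matrix.of fun (i : Fin n) (j : Fin d) => ((i : ℕ) : ℝ) ^ (j : ℕ)) s).det
        ≠ 0 := by
  set V : Matrix (Fin n) (Fin d) ℝ := Matrix.of fun i j => ((i : ℕ) : ℝ) ^ (j : ℕ) with hV
  rw [eventually_all]
  intro s
  have hVs : (window h V s).det ≠ 0 := by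
    have : window h V s = Matrix.vandermonde
        (fun k : Fin d => (((s + Fin.castLE h k : Fin n) : ℕ) : ℝ)) := by
      ext k j; simp [window, hV, Matrix.vandermonde_apply]
    rw [this, Matrix.det_vandermonde_ne_zero_iff]
    intro k k' hk
    exact Fin.castLE_injective h (add_left_cancel (Fin.ext (Nat.cast_injective hk)))
  let q : Polynomial ℝ := ((Polynomial.X : Polynomial ℝ) • (window h V s).map Polynomial.C
    + (window h P s).map Polynomial.C).det
  have hq : q ≠ 0 := by
    intro h0
    apply hVs
    rw [← Polynomial.coeff_det_X_add_C_card (window h V s) (window h P s)]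
    change q.coeff _ = 0
    rw [h0, Polynomial.coeff_zero]
  have heval : ∀ t, q.eval t = (window h (P + t • V) s).det := by
    intro t
    rw [← Polynomial.coe_evalRingHom, RingHom.map_det]
    congr 1
    ext k j
    simp [window]
    ring
  have hfin : {t | q.eval t = 0}.Finite := by
    refine (q.roots.toFinset.finite_toSet).subset fun t ht => ?_
    simp [hq, Polynomial.IsRoot.def]; exact ht
  have hcl : IsClosed ({t | q.eval t = 0} \ {0}) := (hfin.subset Set.sdiff_subset).isClosed
  have hnhds : ({t | q.eval t = 0} \ {0})ᶜ ∈ 𝓝 (0 : ℝ) := hcl.isOpen_compl.mem_nhds (by simp)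
  filter_upwards [mem_nhdsWithin_of_mem_nhds hnhds, self_mem_nhdsWithin] with t ht ht0
  intro hdet
  exact ht ⟨(heval t).trans hdet, ht0⟩

lemma rowSq_mul_orthogonal {m d : ℕ} (P : Matrix (Fin m) (Fin d) ℝ) {U : Matrix (Fin d) (Fin d) ℝ}
    (hU : U * Uᵀ = 1) (i : Fin m) : rowSq (P * U) i = rowSq P i := by
  rw [rowSq_mul_congr P (A := U) (B := 1) (by simpa using hU), Matrix.mul_one]

lemma abs_le_one_of_rowSq {m d : ℕ} {P : Matrix (Fin m) (Fin d) ℝ} {i : Fin m}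
    (h : rowSq P i = 1) (j : Fin d) : P i j ∈ Set.Icc (-1 : ℝ) 1 := by
  rw [Set.mem_Icc, ← abs_le, ← sq_le_one_iff_abs_le_one, ← h]
  exact Finset.single_le_sum (f := fun j => P i j ^ 2) (fun _ _ => sq_nonneg _) (Finset.mem_univ j)

lemma tendsto_entry {m d : ℕ} {F : ℕ → Matrix (Fin m) (Fin d) ℝ} {G : Matrix (Fin m) (Fin d) ℝ}
    (hF : Tendsto F atTop (𝓝 G)) (i : Fin m) (j : Fin d) :
    Tendsto (fun k => F k i j) atTop (𝓝 (G i j)) :=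
  tendsto_pi_nhds.1 (tendsto_pi_nhds.1 hF i) j

lemma tendsto_matrix_mul {m d : ℕ} {F : ℕ → Matrix (Fin m) (Fin d) ℝ}
    {G : Matrix (Fin m) (Fin d) ℝ} {F' : ℕ → Matrix (Fin d) (Fin d) ℝ}
    {G' : Matrix (Fin d) (Fin d) ℝ} (hF : Tendsto F atTop (𝓝 G)) (hF' : Tendsto F' atTop (𝓝 G')) :
    Tendsto (fun k => F k * F' k) atTop (𝓝 (G * G')) := by
  refine tendsto_pi_nhds.2 fun i => tendsto_pi_nhds.2 fun j => ?_
  simp only [Matrix.mul_apply]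
  exact tendsto_finsetSum _ fun l _ => (tendsto_entry hF i l).mul (tendsto_entry hF' l j)

lemma tendsto_rowSq {m d : ℕ} {F : ℕ → Matrix (Fin m) (Fin d) ℝ} {G : Matrix (Fin m) (Fin d) ℝ}
    (hF : Tendsto F atTop (𝓝 G)) (i : Fin m) :
    Tendsto (fun k => rowSq (F k) i) atTop (𝓝 (rowSq G i)) :=
  tendsto_finsetSum _ fun j _ => (tendsto_entry hF i j).pow 2

lemma exists_subseq_tendsto {n d : ℕ} (U : ℕ → Matrix (Fin d) (Fin d) ℝ)
    (W : ℕ → Matrix (Fin n) (Fin d) ℝ) (hU : ∀ k i j, U k i j ∈ Set.Icc (-1 : ℝ) 1)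
    (hW : ∀ k i j, W k i j ∈ Set.Icc (-1 : ℝ) 1) :
    ∃ (U₀ : Matrix (Fin d) (Fin d) ℝ) (W₀ : Matrix (Fin n) (Fin d) ℝ) (φ : ℕ → ℕ),
      StrictMono φ ∧ Tendsto (fun k => U (φ k)) atTop (𝓝 U₀) ∧
        Tendsto (fun k => W (φ k)) atTop (𝓝 W₀) := by
  let box (m : ℕ) : Set (Fin m → Fin d → ℝ) :=
    Set.univ.pi fun _ => Set.univ.pi fun _ => Set.Icc (-1) 1
  have hbox : ∀ m, IsCompact (box m) := fun m =>
    isCompact_univ_pi fun _ => isCompact_univ_pi fun _ => isCompact_Icc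
  -- Pairs are taken in the function types, which are known to be first countable.
  let pair : ℕ → (Fin d → Fin d → ℝ) × (Fin n → Fin d → ℝ) := fun k => (U k, W k)
  obtain ⟨⟨U', W'⟩, -, φ, hφ, hlim⟩ := ((hbox d).prod (hbox n)).tendsto_subseq
    (x := pair) fun k => ⟨fun i _ j _ => hU k i j, fun i _ j _ => hW k i j⟩
  exact ⟨U', W', φ, hφ, (continuous_fst.tendsto _).comp hlim, (continuous_snd.tendsto _).comp hlim⟩

/-- Approximate radial isotropic position, together with the bound on the distance moved. -/
lemma exists_approx {n d : ℕ} [NeZero n] (h : d ≤ n) (hd : 0 < d)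
    {P : Matrix (Fin n) (Fin d) ℝ} (hP : ∀ s, (window h P s).det ≠ 0) {η : ℝ} (hη : 0 < η) :
    ∃ (U : Matrix (Fin d) (Fin d) ℝ) (W : Matrix (Fin n) (Fin d) ℝ), U * Uᵀ = 1 ∧
      (∀ i, rowSq W i = 1) ∧ 1 - η ≤ (frameMat W).det ^ n ∧
      ∑ i, ∑ j, (W i j - rowNormalize (P * U) i j) ^ 2 ≤
        2 * d * ∑ j, |∑ i, W i j ^ 2 - ∑ i, rowNormalize (P * U) i j ^ 2| := by
  obtain ⟨U, a, hU, ha, hmax⟩ := exists_nearly_maximal h hd hP hη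
  have hU0 : U.det ≠ 0 := by
    intro h0
    have := congrArg Matrix.det hU
    simp [h0] at this
  have hA : (U * Matrix.diagonal a).det ≠ 0 := by
    rw [Matrix.det_mul, Matrix.det_diagonal]
    exact mul_ne_zero hU0 (Finset.prod_ne_zero_iff.2 fun j _ => (ha j).ne')
  have hq := rowSq_mul_pos h hd hP hA
  refine ⟨U, rowNormalize (P * (U * Matrix.diagonal a)), hU,
    fun i => rowSq_rowNormalize (hq i), det_frameMat_pow_ge h hd hP hA hmax, ?_⟩
  simp only [← Matrix.mul_assoc] at hq ⊢
  exact sum_dist_le (P * U) ha (rowSq_mul_pos h hd hP hU0) hq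

/-- Radial isotropic position in the limit: `W` is exactly isotropic and still satisfies the
distance bound, although `P` need not have independent windows. -/
lemma exists_isotropic {n d : ℕ} [NeZero n] (h : d ≤ n) (hd : 0 < d)
    {P : Matrix (Fin n) (Fin d) ℝ} (hP : ∀ i, 0 < rowSq P i) :
    ∃ (U : Matrix (Fin d) (Fin d) ℝ) (W : Matrix (Fin n) (Fin d) ℝ), U * Uᵀ = 1 ∧
      (∀ i, rowSq W i = 1) ∧ frameMat W = 1 ∧
      ∑ i, ∑ j, (W i j - rowNormalize (P * U) i j) ^ 2 ≤
        2 * d * ∑ j, |∑ i, W i j ^ 2 - ∑ i, rowNormalize (P * U) i j ^ 2| := by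
  obtain ⟨V, hV⟩ : ∃ V : Matrix (Fin n) (Fin d) ℝ,
      ∀ᶠ t in 𝓝[≠] (0 : ℝ), ∀ s, (window h (P + t • V) s).det ≠ 0 :=
    ⟨_, eventually_window_det_ne_zero h P⟩
  obtain ⟨t, ht0, ht⟩ := exists_seq_forall_of_frequently hV.frequently
  have hη : ∀ k : ℕ, (0 : ℝ) < 1 / ((k : ℝ) + 1) := fun k => by positivity
  choose U W hU hW hdet hdist using fun k => exists_approx h hd (ht k) (hη k)
  obtain ⟨U₀, W₀, φ, hφ, hUl, hWl⟩ := exists_subseq_tendsto U W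
    (fun k i j => abs_le_one_of_rowSq (by rw [rowSq_eq_diag, hU k, Matrix.one_apply_eq]) j)
    (fun k i j => abs_le_one_of_rowSq (hW k i) j)
  have htl : Tendsto (fun k => P + t (φ k) • V) atTop (𝓝 P) := by
    have h1 : Tendsto (fun k => t (φ k)) atTop (𝓝 0) :=
      (ht0.mono_right nhdsWithin_le_nhds).comp hφ.tendsto_atTop
    simpa using tendsto_const_nhds.add (h1.smul_const V)
  have hQl : Tendsto (fun k => (P + t (φ k) • V) * U (φ k)) atTop (𝓝 (P * U₀)) :=
    tendsto_matrix_mul htl hUl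
  have hU₀ : U₀ * U₀ᵀ = 1 := by
    have hcont : Continuous fun M : Matrix (Fin d) (Fin d) ℝ => M * Mᵀ := by fun_prop
    have h1 : Tendsto (fun k => U (φ k) * (U (φ k))ᵀ) atTop (𝓝 (U₀ * U₀ᵀ)) :=
      (hcont.tendsto U₀).comp hUl
    simp only [hU] at h1
    exact tendsto_nhds_unique h1 tendsto_const_nhds
  have hW₀ : ∀ i, rowSq W₀ i = 1 := fun i => by
    have h1 := tendsto_rowSq hWl i
    simp only [hW] at h1
    exact tendsto_nhds_unique h1 tendsto_const_nhds
  have hdet₀ : 1 ≤ (frameMat W₀).det ^ n := by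
    have hcont : Continuous fun M : Matrix (Fin n) (Fin d) ℝ => (frameMat M).det ^ n := by
      unfold frameMat
      fun_prop
    have h1 : Tendsto (fun k => (frameMat (W (φ k))).det ^ n) atTop (𝓝 ((frameMat W₀).det ^ n)) :=
      (hcont.tendsto W₀).comp hWl
    have h2 : Tendsto (fun k => 1 - 1 / ((φ k : ℝ) + 1)) atTop (𝓝 (1 - 0)) :=
      tendsto_const_nhds.sub (tendsto_one_div_add_atTop_nhds_zero_nat.comp hφ.tendsto_atTop)
    simpa using le_of_tendsto_of_tendsto' h2 h1 fun k => hdet (φ k)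
  have hXl : ∀ i j, Tendsto (fun k => rowNormalize ((P + t (φ k) • V) * U (φ k)) i j) atTop
      (𝓝 (rowNormalize (P * U₀) i j)) := fun i j => by
    refine (tendsto_entry hQl i j).div ((tendsto_rowSq hQl i).sqrt) (Real.sqrt_pos.2 ?_).ne'
    rw [rowSq_mul_orthogonal P hU₀]
    exact hP i
  refine ⟨U₀, W₀, hU₀, hW₀, ?_, ?_⟩
  · refine eq_one_of_trace_of_det (frameMat_posSemidef W₀) (trace_frameMat hW₀) ?_
    by_contra hlt
    exact absurd hdet₀ (not_le.2 (pow_lt_one₀ (frameMat_posSemidef W₀).det_nonneg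
      (not_le.1 hlt) (NeZero.ne n)))
  · refine le_of_tendsto_of_tendsto' (b := atTop) ?_ ?_ fun k => hdist (φ k)
    · exact tendsto_finsetSum _ fun i _ => tendsto_finsetSum _ fun j _ =>
        ((tendsto_entry hWl i j).sub (hXl i j)).pow 2
    · exact (tendsto_finsetSum _ fun j _ => ((tendsto_finsetSum _ fun i _ =>
        (tendsto_entry hWl i j).pow 2).sub
          (tendsto_finsetSum _ fun i _ => (hXl i j).pow 2)).abs).const_mul _

/-! ### The Paulsen problem -/

/-- For a nearly equal norm Parseval frame with vectors `r i • X i`, the squared column norms of `X`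
are close to `n / d`. -/
lemma sum_abs_le {n d : ℕ} [NeZero n] (hd : 0 < d) {ε : ℝ} {r : Fin n → ℝ}
    {X : Matrix (Fin n) (Fin d) ℝ} (hX : ∀ i, rowSq X i = 1)
    (hr : ∀ i, |r i ^ 2 - d / n| ≤ ε * (d / n)) (hsum : ∀ j, ∑ i, r i ^ 2 * X i j ^ 2 = 1) :
    ∑ j, |(n : ℝ) / d - ∑ i, X i j ^ 2| ≤ ε * n := by
  have hn : (0 : ℝ) < n := by exact_mod_cast NeZero.pos n
  have hd' : (0 : ℝ) < d := by exact_mod_cast hd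
  have h1 : ∀ j, |(n : ℝ) / d - ∑ i, X i j ^ 2| ≤ ε * ∑ i, X i j ^ 2 := by
    intro j
    have h2 : (n : ℝ) / d - ∑ i, X i j ^ 2 = n / d * ∑ i, (r i ^ 2 - d / n) * X i j ^ 2 := by
      simp only [sub_mul, Finset.sum_sub_distrib, hsum, ← Finset.mul_sum]
      field_simp
    rw [h2, abs_mul, abs_of_pos (by positivity)]
    calc (n : ℝ) / d * |∑ i, (r i ^ 2 - d / n) * X i j ^ 2|
        ≤ n / d * ∑ i, ε * (d / n) * X i j ^ 2 := by
          gcongr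
          refine (Finset.abs_sum_le_sum_abs _ _).trans (Finset.sum_le_sum fun i _ => ?_)
          rw [abs_mul, abs_of_nonneg (sq_nonneg (X i j))]
          exact mul_le_mul_of_nonneg_right (hr i) (sq_nonneg _)
      _ = _ := by rw [← Finset.mul_sum]; field_simp
  calc _ ≤ ∑ j, ε * ∑ i, X i j ^ 2 := Finset.sum_le_sum fun j _ => h1 j
    _ = ε * ∑ i, rowSq X i := by rw [← Finset.mul_sum, Finset.sum_comm]; rfl
    _ = ε * n := by simp [hX]

/-- The Paulsen problem for matrices, with the bound `2 ε d + 4 ε d ^ 2`. -/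
lemma paulsen_matrix {n d : ℕ} [NeZero n] (hd : 0 < d) {ε : ℝ} (hε1 : ε < 1)
    {P : Matrix (Fin n) (Fin d) ℝ} (hP : Pᵀ * P = 1)
    (hnorm : ∀ i, |rowSq P i - d / n| ≤ ε * (d / n)) :
    ∃ O : Matrix (Fin n) (Fin d) ℝ, Oᵀ * O = 1 ∧ (∀ i, rowSq O i = (d : ℝ) / n) ∧
      ∑ i, rowSq (P - O) i ≤ 2 * ε * d + 4 * ε * d ^ 2 := by
  have hn : (0 : ℝ) < n := by exact_mod_cast NeZero.pos n
  have hd' : (0 : ℝ) < d := by exact_mod_cast hd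
  have hdn : d ≤ n := by
    have h1 : (Pᵀ * P).rank ≤ n := (Matrix.rank_mul_le_right _ _).trans (Matrix.rank_le_height P)
    rwa [hP, Matrix.rank_one, Fintype.card_fin] at h1
  have hpos : ∀ i, 0 < rowSq P i := fun i => by
    have h1 := (abs_le.1 (hnorm i)).1
    have h2 : 0 < (1 - ε) * ((d : ℝ) / n) := mul_pos (by linarith) (by positivity)
    linarith
  obtain ⟨U, W, hU, hW, hS, hdist⟩ := exists_isotropic hdn hd hpos
  have hU' : Uᵀ * U = 1 := mul_eq_one_comm.1 hU
  set X := rowNormalize (P * U) with hX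
  set r : Fin n → ℝ := fun i => √(rowSq P i) with hr
  set s : ℝ := √((d : ℝ) / n) with hs
  have hs2 : s ^ 2 = (d : ℝ) / n := Real.sq_sqrt (by positivity)
  have hr2 : ∀ i, r i ^ 2 = rowSq P i := fun i => Real.sq_sqrt (rowSq_nonneg P i)
  have hPU : ∀ i j, (P * U) i j = r i * X i j := fun i j => by
    have : √(rowSq P i) ≠ 0 := (Real.sqrt_pos.2 (hpos i)).ne'
    simp only [hX, hr, rowNormalize, Matrix.of_apply, rowSq_mul_orthogonal P hU]
    field_simp
  have hX1 : ∀ i, rowSq X i = 1 := fun i =>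
    rowSq_rowNormalize (by rw [rowSq_mul_orthogonal P hU]; exact hpos i)
  have hXsum : ∀ j, ∑ i, r i ^ 2 * X i j ^ 2 = 1 := fun j => by
    have h1 : (P * U)ᵀ * (P * U) = 1 := by
      rw [Matrix.transpose_mul, Matrix.mul_assoc, ← Matrix.mul_assoc Pᵀ, hP, Matrix.one_mul, hU']
    have h2 := congrFun (congrFun h1 j) j
    rw [Matrix.mul_apply, Matrix.one_apply_eq] at h2
    rw [← h2]
    refine Finset.sum_congr rfl fun i _ => ?_
    rw [Matrix.transpose_apply, hPU]; ring
  have hWsum : ∀ j, ∑ i, W i j ^ 2 = (n : ℝ) / d := fun j => by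
    have h2 := congrFun (congrFun hS j) j
    rw [frameMat, Matrix.smul_apply, Matrix.mul_apply, Matrix.one_apply_eq, smul_eq_mul] at h2
    simp only [Matrix.transpose_apply, ← sq] at h2
    field_simp at h2 ⊢
    linarith
  simp only [hWsum] at hdist
  have habs := sum_abs_le hd hX1 (fun i => by rw [hr2]; exact hnorm i) hXsum
  have hrs : ∀ i, (r i - s) ^ 2 ≤ ε * (d / n) := fun i => by
    have h0 : 0 ≤ r i := Real.sqrt_nonneg _
    have h1 : 0 ≤ s := Real.sqrt_nonneg _
    refine le_trans ?_ (hnorm i)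
    rw [← hr2, ← hs2, sq_sub_sq, abs_mul, ← sq_abs, sq, abs_of_nonneg (add_nonneg h0 h1)]
    refine mul_le_mul_of_nonneg_right (abs_le.2 ⟨?_, ?_⟩) (abs_nonneg _) <;> linarith
  have hW2 : Wᵀ * W = ((n : ℝ) / d) • (1 : Matrix (Fin d) (Fin d) ℝ) := by
    rw [← hS, frameMat, smul_smul, show (n : ℝ) / d * (d / n) = 1 by field_simp, one_smul]
  refine ⟨s • (W * Uᵀ), ?_, fun i => ?_, ?_⟩
  · rw [Matrix.transpose_smul, Matrix.smul_mul, Matrix.mul_smul, smul_smul, ← sq, hs2,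
      Matrix.transpose_mul, Matrix.transpose_transpose, Matrix.mul_assoc, ← Matrix.mul_assoc Wᵀ,
      hW2, Matrix.smul_mul, Matrix.one_mul, Matrix.mul_smul, hU, smul_smul,
      show (d : ℝ) / n * (n / d) = 1 by field_simp, one_smul]
  · have h1 : rowSq (s • (W * Uᵀ)) i = s ^ 2 * rowSq (W * Uᵀ) i := by
      simp only [rowSq, Matrix.smul_apply, smul_eq_mul, mul_pow, Finset.mul_sum]
    rw [h1, rowSq_mul_orthogonal W (by simpa using hU'), hW, hs2, mul_one]
  · have h1 : ∀ i, rowSq (P - s • (W * Uᵀ)) i ≤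
        2 * (ε * (d / n)) + 2 * (d / n) * ∑ j, (W i j - X i j) ^ 2 := by
      intro i
      have h2 : (P - s • (W * Uᵀ)) * U = P * U - s • W := by
        rw [Matrix.sub_mul, Matrix.smul_mul, Matrix.mul_assoc, hU', Matrix.mul_one]
      rw [← rowSq_mul_orthogonal _ hU, h2]
      calc rowSq (P * U - s • W) i = ∑ j, (r i * X i j - s * W i j) ^ 2 := by
            simp only [rowSq, Matrix.sub_apply, Matrix.smul_apply, smul_eq_mul, hPU]
        _ ≤ ∑ j, (2 * (r i - s) ^ 2 * X i j ^ 2 + 2 * s ^ 2 * (W i j - X i j) ^ 2) := by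
            refine Finset.sum_le_sum fun j _ => ?_
            nlinarith [sq_nonneg ((r i - s) * X i j + s * (W i j - X i j))]
        _ = 2 * (r i - s) ^ 2 * rowSq X i + 2 * s ^ 2 * ∑ j, (W i j - X i j) ^ 2 := by
            rw [Finset.sum_add_distrib, ← Finset.mul_sum, ← Finset.mul_sum]; rfl
        _ ≤ _ := by
            rw [hX1, hs2, mul_one]
            linarith [hrs i]
    calc ∑ i, rowSq (P - s • (W * Uᵀ)) i
        ≤ ∑ i, (2 * (ε * (d / n)) + 2 * (d / n) * ∑ j, (W i j - X i j) ^ 2) :=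
          Finset.sum_le_sum fun i _ => h1 i
      _ = 2 * ε * d + 2 * (d / n) * ∑ i, ∑ j, (W i j - X i j) ^ 2 := by
          rw [Finset.sum_add_distrib, Finset.sum_const, ← Finset.mul_sum, Finset.card_univ,
            Fintype.card_fin, nsmul_eq_mul]
          congr 1
          field_simp
      _ ≤ 2 * ε * d + 2 * (d / n) * (2 * d * (ε * n)) := by
          have := hdist.trans (mul_le_mul_of_nonneg_left habs (by positivity))
          gcongr
      _ = _ := by field_simp; ring

lemma parseval_iff {n d : ℕ} (τ : Fin n → EuclideanSpace ℝ (Fin d)) :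
    (∀ h : EuclideanSpace ℝ (Fin d), ∑ j, ⟪τ j, h⟫_ℝ • τ j = h) ↔
      (Matrix.of fun i k => τ i k)ᵀ * (Matrix.of fun i k => τ i k) = 1 := by
  set P : Matrix (Fin n) (Fin d) ℝ := Matrix.of fun i k => τ i k with hP
  have key : ∀ h : EuclideanSpace ℝ (Fin d),
      ∑ j, ⟪τ j, h⟫_ℝ • τ j = WithLp.toLp 2 ((Pᵀ * P) *ᵥ h.ofLp) := by
    intro h
    ext k
    rw [← Matrix.mulVec_mulVec]
    simp [Matrix.mulVec, dotProduct, hP, PiLp.inner_apply, mul_comm]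
  constructor
  · intro H
    ext k l
    have h1 := congrArg (fun v : EuclideanSpace ℝ (Fin d) => v k)
      ((key (EuclideanSpace.single l 1)).symm.trans (H _))
    simpa [Matrix.one_apply, Pi.single_apply] using h1
  · intro H h
    rw [key, H]; simp

/-- Kwok–Lau–Lee–Ramachandran, solution of the Paulsen problem: there is a universal
constant `C > 0` such that every `ε`-nearly equal norm Parseval frame of `n` vectors for
`ℝ^d` admits an equal norm Parseval frame within squared distance `C ε d^{13/2}`;
in particular the bound does not depend on `n`. -/
theorem kwok_lau_lee_ramachandran :
    ∃ C : ℝ, 0 < C ∧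
      ∀ (d n : ℕ) (ε : ℝ), 0 < ε → ε < 1 →
        ∀ τ : Fin n → EuclideanSpace ℝ (Fin d),
          (∀ h : EuclideanSpace ℝ (Fin d), ∑ j, ⟪τ j, h⟫_ℝ • τ j = h) →
          (∀ j, (1 - ε) * (d / n) ≤ ‖τ j‖ ^ 2 ∧ ‖τ j‖ ^ 2 ≤ (1 + ε) * (d / n)) →
          ∃ ω : Fin n → EuclideanSpace ℝ (Fin d),
            (∀ h : EuclideanSpace ℝ (Fin d), ∑ j, ⟪ω j, h⟫_ℝ • ω j = h) ∧
            (∀ j, ‖ω j‖ ^ 2 = (d : ℝ) / n) ∧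
            ∑ j, ‖τ j - ω j‖ ^ 2 ≤ C * ε * (d : ℝ) ^ ((13 : ℝ) / 2) := by
  refine ⟨6, by norm_num, fun d n ε hε hε1 τ hτ hnorm => ?_⟩
  rcases Nat.eq_zero_or_pos d with rfl | hd
  · refine ⟨τ, hτ, fun j => ?_, ?_⟩
    · have : τ j = 0 := Subsingleton.elim _ _
      simp [this]
    · simp
  have hn : n ≠ 0 := by
    rintro rfl
    have h1 := hτ (EuclideanSpace.single ⟨0, hd⟩ 1)
    rw [Finset.univ_eq_empty, Finset.sum_empty] at h1
    have h2 := congrArg norm h1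
    simp at h2
  have : NeZero n := ⟨hn⟩
  obtain ⟨O, hO1, hO2, hO3⟩ := paulsen_matrix (P := Matrix.of fun i k => τ i k) hd hε1
    ((parseval_iff τ).1 hτ) fun i => by
      have h1 : rowSq (Matrix.of fun i k => τ i k) i = ‖τ i‖ ^ 2 := by
        simp [rowSq, EuclideanSpace.norm_sq_eq]
      rw [h1, abs_le]
      constructor <;> linarith [(hnorm i).1, (hnorm i).2]
  refine ⟨fun i => WithLp.toLp 2 (O i), (parseval_iff _).2 hO1, fun i => ?_, ?_⟩
  · rw [← hO2 i]
    simp [rowSq, EuclideanSpace.norm_sq_eq]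
  · have h1 : ∑ j, ‖τ j - WithLp.toLp 2 (O j)‖ ^ 2 =
        ∑ i, rowSq ((Matrix.of fun i k => τ i k) - O) i := by
      simp [rowSq, EuclideanSpace.norm_sq_eq]
    have hd1 : (1 : ℝ) ≤ d := by exact_mod_cast hd
    have h2 : (d : ℝ) ^ 2 ≤ (d : ℝ) ^ ((13 : ℝ) / 2) := by
      rw [← Real.rpow_natCast]
      exact Real.rpow_le_rpow_of_exponent_le hd1 (by norm_num)
    have h3 : (d : ℝ) ≤ d ^ 2 := by nlinarith
    rw [h1]
    refine hO3.trans ?_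
    nlinarith [mul_le_mul_of_nonneg_left h2 hε.le, mul_le_mul_of_nonneg_left h3 hε.le]
end

section
/- (Hamilton–Moitra, improved solution of the Paulsen problem.) For every d, n ∈ ℕ, every ε ∈ (0,1), and every ε-nearly equal norm Parseval frame {τ_j}_{j=1}^n for ℝ^d, there is an equal norm Parseval frame {ω_j}_{j=1}^n for ℝ^d satisfying ∑_{j=1}^n ‖τ_j − ω_j‖² ≤ 20·ε·d². -/
/-!
The frame is encoded as an `n × d` matrix whose rows are its vectors, so that being Parseval means
`Tᵀ * T = 1`. Let `X` be the matrix of normalized vectors `x_j = τ_j / ‖τ_j‖`. The frame sought is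
`ω_j = √(d/n) u_j`, where the `u_j` are unit vectors obtained from the `x_j` by putting them, up to
a limit, in radial isotropic position: `u_j = A x_j / ‖A x_j‖` with `A` positive definite and
`(d/n) ∑ u_j u_jᵀ = 1`.

*Existence.* With `P = A²` and `g_j = ⟨x_j, P x_j⟩`, consider `det P ^ n / ∏ g_j ^ d`. If the
vectors `x_j`, with `j` in any cyclic interval of length `d`, are linearly independent, Hadamard's
inequality applied to these `n` intervals bounds this quantity from above (`det_pow_le`). Replacing
`P` by the inverse of `N = (d/n) ∑ x_j x_jᵀ / g_j` multiplies it by at least `(det P det N)⁻ⁿ`, by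
the AM-GM inequality (`prod_quad_le`). At a near-maximizer `P` the determinant
`det P det N = det ((d/n) ∑ u_j u_jᵀ)` is therefore close to `1` (`exists_near_opt`). This matrix
has trace `d`, and the only positive semidefinite matrix of trace `d` and determinant `1` is the
identity. A perturbation of `X` along the moment curve achieves the independence condition
(`exists_generic_near`), and a compactness argument removes both approximations
(`exists_isotropic`).

*Distance.* In an eigenbasis of `P` with decreasing eigenvalues `λ_0 ≥ λ_1 ≥ …`, passing from
`x_j` to `u_j` multiplies the square of the `i`-th coordinate by `λ_i / g_j`, hence enlarges it for
`i` below some threshold and shrinks it above, while the sum of the squares stays `1`. This gives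
`‖u_j - x_j‖² ≤ 2 ∑ i (x_{j,i}² - u_{j,i}²)` (`row_bound`). Summed over `j`, the right-hand side is
controlled by the column sums of squares, which are `n/d` for `u` and at most `(n/d)/(1-ε)` for `x`.
For `ε ≥ 1/5` the trivial bound `4 d` on the squared distance is enough.
-/

open scoped InnerProductSpace
namespace Paulsen
open Matrix

/-! ### AM-GM and Hadamard inequalities -/

lemma prod_le_one_of_sum_eq_card {ι : Type*} [Fintype ι] (f : ι → ℝ) (hf : ∀ i, 0 ≤ f i)
    (hs : ∑ i, f i = Fintype.card ι) : ∏ i, f i ≤ 1 := by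
  calc ∏ i, f i ≤ ∏ i, Real.exp (f i - 1) :=
        Finset.prod_le_prod (fun i _ => hf i)
          (fun i _ => by have := Real.add_one_le_exp (f i - 1); linarith)
    _ = 1 := by
        rw [← Real.exp_sum, Finset.sum_sub_distrib, hs]; simp

/-- Equality case of the AM-GM inequality for numbers of mean `1`. -/
lemma eq_one_of_prod_ge_one {ι : Type*} [Fintype ι] (f : ι → ℝ) (hf : ∀ i, 0 ≤ f i)
    (hs : ∑ i, f i = Fintype.card ι) (hp : 1 ≤ ∏ i, f i) (i : ι) : f i = 1 := by
  by_contra hne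
  have hpos : ∀ i, 0 < f i := fun k => lt_of_le_of_ne (hf k) fun h0 => by
    rw [Finset.prod_eq_zero (Finset.mem_univ k) h0.symm] at hp
    linarith
  have : ∏ i, f i < ∏ i, Real.exp (f i - 1) :=
    Finset.prod_lt_prod (fun i _ => hpos i)
      (fun i _ => by have := Real.add_one_le_exp (f i - 1); linarith)
      ⟨i, Finset.mem_univ _, by
        have := Real.add_one_lt_exp (x := f i - 1) (sub_ne_zero.2 hne); linarith⟩
  rw [← Real.exp_sum, Finset.sum_sub_distrib, hs] at this
  simp at this
  linarith

lemma det_le_one_of_trace {d : ℕ} {M : Matrix (Fin d) (Fin d) ℝ} (hM : M.PosSemidef)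
    (ht : M.trace = d) : M.det ≤ 1 := by
  rw [hM.1.det_eq_prod_eigenvalues]
  refine prod_le_one_of_sum_eq_card _ (fun i => hM.eigenvalues_nonneg i) ?_
  have := hM.1.trace_eq_sum_eigenvalues
  simp_all

lemma eq_one_of_trace_of_det {d : ℕ} {M : Matrix (Fin d) (Fin d) ℝ} (hM : M.PosSemidef)
    (ht : M.trace = d) (hdet : 1 ≤ M.det) : M = 1 := by
  rw [hM.1.det_eq_prod_eigenvalues] at hdet
  have hs := hM.1.trace_eq_sum_eigenvalues
  have h1 := eq_one_of_prod_ge_one hM.1.eigenvalues (fun i => hM.eigenvalues_nonneg i)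
    (by simp_all) hdet
  have h := hM.1.spectral_theorem
  have h2 : (RCLike.ofReal ∘ hM.1.eigenvalues : Fin d → ℝ) = 1 := by
    ext i; simp [h1 i]
  rw [h2] at h
  rw [h]
  simp

/-- Hadamard's inequality, obtained from AM-GM after rescaling the diagonal to `1`. -/
lemma det_le_prod_diag {d : ℕ} {G : Matrix (Fin d) (Fin d) ℝ} (hG : G.PosSemidef)
    (hpos : ∀ k, 0 < G k k) : G.det ≤ ∏ k, G k k := by
  set D : Matrix (Fin d) (Fin d) ℝ := diagonal fun k => (√(G k k))⁻¹ with hD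
  have h1 : (D * G * Dᴴ).PosSemidef := hG.mul_mul_conjTranspose_same D
  have hDt : Dᴴ = D := by simp [hD]
  rw [hDt] at h1
  have h2 : (D * G * D).trace = d := by
    have : ∀ k, (D * G * D) k k = 1 := by
      intro k
      have := Real.mul_self_sqrt (hpos k).le
      have h0 := (Real.sqrt_pos.2 (hpos k)).ne'
      rw [hD, mul_diagonal, diagonal_mul]
      field_simp
      nlinarith
    simp [trace, this]
  have h3 := det_le_one_of_trace h1 h2
  have h4 : ∏ k, G k k = (∏ k, √(G k k)) ^ 2 := by
    rw [← Finset.prod_pow]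
    exact Finset.prod_congr rfl fun k _ => (Real.sq_sqrt (hpos k).le).symm
  have h5 : 0 < ∏ k, √(G k k) := Finset.prod_pos fun k _ => Real.sqrt_pos.2 (hpos k)
  rw [det_mul, det_mul, hD, det_diagonal, Finset.prod_inv_distrib] at h3
  rw [h4]
  field_simp at h3
  exact h3

lemma exists_sorted_diagonalization {d : ℕ} {P : Matrix (Fin d) (Fin d) ℝ} (hP : P.PosDef) :
    ∃ (B : Matrix (Fin d) (Fin d) ℝ) (l : Fin d → ℝ), Bᵀ * B = 1 ∧ (∀ i, 0 < l i) ∧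
      Antitone l ∧ P = B * diagonal l * Bᵀ := by
  set V : Matrix (Fin d) (Fin d) ℝ := (hP.1.eigenvectorUnitary).1 with hV
  set e := hP.1.eigenvalues with he
  have hVV : Vᵀ * V = 1 := by
    have := Unitary.coe_star_mul_self hP.1.eigenvectorUnitary
    simpa [star_eq_conjTranspose, conjTranspose_eq_transpose_of_trivial] using this
  have hdec : P = V * diagonal e * Vᵀ := by
    have := hP.1.spectral_theorem
    rw [Unitary.conjStarAlgAut_apply] at this
    simpa [star_eq_conjTranspose, conjTranspose_eq_transpose_of_trivial] using this
  let σ := Tuple.sort (fun i => -e i)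
  have hσ : Monotone ((fun i => -e i) ∘ σ) := Tuple.monotone_sort _
  refine ⟨V.submatrix id σ, e ∘ σ, ?_, fun i => hP.eigenvalues_pos _, ?_, ?_⟩
  · ext i j
    have := congrFun (congrFun hVV (σ i)) (σ j)
    simpa [mul_apply, one_apply] using this
  · intro a b hab
    have := hσ hab
    simpa using this
  · rw [hdec]
    ext a b
    rw [mul_apply, mul_apply]
    simp only [mul_diagonal, transpose_apply, submatrix_apply, id, Function.comp]
    exact (Equiv.sum_comp σ (fun k => V a k * e k * V b k)).symm

/-! ### Near-optimal scalings -/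

/-- The value `⟨x_j, P x_j⟩` of the quadratic form `P` at the `j`-th row `x_j` of `X`. -/
def quad {d n : ℕ} (X : Matrix (Fin n) (Fin d) ℝ) (P : Matrix (Fin d) (Fin d) ℝ) (j : Fin n) : ℝ :=
  (X * P * Xᵀ) j j

/-- The matrix `(d/n) ∑ x_j x_jᵀ / ⟨x_j, P x_j⟩`. Its inverse is the improved quadratic form
replacing `P`; the rows of `X` are in radial isotropic position for `P` when it equals `P⁻¹`. -/
noncomputable def nextInv {d n : ℕ} (X : Matrix (Fin n) (Fin d) ℝ) (P : Matrix (Fin d) (Fin d) ℝ) :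
    Matrix (Fin d) (Fin d) ℝ :=
  ((d : ℝ) / n) • (Xᵀ * diagonal (fun j => (quad X P j)⁻¹) * X)

lemma quad_eq {d n : ℕ} (X : Matrix (Fin n) (Fin d) ℝ) (P : Matrix (Fin d) (Fin d) ℝ) (j : Fin n) :
    quad X P j = X j ⬝ᵥ (P *ᵥ X j) := by
  rw [quad, Matrix.mul_assoc, mul_apply]
  simp [dotProduct, mulVec, mul_apply]

lemma quad_pos {d n : ℕ} {X : Matrix (Fin n) (Fin d) ℝ} {P : Matrix (Fin d) (Fin d) ℝ}
    (hP : P.PosDef) {j : Fin n} (hj : X j ≠ 0) : 0 < quad X P j := by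
  rw [quad_eq]
  simpa using hP.dotProduct_mulVec_pos hj

/-- Hadamard's inequality multiplied over a family `σ` of `d`-tuples of rows which covers every row
`d` times. It bounds `det P ^ n / ∏ ⟨x_j, P x_j⟩ ^ d` when these tuples are linearly independent. -/
lemma det_pow_le {d n : ℕ} {X : Matrix (Fin n) (Fin d) ℝ} (σ : Fin n → Fin d → Fin n)
    (hσ : ∀ f : Fin n → ℝ, ∏ i, ∏ k, f (σ i k) = ∏ j, f j ^ d) (hX : ∀ j, X j ≠ 0)
    {P : Matrix (Fin d) (Fin d) ℝ} (hP : P.PosDef) :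
    (∏ i, (X.submatrix (σ i) id).det ^ 2) * P.det ^ n ≤ ∏ j, quad X P j ^ d := by
  rw [← hσ]
  have h1 : (∏ i, (X.submatrix (σ i) id).det ^ 2) * P.det ^ n =
      ∏ i, (X.submatrix (σ i) id * P * (X.submatrix (σ i) id)ᵀ).det := by
    simp only [det_mul, det_transpose, Finset.prod_mul_distrib, Finset.prod_const, Finset.card_univ,
      Fintype.card_fin, Finset.prod_pow]
    ring
  rw [h1]
  have hps : ∀ i, (X.submatrix (σ i) id * P * (X.submatrix (σ i) id)ᵀ).PosSemidef := fun i => by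
    have := hP.posSemidef.mul_mul_conjTranspose_same (X.submatrix (σ i) id)
    rwa [conjTranspose_eq_transpose_of_trivial] at this
  have hdiag : ∀ i k, (X.submatrix (σ i) id * P * (X.submatrix (σ i) id)ᵀ) k k
      = quad X P (σ i k) := fun i k => by
    simp [quad, mul_apply]
  refine Finset.prod_le_prod (fun i _ => (hps i).det_nonneg) fun i _ => ?_
  refine (det_le_prod_diag (hps i) fun k => ?_).trans_eq ?_
  · rw [hdiag]; exact quad_pos hP (hX _)
  · simp only [hdiag]

lemma nextInv_posDef {d n : ℕ} {X : Matrix (Fin n) (Fin d) ℝ} (hd : 0 < d) (hn : 0 < n)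
    (hX : ∀ j, X j ≠ 0) (hinj : Function.Injective X.mulVec)
    {P : Matrix (Fin d) (Fin d) ℝ} (hP : P.PosDef) : (nextInv X P).PosDef := by
  have hD : (diagonal (fun j => (quad X P j)⁻¹)).PosDef :=
    PosDef.diagonal fun j => inv_pos.2 (quad_pos hP (hX j))
  have := hD.conjTranspose_mul_mul_same hinj
  rw [conjTranspose_eq_transpose_of_trivial] at this
  exact this.smul (by positivity)

/-- The ratios of the two values of the quadratic forms at `x_j` have sum `n`, being `n/d` times the
trace of `N⁻¹ N` with `N = nextInv X P`; so their product is at most `1`. -/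
lemma prod_quad_le {d n : ℕ} {X : Matrix (Fin n) (Fin d) ℝ} (hd : 0 < d) (hn : 0 < n)
    (hX : ∀ j, X j ≠ 0) (hinj : Function.Injective X.mulVec)
    {P : Matrix (Fin d) (Fin d) ℝ} (hP : P.PosDef) :
    ∏ j, quad X (nextInv X P)⁻¹ j ≤ ∏ j, quad X P j := by
  have hN := nextInv_posDef hd hn hX hinj hP
  set Q := (nextInv X P)⁻¹ with hQ
  have hQp : Q.PosDef := hN.inv
  have hpos : ∀ j, 0 < quad X P j := fun j => quad_pos hP (hX j)
  have htr : ((d : ℝ) / n) * ∑ j, quad X Q j / quad X P j = d := by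
    have h1 : (Q * nextInv X P).trace = d := by
      rw [hQ, nonsing_inv_mul _ ((isUnit_iff_isUnit_det _).1 hN.isUnit)]; simp
    have h2 : (Q * (Xᵀ * diagonal (fun j => (quad X P j)⁻¹) * X)).trace
        = ∑ j, quad X Q j / quad X P j := by
      rw [← Matrix.mul_assoc, trace_mul_comm, ← Matrix.mul_assoc, ← Matrix.mul_assoc]
      simp only [trace, Matrix.diag_apply, mul_diagonal]
      rfl
    rw [nextInv, mul_smul_comm, trace_smul, smul_eq_mul, h2] at h1
    exact h1
  have hle := prod_le_one_of_sum_eq_card (fun j => quad X Q j / quad X P j)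
    (fun j => (div_pos (quad_pos hQp (hX j)) (hpos j)).le) (by
      have : (0:ℝ) < d := by exact_mod_cast hd
      have : (0:ℝ) < n := by exact_mod_cast hn
      field_simp at htr
      simpa using htr)
  rw [Finset.prod_div_distrib, div_le_one (Finset.prod_pos fun j _ => hpos j)] at hle
  exact hle

lemma exists_near_opt {d n : ℕ} {X : Matrix (Fin n) (Fin d) ℝ} (hd : 0 < d) (hn : 0 < n)
    (σ : Fin n → Fin d → Fin n)
    (hσ : ∀ f : Fin n → ℝ, ∏ i, ∏ k, f (σ i k) = ∏ j, f j ^ d) (hX : ∀ j, X j ≠ 0)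
    (hdet : ∀ i, (X.submatrix (σ i) id).det ≠ 0) {δ : ℝ} (hδ : 0 < δ) (hδ1 : δ < 1) :
    ∃ P : Matrix (Fin d) (Fin d) ℝ, P.PosDef ∧ 1 - δ ≤ P.det * (nextInv X P).det := by
  have hinj : Function.Injective X.mulVec := by
    intro a b hab
    have h1 : (X.submatrix (σ ⟨0, hn⟩) id) *ᵥ a = (X.submatrix (σ ⟨0, hn⟩) id) *ᵥ b := by
      ext k; exact congrFun hab (σ ⟨0, hn⟩ k)
    exact mulVec_injective_of_isUnit
      ((isUnit_iff_isUnit_det _).2 (isUnit_iff_ne_zero.2 (hdet ⟨0, hn⟩))) h1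
  let F : Matrix (Fin d) (Fin d) ℝ → ℝ := fun P => P.det ^ n / ∏ j, quad X P j ^ d
  have hden : ∀ P : Matrix (Fin d) (Fin d) ℝ, P.PosDef → 0 < ∏ j, quad X P j ^ d :=
    fun P hP => Finset.prod_pos fun j _ => pow_pos (quad_pos hP (hX j)) _
  have hFpos : ∀ P : Matrix (Fin d) (Fin d) ℝ, P.PosDef → 0 < F P :=
    fun P hP => div_pos (pow_pos hP.det_pos _) (hden P hP)
  set S := Set.image F {P | P.PosDef} with hS
  have hC : 0 < ∏ i, (X.submatrix (σ i) id).det ^ 2 :=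
    Finset.prod_pos fun i _ => by have := hdet i; positivity
  have hbdd : BddAbove S := by
    refine ⟨(∏ i, (X.submatrix (σ i) id).det ^ 2)⁻¹, ?_⟩
    rintro _ ⟨P, hP, rfl⟩
    have := det_pow_le σ hσ hX hP
    rw [div_le_iff₀ (hden P hP), inv_mul_eq_div, le_div_iff₀ hC]
    linarith
  have hne : S.Nonempty := ⟨_, 1, PosDef.one, rfl⟩
  have hsup : 0 < sSup S :=
    (hFpos 1 PosDef.one).trans_le (le_csSup hbdd ⟨1, PosDef.one, rfl⟩)
  obtain ⟨_, ⟨P, hP, rfl⟩, hlt⟩ := exists_lt_of_lt_csSup hne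
    (show (1 - δ) * sSup S < sSup S by nlinarith)
  refine ⟨P, hP, ?_⟩
  have hP : P.PosDef := hP
  have hN := nextInv_posDef hd hn hX hinj hP
  have hle : F (nextInv X P)⁻¹ ≤ sSup S := le_csSup hbdd ⟨_, hN.inv, rfl⟩
  set t := P.det * (nextInv X P).det with ht
  have ht0 : 0 < t := mul_pos hP.det_pos hN.det_pos
  -- A step `P ↦ (nextInv X P)⁻¹` multiplies `F` by at least `t⁻ⁿ`.
  have hstep : F P ≤ t ^ n * F (nextInv X P)⁻¹ := by
    have h1 : t ^ n * (nextInv X P)⁻¹.det ^ n = P.det ^ n := by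
      rw [det_nonsing_inv, Ring.inverse_eq_inv', ← mul_pow, ht, mul_assoc,
        mul_inv_cancel₀ hN.det_pos.ne', mul_one]
    simp only [F]
    rw [← mul_div_assoc, h1]
    have := hden _ hN.inv
    have hp := hP.det_pos
    refine div_le_div_of_nonneg_left (pow_pos hp n).le this ?_
    rw [Finset.prod_pow, Finset.prod_pow]
    exact pow_le_pow_left₀ (Finset.prod_nonneg fun j _ => (quad_pos hN.inv (hX j)).le)
      (prod_quad_le hd hn hX hinj hP) d
  have h2 : (1 - δ) < t ^ n := by
    by_contra hcon
    have : t ^ n * F (nextInv X P)⁻¹ ≤ (1 - δ) * sSup S :=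
      mul_le_mul (not_lt.1 hcon) hle (hFpos _ hN.inv).le (by linarith)
    linarith
  by_contra hcon
  push Not at hcon
  have : t ^ n ≤ t := pow_le_of_le_one ht0.le (by linarith) hn.ne'
  linarith

/-! ### The distance estimate -/

lemma exists_threshold {d : ℕ} {l : Fin d → ℝ} (hl : Antitone l) (L : ℝ) :
    ∃ k : ℕ, ∀ i : Fin d, ((i : ℕ) < k → L ≤ l i) ∧ (k ≤ (i : ℕ) → l i ≤ L) := by
  classical
  by_cases h : ∃ k : ℕ, ∃ hk : k < d, l ⟨k, hk⟩ < L
  · refine ⟨Nat.find h, fun i => ⟨fun hi => ?_, fun hi => ?_⟩⟩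
    · by_contra hcon
      exact Nat.find_min h hi ⟨i.2, not_le.1 hcon⟩
    · obtain ⟨hk, hlt⟩ := Nat.find_spec h
      exact (hl (show (⟨Nat.find h, hk⟩ : Fin d) ≤ i from hi)).trans hlt.le
  · push Not at h
    exact ⟨d, fun i => ⟨fun _ => h i i.2, fun hi => absurd i.2 (not_lt.2 hi)⟩⟩

/-- A unit vector `y` is moved to the unit vector with coordinates `y i * √(l i / g)`. Since `l` is
antitone, the differences of squared coordinates are nonnegative below some index `k` and nonpositive
from `k` on; as they sum to `0`, the weights `-i` may be replaced by `k - 1/2 - i`, which has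
absolute value at least `1/2` and the sign of the difference. -/
lemma row_bound {d : ℕ} {l y : Fin d → ℝ} (hl : Antitone l) (hpos : ∀ i, 0 < l i)
    (hy : ∑ i, y i ^ 2 = 1) {g : ℝ} (hg : g = ∑ i, l i * y i ^ 2) (hg0 : 0 < g) :
    ∑ i, (y i * √(l i / g) - y i) ^ 2 ≤
      2 * ∑ i : Fin d, (i : ℝ) * (y i ^ 2 - (y i * √(l i / g)) ^ 2) := by
  have hz : ∀ i, (y i * √(l i / g)) ^ 2 = y i ^ 2 * (l i / g) := fun i => by
    rw [mul_pow, Real.sq_sqrt (div_pos (hpos i) hg0).le]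
  have hsum : ∑ i, ((y i * √(l i / g)) ^ 2 - y i ^ 2) = 0 := by
    rw [Finset.sum_sub_distrib, hy]
    simp only [hz]
    have : ∑ i, y i ^ 2 * (l i / g) = (∑ i, l i * y i ^ 2) / g := by
      rw [Finset.sum_div]; exact Finset.sum_congr rfl fun i _ => by ring
    rw [this, ← hg, div_self hg0.ne', sub_self]
  obtain ⟨k, hk⟩ := exists_threshold hl g
  have hterm : ∀ i : Fin d, (y i * √(l i / g) - y i) ^ 2 ≤
      2 * ((k : ℝ) - 1 / 2 - i) * ((y i * √(l i / g)) ^ 2 - y i ^ 2) := by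
    intro i
    set t := √(l i / g) with ht
    have ht0 : 0 ≤ t := Real.sqrt_nonneg _
    have hy2 := sq_nonneg (y i)
    rcases lt_or_ge (i : ℕ) k with hi | hi
    · have h1 : 1 ≤ t := Real.one_le_sqrt.2 ((one_le_div hg0).2 ((hk i).1 hi))
      have h2 : (i : ℝ) + 1 ≤ k := by exact_mod_cast hi
      have h3 : 0 ≤ (y i * t) ^ 2 - y i ^ 2 := by
        have := mul_nonneg hy2 (show 0 ≤ t ^ 2 - 1 by nlinarith)
        linarith [mul_pow (y i) t 2]
      nlinarith [mul_nonneg hy2 (sub_nonneg.2 h1),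
        mul_nonneg (show (0 : ℝ) ≤ k - 1 - i by linarith) h3]
    · have h1 : t ≤ 1 := Real.sqrt_le_one.2 ((div_le_one hg0).2 ((hk i).2 hi))
      have h2 : (k : ℝ) ≤ i := by exact_mod_cast hi
      have h3 : 0 ≤ y i ^ 2 - (y i * t) ^ 2 := by
        have := mul_nonneg hy2 (show 0 ≤ 1 - t ^ 2 by nlinarith)
        linarith [mul_pow (y i) t 2]
      nlinarith [mul_nonneg (mul_nonneg hy2 ht0) (sub_nonneg.2 h1),
        mul_nonneg (show (0 : ℝ) ≤ i - k by linarith) h3]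
  calc _ ≤ ∑ i : Fin d, 2 * ((k : ℝ) - 1 / 2 - i) * ((y i * √(l i / g)) ^ 2 - y i ^ 2) :=
        Finset.sum_le_sum fun i _ => hterm i
    _ = ∑ i : Fin d, ((2 * k - 1) * ((y i * √(l i / g)) ^ 2 - y i ^ 2) +
          2 * ((i : ℝ) * (y i ^ 2 - (y i * √(l i / g)) ^ 2))) :=
        Finset.sum_congr rfl fun i _ => by ring
    _ = _ := by
        rw [Finset.sum_add_distrib, ← Finset.mul_sum, ← Finset.mul_sum, hsum]; ring

lemma sum_sq_mul {d n : ℕ} (A : Matrix (Fin n) (Fin d) ℝ) {B : Matrix (Fin d) (Fin d) ℝ}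
    (hB : B * Bᵀ = 1) (j : Fin n) : ∑ i, (A * B) j i ^ 2 = ∑ i, A j i ^ 2 := by
  have h : ∀ C : Matrix (Fin n) (Fin d) ℝ, ∑ i, C j i ^ 2 = (C * Cᵀ) j j := fun C => by
    simp [mul_apply, sq]
  rw [h, h, transpose_mul, Matrix.mul_assoc, ← Matrix.mul_assoc B, hB, Matrix.one_mul]

/-- The unit vectors `u_j = √P x_j / ‖√P x_j‖` (rows of `U`), with the distance estimate expressed in
an orthonormal eigenbasis of `P` (columns of `B`). -/
lemma exists_scaled {d n : ℕ} {X : Matrix (Fin n) (Fin d) ℝ} (hX : ∀ j, ∑ i, X j i ^ 2 = 1)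
    {P : Matrix (Fin d) (Fin d) ℝ} (hP : P.PosDef) :
    ∃ (U : Matrix (Fin n) (Fin d) ℝ) (B : Matrix (Fin d) (Fin d) ℝ),
      (∀ j, ∑ i, U j i ^ 2 = 1) ∧ Bᵀ * B = 1 ∧
      (((d : ℝ) / n) • (Uᵀ * U)).det = P.det * (nextInv X P).det ∧
      ∑ j, ∑ i, (U j i - X j i) ^ 2 ≤
        2 * ∑ i : Fin d, (i : ℝ) * ∑ j, ((X * B) j i ^ 2 - (U * B) j i ^ 2) := by
  obtain ⟨B, l, hBB, hl0, hl, hPB⟩ := exists_sorted_diagonalization hP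
  have hBB' : B * Bᵀ = 1 := mul_eq_one_comm.1 hBB
  have hX0 : ∀ j, X j ≠ 0 := fun j h => by have := hX j; simp [h] at this
  have hg0 : ∀ j, 0 < quad X P j := fun j => quad_pos hP (hX0 j)
  set Y := X * B with hY
  have hg : ∀ j, quad X P j = ∑ i, l i * Y j i ^ 2 := fun j => by
    have : X * P * Xᵀ = Y * diagonal l * Yᵀ := by
      rw [hPB, hY, transpose_mul]; simp only [Matrix.mul_assoc]
    rw [quad, this, mul_apply]
    exact Finset.sum_congr rfl fun i _ => by rw [mul_diagonal, transpose_apply]; ring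
  set Z : Matrix (Fin n) (Fin d) ℝ := Matrix.of fun j i => Y j i * √(l i / quad X P j) with hZ
  have hUB : Z * Bᵀ * B = Z := by rw [Matrix.mul_assoc, hBB, Matrix.mul_one]
  have hY1 : ∀ j, ∑ i, Y j i ^ 2 = 1 := fun j => by rw [hY, sum_sq_mul X hBB', hX]
  have hZ1 : ∀ j, ∑ i, Z j i ^ 2 = 1 := fun j => by
    have : ∀ i, Z j i ^ 2 = l i * Y j i ^ 2 / quad X P j := fun i => by
      rw [hZ, of_apply, mul_pow, Real.sq_sqrt (div_pos (hl0 i) (hg0 j)).le]; ring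
    simp only [this]
    rw [← Finset.sum_div, ← hg, div_self (hg0 j).ne']
  refine ⟨Z * Bᵀ, B, fun j => ?_, hBB, ?_, ?_⟩
  · rw [← sum_sq_mul _ hBB', hUB, hZ1]
  · have hZd : Z = diagonal (fun j => √(quad X P j)⁻¹) * Y * diagonal (fun i => √(l i)) := by
      ext j i
      rw [mul_diagonal, diagonal_mul, hZ, of_apply, div_eq_mul_inv, Real.sqrt_mul (hl0 i).le]
      ring
    have hDD : ∀ {m : ℕ} (f : Fin m → ℝ), (∀ i, 0 ≤ f i) →
        diagonal (fun i => √(f i)) * diagonal (fun i => √(f i)) = diagonal f := fun f hf => by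
      rw [diagonal_mul_diagonal]
      congr 1; ext i; exact Real.mul_self_sqrt (hf i)
    have h1 : ((d : ℝ) / n) • ((Z * Bᵀ)ᵀ * (Z * Bᵀ)) =
        B * (diagonal (fun i => √(l i)) * (Bᵀ * nextInv X P * B) *
          diagonal (fun i => √(l i))) * Bᵀ := by
      have h2 : Zᵀ * Z = diagonal (fun i => √(l i)) * (Yᵀ * diagonal (fun j => (quad X P j)⁻¹) * Y)
          * diagonal (fun i => √(l i)) := by
        rw [← hDD (fun j => (quad X P j)⁻¹) fun j => (inv_pos.2 (hg0 j)).le, hZd]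
        simp only [transpose_mul, diagonal_transpose, Matrix.mul_assoc]
      rw [transpose_mul, transpose_transpose]
      have h3 : B * Zᵀ * (Z * Bᵀ) = B * (Zᵀ * Z) * Bᵀ := by simp only [Matrix.mul_assoc]
      rw [h3, h2, nextInv, hY]
      simp only [transpose_mul, Matrix.mul_assoc, mul_smul_comm, smul_mul_assoc]
    have hdetB : B.det * B.det = 1 := by
      have := congrArg det hBB'
      simpa using this
    have hPdet : P.det = (diagonal fun i => √(l i)).det * (diagonal fun i => √(l i)).det := by
      rw [← det_mul, hDD l fun i => (hl0 i).le, hPB, det_mul, det_mul, det_transpose]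
      linear_combination (diagonal l).det * hdetB
    rw [h1, hPdet]
    simp only [det_mul, det_transpose]
    linear_combination (diagonal fun i => √(l i)).det ^ 2 * (nextInv X P).det *
      (B.det * B.det + 1) * hdetB
  · rw [hUB]
    have h1 : ∀ j, ∑ i, ((Z * Bᵀ) j i - X j i) ^ 2 = ∑ i, (Z j i - Y j i) ^ 2 := fun j => by
      have := sum_sq_mul (Z * Bᵀ - X) hBB' j
      rw [Matrix.sub_mul, hUB, ← hY] at this
      simpa using this.symm
    simp only [h1]
    refine (Finset.sum_le_sum fun j _ =>
      row_bound hl hl0 (hY1 j) (hg j) (hg0 j)).trans_eq ?_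
    rw [← Finset.mul_sum, Finset.sum_comm]
    simp only [Finset.mul_sum]
    rfl

/-! ### Perturbation to general position -/

open Filter Topology

lemma eventually_eval_ne_zero {p : Polynomial ℝ} (hp : p ≠ 0) :
    ∀ᶠ t in 𝓝[≠] (0 : ℝ), p.eval t ≠ 0 := by
  have hfin : (↑p.roots.toFinset \ {0} : Set ℝ).Finite := p.roots.toFinset.finite_toSet.sdiff
  have h0 := hfin.isClosed.isOpen_compl.mem_nhds
    (show (0 : ℝ) ∈ (↑p.roots.toFinset \ {0} : Set ℝ)ᶜ by simp)
  filter_upwards [nhdsWithin_le_nhds h0, self_mem_nhdsWithin] with t ht ht0 hroot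
  exact ht ⟨by simp [hp, Polynomial.IsRoot, hroot], ht0⟩

lemma eventually_det_ne_zero {d : ℕ} (A M : Matrix (Fin d) (Fin d) ℝ) (hM : M.det ≠ 0) :
    ∀ᶠ t in 𝓝[≠] (0 : ℝ), (A + t • M).det ≠ 0 := by
  set p : Polynomial ℝ := det ((Polynomial.X : Polynomial ℝ) • M.map Polynomial.C +
    A.map Polynomial.C) with hp
  have hp0 : p ≠ 0 := fun h => hM <| by
    rw [← Polynomial.coeff_det_X_add_C_card M A, ← hp, h, Polynomial.coeff_zero]
  filter_upwards [eventually_eval_ne_zero hp0] with t ht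
  have : p.eval t = (A + t • M).det := by
    rw [hp, ← Polynomial.coe_evalRingHom, RingHom.map_det]
    congr 1
    ext a b
    simp only [RingHom.mapMatrix_apply, map_apply, Matrix.add_apply, Matrix.smul_apply, map_add,
      smul_eq_mul, Polynomial.eval_mul, Polynomial.coe_evalRingHom, Polynomial.eval_X, Polynomial.eval_C]
    ring
  rwa [← this]

/-- A small multiple of the Vandermonde matrix is added to `X`; each determinant is then a nonzero
polynomial in the multiplier. -/
lemma exists_generic_near {d n : ℕ} (σ : Fin n → Fin d → Fin n)
    (hinj : ∀ i, Function.Injective (σ i)) {X : Matrix (Fin n) (Fin d) ℝ}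
    (hX : ∀ j, ∑ i, X j i ^ 2 = 1) {δ : ℝ} (hδ : 0 < δ) :
    ∃ X₂ : Matrix (Fin n) (Fin d) ℝ, (∀ j, ∑ i, X₂ j i ^ 2 = 1) ∧
      (∀ i, (X₂.submatrix (σ i) id).det ≠ 0) ∧ ∀ j i, |X₂ j i - X j i| ≤ δ := by
  let M : Matrix (Fin n) (Fin d) ℝ := Matrix.of fun j i => (j : ℝ) ^ (i : ℕ)
  have hM : ∀ i, (M.submatrix (σ i) id).det ≠ 0 := fun i => by
    have : M.submatrix (σ i) id = vandermonde fun k => ((σ i k : ℕ) : ℝ) := by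
      ext a b; simp [M, vandermonde_apply]
    rw [this, det_vandermonde_ne_zero_iff]
    intro a b hab
    exact hinj i (Fin.ext (Nat.cast_injective hab))
  let Y : ℝ → Matrix (Fin n) (Fin d) ℝ := fun t => X + t • M
  let r : ℝ → Fin n → ℝ := fun t j => √(∑ i, Y t j i ^ 2)
  have hYc : ∀ j i, Continuous fun t => Y t j i := fun j i => by
    simp only [Y, Matrix.add_apply, Matrix.smul_apply]; fun_prop
  have hrc : ∀ j, Continuous fun t => r t j := fun j => by
    have := hYc j; simp only [r]; fun_prop
  have hY0 : Y 0 = X := by simp [Y]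
  have hr0 : ∀ j, r 0 j = 1 := fun j => by simp [r, hY0, hX]
  have e1 : ∀ᶠ t in 𝓝[≠] (0 : ℝ), ∀ i, ((Y t).submatrix (σ i) id).det ≠ 0 :=
    eventually_all.2 fun i => by
      filter_upwards [eventually_det_ne_zero (X.submatrix (σ i) id) _ (hM i)] with t ht
      exact ht
  have e2 : ∀ᶠ t in 𝓝[≠] (0 : ℝ), ∀ j, 0 < r t j :=
    eventually_all.2 fun j => nhdsWithin_le_nhds <|
      (hrc j).continuousAt.eventually_const_lt (by simp [hr0])
  have e3 : ∀ᶠ t in 𝓝[≠] (0 : ℝ), ∀ j i, |(r t j)⁻¹ * Y t j i - X j i| ≤ δ :=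
    eventually_all.2 fun j => eventually_all.2 fun i => nhdsWithin_le_nhds <| by
      have hc : ContinuousAt (fun t => |(r t j)⁻¹ * Y t j i - X j i|) 0 :=
        ((((hrc j).continuousAt.inv₀ (by rw [hr0]; exact one_ne_zero)).mul
          (hYc j i).continuousAt).sub continuousAt_const).abs
      refine (hc.eventually_lt_const ?_).mono fun t ht => le_of_lt ht
      simpa [hr0, hY0] using hδ
  obtain ⟨t, h1, h2, h3⟩ := (e1.and (e2.and e3)).exists
  refine ⟨Matrix.of fun j i => (r t j)⁻¹ * Y t j i, fun j => ?_, fun i => ?_, h3⟩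
  · simp only [of_apply, mul_pow]
    rw [← Finset.mul_sum]
    have h4 : ∑ i, Y t j i ^ 2 = r t j ^ 2 :=
      (Real.sq_sqrt (Finset.sum_nonneg fun i _ => sq_nonneg _)).symm
    have := (h2 j).ne'
    rw [h4]; field_simp
  · have : (Matrix.of fun j i => (r t j)⁻¹ * Y t j i).submatrix (σ i) id =
        Matrix.of fun a b => (r t (σ i a))⁻¹ * ((Y t).submatrix (σ i) id) a b := rfl
    rw [this, det_mul_column]
    exact mul_ne_zero (Finset.prod_ne_zero_iff.2 fun k _ => inv_ne_zero (h2 _).ne') (h1 i)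

/-- The cyclic intervals of length `d` in `Fin n` cover every index `d` times. -/
lemma exists_cyclic {d n : ℕ} (hn : 0 < n) (hdn : d ≤ n) :
    ∃ σ : Fin n → Fin d → Fin n, (∀ i, Function.Injective (σ i)) ∧
      ∀ f : Fin n → ℝ, ∏ i, ∏ k, f (σ i k) = ∏ j, f j ^ d := by
  have : NeZero n := ⟨hn.ne'⟩
  refine ⟨fun i k => i + Fin.castLE hdn k, fun i a b hab => ?_, fun f => ?_⟩
  · exact Fin.castLE_injective hdn (add_left_cancel hab)
  · rw [Finset.prod_comm]
    have : ∀ k : Fin d, ∏ i, f (i + Fin.castLE hdn k) = ∏ i, f i := fun k =>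
      Equiv.prod_comp (Equiv.addRight (Fin.castLE hdn k)) f
    simp [this, Finset.prod_pow]

/-! ### Passage to the limit -/

lemma abs_le_one_of_sum_sq {m : ℕ} {f : Fin m → ℝ} (h : ∑ i, f i ^ 2 = 1) (i : Fin m) :
    f i ∈ Set.Icc (-1 : ℝ) 1 := by
  have : f i ^ 2 ≤ 1 := h ▸ Finset.single_le_sum (f := fun i => f i ^ 2)
    (fun i _ => sq_nonneg _) (Finset.mem_univ i)
  exact abs_le.1 ((sq_le_one_iff_abs_le_one _).1 this)

lemma isCompact_box (m k : ℕ) :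
    IsCompact {A : Matrix (Fin m) (Fin k) ℝ | ∀ j i, A j i ∈ Set.Icc (-1 : ℝ) 1} := by
  have : IsCompact {A : Fin m → Fin k → ℝ | ∀ j i, A j i ∈ Set.Icc (-1 : ℝ) 1} := by
    have h : IsCompact (Set.pi Set.univ fun _ : Fin m => Set.pi Set.univ fun _ : Fin k =>
        Set.Icc (-1 : ℝ) 1) :=
      isCompact_univ_pi fun _ => isCompact_univ_pi fun _ => isCompact_Icc
    convert h using 1
    ext A
    simp only [Set.mem_ofPred_eq, Set.mem_pi, Set.mem_univ, true_imp_iff]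
  exact this

/-- Any `n ≥ d` unit vectors (rows of `X`) are close to unit vectors forming a tight frame (rows of
`U`), in the sense of the estimate inherited from `exists_scaled`. -/
lemma exists_isotropic {d n : ℕ} (hd : 0 < d) (hdn : d ≤ n) {X : Matrix (Fin n) (Fin d) ℝ}
    (hX : ∀ j, ∑ i, X j i ^ 2 = 1) :
    ∃ (U : Matrix (Fin n) (Fin d) ℝ) (B : Matrix (Fin d) (Fin d) ℝ),
      (∀ j, ∑ i, U j i ^ 2 = 1) ∧ Bᵀ * B = 1 ∧ ((d : ℝ) / n) • (Uᵀ * U) = 1 ∧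
      ∑ j, ∑ i, (U j i - X j i) ^ 2 ≤
        2 * ∑ i : Fin d, (i : ℝ) * ∑ j, ((X * B) j i ^ 2 - (U * B) j i ^ 2) := by
  have hn : 0 < n := hd.trans_le hdn
  obtain ⟨σ, hinj, hσ⟩ := exists_cyclic hn hdn
  let K : Set (Matrix (Fin n) (Fin d) ℝ × Matrix (Fin n) (Fin d) ℝ × Matrix (Fin d) (Fin d) ℝ) :=
    {A | ∀ j i, A j i ∈ Set.Icc (-1 : ℝ) 1} ×ˢ
      ({A | ∀ j i, A j i ∈ Set.Icc (-1 : ℝ) 1} ×ˢ {A | ∀ j i, A j i ∈ Set.Icc (-1 : ℝ) 1})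
  let C : Set (Matrix (Fin n) (Fin d) ℝ × Matrix (Fin n) (Fin d) ℝ × Matrix (Fin d) (Fin d) ℝ) :=
    {q | (∀ j, ∑ i, q.2.1 j i ^ 2 = 1) ∧ q.2.2ᵀ * q.2.2 = 1 ∧
      ∑ j, ∑ i, (q.2.1 j i - q.1 j i) ^ 2 ≤
        2 * ∑ i : Fin d, (i : ℝ) * ∑ j, ((q.1 * q.2.2) j i ^ 2 - (q.2.1 * q.2.2) j i ^ 2)}
  have hK : IsCompact K := (isCompact_box _ _).prod ((isCompact_box _ _).prod (isCompact_box _ _))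
  let T := Matrix (Fin n) (Fin d) ℝ × Matrix (Fin n) (Fin d) ℝ × Matrix (Fin d) (Fin d) ℝ
  have hC : IsClosed C := by
    have c1 : IsClosed {q : T | ∀ j, ∑ i, q.2.1 j i ^ 2 = 1} := by
      rw [Set.ofPred_forall]
      exact isClosed_iInter fun j => isClosed_eq
        (continuous_finsetSum _ fun i _ => (continuous_snd.fst.matrix_elem j i).pow 2)
        continuous_const
    have c2 : IsClosed {q : T | q.2.2ᵀ * q.2.2 = 1} :=
      isClosed_eq (continuous_snd.snd.matrix_transpose.matrix_mul continuous_snd.snd)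
        continuous_const
    have h1 : Continuous fun q : T => q.1 * q.2.2 :=
      continuous_fst.matrix_mul continuous_snd.snd
    have h2 : Continuous fun q : T => q.2.1 * q.2.2 :=
      continuous_snd.fst.matrix_mul continuous_snd.snd
    have c3 : IsClosed {q : T | ∑ j, ∑ i, (q.2.1 j i - q.1 j i) ^ 2 ≤
        2 * ∑ i : Fin d, (i : ℝ) *
          ∑ j, ((q.1 * q.2.2) j i ^ 2 - (q.2.1 * q.2.2) j i ^ 2)} :=
      isClosed_le
        (continuous_finsetSum _ fun j _ => continuous_finsetSum _ fun i _ =>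
          ((continuous_snd.fst.matrix_elem j i).sub (continuous_fst.matrix_elem j i)).pow 2)
        (continuous_const.mul (continuous_finsetSum _ fun i _ => continuous_const.mul
          (continuous_finsetSum _ fun j _ =>
            ((h1.matrix_elem j i).pow 2).sub ((h2.matrix_elem j i).pow 2))))
    exact c1.inter (c2.inter c3)
  have hstep : ∀ m : ℕ, ∃ q ∈ K ∩ C, (∀ j i, |q.1 j i - X j i| ≤ 1 / ((m : ℝ) + 2)) ∧
      1 - 1 / ((m : ℝ) + 2) ≤ (((d : ℝ) / n) • (q.2.1ᵀ * q.2.1)).det := by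
    intro m
    have hδ : 0 < 1 / ((m : ℝ) + 2) := by positivity
    have hδ1 : 1 / ((m : ℝ) + 2) < 1 := by
      rw [div_lt_one (by positivity)]; linarith [(Nat.cast_nonneg m : (0 : ℝ) ≤ m)]
    obtain ⟨X₂, hX₂, hdet, hnear⟩ := exists_generic_near σ hinj hX hδ
    have hX0 : ∀ j, X₂ j ≠ 0 := fun j h => by have := hX₂ j; simp [h] at this
    obtain ⟨P, hP, hPdet⟩ := exists_near_opt hd hn σ hσ hX0 hdet hδ hδ1
    obtain ⟨U, B, hU, hB, hUdet, hineq⟩ := exists_scaled hX₂ hP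
    have hBrow : ∀ j, ∑ i, B j i ^ 2 = 1 := fun j => by
      have hB' : B * Bᵀ = 1 := mul_eq_one_comm.1 hB
      have := congrFun (congrFun hB' j) j
      simpa [mul_apply, sq] using this
    exact ⟨(X₂, U, B), ⟨⟨fun j => abs_le_one_of_sum_sq (hX₂ j), fun j =>
      abs_le_one_of_sum_sq (hU j), fun j => abs_le_one_of_sum_sq (hBrow j)⟩, hU, hB, hineq⟩,
      hnear, hUdet ▸ hPdet⟩
  have hfc : ∀ m k : ℕ, FirstCountableTopology (Matrix (Fin m) (Fin k) ℝ) := fun m k =>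
    inferInstanceAs (FirstCountableTopology (Fin m → Fin k → ℝ))
  choose q hq hnear hdet using hstep
  obtain ⟨⟨X₁, U, B⟩, ⟨-, hU, hB, hineq⟩, φ, hφ, hlim⟩ := (hK.inter_right hC).tendsto_subseq hq
  have hδlim : Tendsto (fun m => 1 / (((φ m : ℕ) : ℝ) + 2)) atTop (𝓝 0) := by
    have h1 : Tendsto (fun m : ℕ => 1 / ((m : ℝ) + 2)) atTop (𝓝 0) :=
      tendsto_const_nhds.div_atTop
        (tendsto_atTop_add_const_right _ _ tendsto_natCast_atTop_atTop)
    exact h1.comp hφ.tendsto_atTop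
  have hXlim : X₁ = X := by
    ext j i
    have h1 : Tendsto (fun m => (q (φ m)).1 j i) atTop (𝓝 (X₁ j i)) :=
      (Continuous.matrix_elem continuous_fst j i).continuousAt.tendsto.comp hlim
    have h2 : Tendsto (fun m => (q (φ m)).1 j i) atTop (𝓝 (X j i)) := by
      rw [tendsto_iff_dist_tendsto_zero]
      exact squeeze_zero (fun _ => dist_nonneg) (fun m => hnear (φ m) j i) hδlim
    exact tendsto_nhds_unique h1 h2
  subst hXlim
  refine ⟨U, B, hU, hB, ?_, hineq⟩
  have hn' : (0 : ℝ) < n := by exact_mod_cast hn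
  have hps : (((d : ℝ) / n) • (Uᵀ * U)).PosSemidef := by
    have := posSemidef_conjTranspose_mul_self U
    rw [conjTranspose_eq_transpose_of_trivial] at this
    exact this.smul (by positivity)
  refine eq_one_of_trace_of_det hps ?_ ?_
  · have : (Uᵀ * U).trace = n := by
      rw [trace_mul_comm]
      have : ∀ j, (U * Uᵀ) j j = 1 := fun j => by
        rw [← hU j]; simp [mul_apply, sq]
      simp [trace, this]
    rw [trace_smul, this, smul_eq_mul]; field_simp
  · have hc : Continuous fun p : Matrix (Fin n) (Fin d) ℝ × Matrix (Fin n) (Fin d) ℝ ×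
        Matrix (Fin d) (Fin d) ℝ => (((d : ℝ) / n) • (p.2.1ᵀ * p.2.1)).det := by
      refine Continuous.matrix_det ?_
      fun_prop
    have h1 := hc.continuousAt.tendsto.comp hlim
    have h2 := tendsto_const_nhds (x := (1 : ℝ)) |>.sub hδlim
    rw [sub_zero] at h2
    exact le_of_tendsto_of_tendsto' h2 h1 fun m => hdet (φ m)

/-! ### The quantitative bound -/

lemma sq_sub_sqrt_le {a s ε : ℝ} (ha : 0 ≤ a) (hs : 0 < s) (h1 : (1 - ε) * s ≤ a ^ 2)
    (h2 : a ^ 2 ≤ (1 + ε) * s) : (a - √s) ^ 2 ≤ ε ^ 2 * s := by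
  have hr := Real.sqrt_pos.2 hs
  have hrs := Real.sq_sqrt hs.le
  have h3 : (a ^ 2 - s) ^ 2 ≤ (ε * s) ^ 2 := sq_le_sq' (by linarith) (by linarith)
  have h4 : (a - √s) ^ 2 * s ≤ (a ^ 2 - s) ^ 2 := by
    have h5 : (a ^ 2 - s) ^ 2 = (a - √s) ^ 2 * (a + √s) ^ 2 := by
      rw [← mul_pow]; congr 1; linear_combination hrs
    rw [h5]
    refine mul_le_mul_of_nonneg_left ?_ (sq_nonneg _)
    nlinarith [mul_nonneg ha hr.le]
  refine le_of_mul_le_mul_right (a := s) ?_ hs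
  linarith [mul_pow ε s 2, show (ε * s) ^ 2 = ε ^ 2 * s * s by ring]

/-- Matrix form of the theorem, for positive dimension. -/
lemma exists_matrix {d n : ℕ} (hd : 0 < d) {ε : ℝ} (hε0 : 0 < ε) (hε1 : ε < 1)
    {T : Matrix (Fin n) (Fin d) ℝ} (hT : Tᵀ * T = 1)
    (hnorm : ∀ j, (1 - ε) * (d / n) ≤ ∑ i, T j i ^ 2 ∧ ∑ i, T j i ^ 2 ≤ (1 + ε) * (d / n)) :
    ∃ W : Matrix (Fin n) (Fin d) ℝ, Wᵀ * W = 1 ∧ (∀ j, ∑ i, W j i ^ 2 = (d : ℝ) / n) ∧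
      ∑ j, ∑ i, (T j i - W j i) ^ 2 ≤ 20 * ε * (d : ℝ) ^ 2 := by
  have hdn : d ≤ n := by
    have h1 := rank_mul_le_right Tᵀ T
    rw [hT, rank_one, Fintype.card_fin] at h1
    exact h1.trans (rank_le_height T)
  have hn : 0 < n := hd.trans_le hdn
  have hd' : (1 : ℝ) ≤ d := by exact_mod_cast hd
  have hn' : (0 : ℝ) < n := by exact_mod_cast hn
  set s : ℝ := (d : ℝ) / n with hs
  have hs0 : 0 < s := by positivity
  have hns : (n : ℝ) * s = d := by rw [hs]; field_simp
  let a : Fin n → ℝ := fun j => √(∑ i, T j i ^ 2)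
  have ha2 : ∀ j, a j ^ 2 = ∑ i, T j i ^ 2 := fun j =>
    Real.sq_sqrt (Finset.sum_nonneg fun i _ => sq_nonneg _)
  have hlow : 0 < (1 - ε) * s := mul_pos (by linarith) hs0
  have ha0 : ∀ j, 0 < a j := fun j => Real.sqrt_pos.2 (hlow.trans_le (hnorm j).1)
  let X : Matrix (Fin n) (Fin d) ℝ := Matrix.of fun j i => (a j)⁻¹ * T j i
  have hX : ∀ j, ∑ i, X j i ^ 2 = 1 := fun j => by
    simp only [X, of_apply, mul_pow]
    rw [← Finset.mul_sum, ← ha2]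
    have := (ha0 j).ne'
    field_simp
  obtain ⟨U, B, hU, hB, hiso, hineq⟩ := exists_isotropic hd hdn hX
  have hcol : ∀ (A : Matrix (Fin n) (Fin d) ℝ) (i : Fin d), ∑ j, A j i ^ 2 = (Aᵀ * A) i i :=
    fun A i => by simp [mul_apply, sq]
  have hTsum : ∑ j, ∑ i, T j i ^ 2 = d := by
    rw [Finset.sum_comm]; simp [hcol, hT]
  refine ⟨√s • U, ?_, fun j => ?_, ?_⟩
  · rw [transpose_smul, Matrix.smul_mul, Matrix.mul_smul, smul_smul, Real.mul_self_sqrt hs0.le]; exact hiso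
  · simp only [Matrix.smul_apply, smul_eq_mul, mul_pow, Real.sq_sqrt hs0.le]
    rw [← Finset.mul_sum, hU, mul_one]
  simp only [Matrix.smul_apply, smul_eq_mul]
  have hrs := Real.sq_sqrt hs0.le
  -- For `1 / 5 ≤ ε` the bound `‖a - b‖² ≤ 2‖a‖² + 2‖b‖²` suffices.
  rcases le_or_gt (1 / 5) ε with hε | hε
  · have h1 : ∑ j, ∑ i, (T j i - √s * U j i) ^ 2 ≤
        ∑ j, ∑ i, (2 * T j i ^ 2 + 2 * s * U j i ^ 2) :=
      Finset.sum_le_sum fun j _ => Finset.sum_le_sum fun i _ => by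
        have : s * U j i ^ 2 = (√s * U j i) ^ 2 := by rw [mul_pow, hrs]
        nlinarith [sq_nonneg (T j i + √s * U j i)]
    have h2 : ∑ j, ∑ i, (2 * T j i ^ 2 + 2 * s * U j i ^ 2) = 4 * (d : ℝ) := by
      simp only [Finset.sum_add_distrib, ← Finset.mul_sum, hTsum, hU]
      simp only [Finset.sum_const, Finset.card_univ, Fintype.card_fin, nsmul_eq_mul]
      linear_combination 2 * hns
    have h3 : (d : ℝ) ≤ (d : ℝ) ^ 2 := by nlinarith
    have h4 : 1 / 5 * (d : ℝ) ^ 2 ≤ ε * (d : ℝ) ^ 2 :=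
      mul_le_mul_of_nonneg_right hε (sq_nonneg _)
    linarith
  · have h1 : ∑ j, ∑ i, (T j i - √s * U j i) ^ 2 ≤
        ∑ j, (2 * ∑ i, (T j i - √s * X j i) ^ 2 + 2 * s * ∑ i, (U j i - X j i) ^ 2) :=
      Finset.sum_le_sum fun j _ => by
        rw [Finset.mul_sum, Finset.mul_sum, ← Finset.sum_add_distrib]
        refine Finset.sum_le_sum fun i _ => ?_
        have : s * (U j i - X j i) ^ 2 = (√s * U j i - √s * X j i) ^ 2 := by
          rw [← mul_sub, mul_pow, hrs]
        nlinarith [sq_nonneg (T j i - √s * X j i + (√s * U j i - √s * X j i))]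
    have h2 : ∀ j, ∑ i, (T j i - √s * X j i) ^ 2 ≤ ε ^ 2 * s := fun j => by
      have h3 : ∀ i, (T j i - √s * X j i) ^ 2 = (a j - √s) ^ 2 * X j i ^ 2 := fun i => by
        have := (ha0 j).ne'
        simp only [X, of_apply]; field_simp
      simp only [h3]
      rw [← Finset.mul_sum, hX, mul_one]
      exact sq_sub_sqrt_le (ha0 j).le hs0 (ha2 j ▸ (hnorm j).1) (ha2 j ▸ (hnorm j).2)
    have h4 : ∀ i : Fin d, s * ∑ j, ((X * B) j i ^ 2 - (U * B) j i ^ 2) ≤ 5 / 4 * ε := fun i => by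
      have hUi : s * ∑ j, (U * B) j i ^ 2 = 1 := by
        have h5 : s • ((U * B)ᵀ * (U * B)) = 1 := by
          rw [transpose_mul, Matrix.mul_assoc, ← Matrix.mul_assoc Uᵀ, ← mul_smul_comm,
            ← smul_mul_assoc, hiso, Matrix.one_mul, hB]
        have := congrFun (congrFun h5 i) i
        rw [hcol]
        simpa using this
      have hTi : ∑ j, (T * B) j i ^ 2 = 1 := by
        rw [hcol, transpose_mul, Matrix.mul_assoc, ← Matrix.mul_assoc Tᵀ, hT, Matrix.one_mul, hB]
        simp
      have hXT : ∀ j, (1 - ε) * s * (X * B) j i ^ 2 ≤ (T * B) j i ^ 2 := fun j => by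
        have h6 : (T * B) j i = a j * (X * B) j i := by
          simp only [mul_apply, Finset.mul_sum, X, of_apply]
          refine Finset.sum_congr rfl fun k _ => ?_
          have := (ha0 j).ne'
          field_simp
        rw [h6, mul_pow]
        exact mul_le_mul_of_nonneg_right (ha2 j ▸ (hnorm j).1) (sq_nonneg _)
      have h7 : (1 - ε) * s * ∑ j, (X * B) j i ^ 2 ≤ 1 := by
        rw [Finset.mul_sum]
        exact (Finset.sum_le_sum fun j _ => hXT j).trans_eq hTi
      rw [Finset.sum_sub_distrib, mul_sub, hUi]
      set Q := s * ∑ j, (X * B) j i ^ 2 with hQ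
      have h8 : (1 - ε) * Q ≤ 1 := by rw [hQ, ← mul_assoc]; exact h7
      by_contra hcon
      nlinarith
    have h9 : s * ∑ j, ∑ i, (U j i - X j i) ^ 2 ≤ 5 / 2 * ε * (d : ℝ) ^ 2 := by
      calc s * ∑ j, ∑ i, (U j i - X j i) ^ 2
          ≤ s * (2 * ∑ i : Fin d, (i : ℝ) * ∑ j, ((X * B) j i ^ 2 - (U * B) j i ^ 2)) :=
            mul_le_mul_of_nonneg_left hineq hs0.le
        _ = 2 * ∑ i : Fin d, (i : ℝ) * (s * ∑ j, ((X * B) j i ^ 2 - (U * B) j i ^ 2)) := by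
            rw [mul_left_comm, Finset.mul_sum]
            congr 1
            exact Finset.sum_congr rfl fun i _ => by ring
        _ ≤ 2 * ∑ i : Fin d, (d : ℝ) * (5 / 4 * ε) := by
            refine mul_le_mul_of_nonneg_left (Finset.sum_le_sum fun i _ => ?_) zero_le_two
            have hid : (i : ℝ) ≤ d := by exact_mod_cast i.2.le
            exact (mul_le_mul_of_nonneg_left (h4 i) (Nat.cast_nonneg _)).trans
              (mul_le_mul_of_nonneg_right hid (by positivity))
        _ = 5 / 2 * ε * (d : ℝ) ^ 2 := by
            simp only [Finset.sum_const, Finset.card_univ, Fintype.card_fin, nsmul_eq_mul]; ring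
    have h10 : ∑ j, ∑ i, (T j i - √s * X j i) ^ 2 ≤ ε ^ 2 * d := by
      refine (Finset.sum_le_sum fun j _ => h2 j).trans_eq ?_
      simp only [Finset.sum_const, Finset.card_univ, Fintype.card_fin, nsmul_eq_mul]
      linear_combination ε ^ 2 * hns
    rw [Finset.sum_add_distrib, ← Finset.mul_sum, ← Finset.mul_sum] at h1
    have h11 : ε ^ 2 * d ≤ ε * (d : ℝ) ^ 2 := by
      have : ε * d ≤ (d : ℝ) ^ 2 := by nlinarith
      nlinarith
    nlinarith [mul_pos hε0 (show (0 : ℝ) < (d : ℝ) ^ 2 by positivity)]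

end Paulsen

/-- Hamilton–Moitra, improved solution of the Paulsen problem: every `ε`-nearly equal norm
Parseval frame of `n` vectors for `ℝ^d` admits an equal norm Parseval frame within squared
distance `20 ε d²`. -/
theorem hamilton_moitra
    (d n : ℕ) (ε : ℝ) (hε0 : 0 < ε) (hε1 : ε < 1)
    (τ : Fin n → EuclideanSpace ℝ (Fin d))
    (hParseval : ∀ h : EuclideanSpace ℝ (Fin d), ∑ j, ⟪τ j, h⟫_ℝ • τ j = h)
    (hnorm : ∀ j, (1 - ε) * (d / n) ≤ ‖τ j‖ ^ 2 ∧ ‖τ j‖ ^ 2 ≤ (1 + ε) * (d / n)) :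
    ∃ ω : Fin n → EuclideanSpace ℝ (Fin d),
      (∀ h : EuclideanSpace ℝ (Fin d), ∑ j, ⟪ω j, h⟫_ℝ • ω j = h) ∧
      (∀ j, ‖ω j‖ ^ 2 = (d : ℝ) / n) ∧
      ∑ j, ‖τ j - ω j‖ ^ 2 ≤ 20 * ε * (d : ℝ) ^ 2 := by
  rcases Nat.eq_zero_or_pos d with rfl | hd
  · exact ⟨τ, hParseval, fun j => by simp [Subsingleton.elim (τ j) 0], by simp⟩
  let T : Matrix (Fin n) (Fin d) ℝ := Matrix.of fun j i => τ j i
  have hT : T.transpose * T = 1 := by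
    ext a b
    have := congrArg (fun v : EuclideanSpace ℝ (Fin d) => v a)
      (hParseval (EuclideanSpace.single b 1))
    simp only [EuclideanSpace.inner_single_right] at this
    simpa [T, Matrix.mul_apply, Matrix.one_apply, mul_comm] using this
  obtain ⟨W, hW, hWn, hdist⟩ := Paulsen.exists_matrix hd hε0 hε1 hT fun j => by
    have := hnorm j
    rw [EuclideanSpace.real_norm_sq_eq] at this
    exact this
  refine ⟨fun j => WithLp.toLp 2 (W j), fun h => ?_, fun j => ?_, ?_⟩
  · ext a
    have : (W.transpose * W).mulVec h.ofLp a = h a := by rw [hW, Matrix.one_mulVec]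
    rw [← Matrix.mulVec_mulVec] at this
    rw [← this]
    simp [Matrix.mulVec, dotProduct, PiLp.inner_apply, mul_comm]
  · rw [EuclideanSpace.real_norm_sq_eq]; exact hWn j
  · simp only [EuclideanSpace.real_norm_sq_eq]
    exact hdist
end

section
/- (Dilation of Schauder frames, Parseval case.) Let X be a finite-dimensional Banach space and let ({f_j}_{j=1}^n, {τ_j}_{j=1}^n) be a Schauder frame (Parseval approximate Schauder frame) for X, i.e., f_j ∈ X*, τ_j ∈ X and x = ∑_{j=1}^n f_j(x)·τ_j for all x ∈ X. Then there exist a Banach space Y, a linear isometric embedding i : X → Y, a bounded linear projection P : Y → Y (P² = P) with range i(X), functionals g_j ∈ Y* and vectors ω_j ∈ Y (1 ≤ j ≤ n) such that: g_j(ω_k) = δ_{jk} for all 1 ≤ j, k ≤ n, f_j(x) = g_j(i(x)) for all x ∈ X and all j, and i(τ_j) = P(ω_j) for all j. -/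
/-!
Let `T : 𝕜ⁿ → X`, `T v = ∑ j, v j • τ j`, be the synthesis operator and let `Y = X × ker T`, with
the sup norm, `i x = (x, 0)` and `P (x, v) = (x, 0)`. Put `g j (x, v) = f j x + v j` and
`ω k = (τ k, e k - (f j (τ k))_j)`. Both terms of the second coordinate are mapped by `T` to `τ k`
(the latter by the Parseval identity), so `ω k` does lie in `Y`, and
`g j (ω k) = f j (τ k) + (δ_{jk} - f j (τ k)) = δ_{jk}`.
The full product `X × 𝕜ⁿ` would satisfy the same identities; passing to `ker T` makes
`dim Y = n`, so that the `ω k` form a basis of `Y`.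
-/

/-- Dilation of Schauder frames (Parseval case): a Schauder frame `({f_j}, {τ_j})` of a
finite-dimensional Banach space `X` dilates to an approximate Riesz basis
(`g_j (ω_k) = δ_{jk}`) of a Banach space `Y` containing `X` isometrically, via a bounded
linear projection `P : Y → Y` onto (the image of) `X`. -/
theorem schauder_frame_dilation
    (𝕜 : Type) [RCLike 𝕜] (X : Type) [NormedAddCommGroup X] [NormedSpace 𝕜 X]
    [FiniteDimensional 𝕜 X] {n : ℕ}
    (f : Fin n → (X →L[𝕜] 𝕜)) (τ : Fin n → X)
    (hParseval : ∀ x : X, ∑ j, f j x • τ j = x) :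
    ∃ (Y : Type) (_ : NormedAddCommGroup Y) (_ : NormedSpace 𝕜 Y) (_ : CompleteSpace Y)
      (i : X →ₗᵢ[𝕜] Y) (P : Y →L[𝕜] Y) (g : Fin n → (Y →L[𝕜] 𝕜)) (ω : Fin n → Y),
      (∀ y : Y, P (P y) = P y) ∧
      LinearMap.range (P : Y →ₗ[𝕜] Y) = LinearMap.range i.toLinearMap ∧
      (∀ j k, g j (ω k) = if j = k then 1 else 0) ∧
      (∀ j, ∀ x : X, f j x = g j (i x)) ∧
      (∀ j, i (τ j) = P (ω j)) := by
  let T : (Fin n → 𝕜) →ₗ[𝕜] X := Fintype.linearCombination 𝕜 τ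
  have hT : ∀ k, Pi.single k 1 - (fun j => f j (τ k)) ∈ LinearMap.ker T := by
    intro k
    rw [LinearMap.mem_ker, map_sub, sub_eq_zero, Fintype.linearCombination_apply_single,
      Fintype.linearCombination_apply, hParseval, one_smul]
  refine ⟨X × LinearMap.ker T, inferInstance, inferInstance,
    FiniteDimensional.complete 𝕜 _,
    { LinearMap.inl 𝕜 X (LinearMap.ker T) with norm_map' := fun x => by simp },
    (ContinuousLinearMap.inl 𝕜 X (LinearMap.ker T)).comp
      (ContinuousLinearMap.fst 𝕜 X (LinearMap.ker T)),
    fun j => (f j).coprod ((ContinuousLinearMap.proj j).comp (LinearMap.ker T).subtypeL),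
    fun k => (τ k, ⟨_, hT k⟩), ?_, ?_, ?_, ?_, ?_⟩
  · intro y
    rfl
  · ext y
    constructor
    · rintro ⟨z, rfl⟩
      exact ⟨z.1, rfl⟩
    · rintro ⟨x, rfl⟩
      exact ⟨(x, 0), rfl⟩
  · intro j k
    simp [Pi.single_apply]
  · intro j x
    change f j x = f j x + 0
    rw [add_zero]
  · intro j
    rfl
end
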